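/- arXiv:1805.07045 — 2 statements merged into one kernel-verified Lean document; each statement's English description precedes it below -/
import Mathlib

section
/- Let A_{N,1}, …, A_{N,L} be independent families of N×N random matrices that are uniformly bounded in operator norm, each of which is permutation invariant. Fix n ≥ 2 and ℓ_1, …, ℓ_n ∈ {1,…,L} with ℓ_i ≠ ℓ_{i+1} for 1 ≤ i ≤ n−1. For each N and each i ∈ {1,…,n}, let P_{N,i} = D_{N,0,i} X_{k_{N,i}(1)} D_{N,1,i} ⋯ X_{k_{N,i}(d_{N,i})} D_{N,d_{N,i},i} be a monomial in noncommuting indeterminates (X_k)_{k∈K} whose coefficients D_{N,j,i} are deterministic N×N diagonal matrices, and assume there are constants d and C′ such that d_{N,i} ≤ d and ‖D_{N,j,i}‖ ≤ C′ for all N, i, j. Set M_{N,i} = P_{N,i}(A_{N,ℓ_i}) (substitute A_{N,ℓ_i}^{(k)} for X_k) and ε_N = Δ[(M_{N,1} − ΔM_{N,1})(M_{N,2} − ΔM_{N,2}) ⋯ (M_{N,n} − ΔM_{N,n})]. Then for every integer p ≥ 1, E[(1/N) Tr((ε_N ε_N*)^p)] → 0 as N → ∞. -/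
open MeasureTheory ProbabilityTheory Filter Matrix Asymptotics
open scoped BigOperators ENNReal
open scoped Classical

noncomputable section

/-- The diagonal projection `Δ` on `N × N` complex matrices. -/
def dproj {N : ℕ} (A : Matrix (Fin N) (Fin N) ℂ) : Matrix (Fin N) (Fin N) ℂ :=
  Matrix.of fun i j => if i = j then A i j else 0

/-- The operator norm of a matrix acting on `ℓ²({1,…,N})`. -/
def matOpNorm {N : ℕ} (A : Matrix (Fin N) (Fin N) ℂ) : ℝ :=
  ‖Matrix.toEuclideanCLM (𝕜 := ℂ) A‖

/-! ### Multigraph combinatorics -/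

section Graph

variable {V E : Type} (src tgt : E → V)

/-- Adjacency through an edge avoiding a forbidden set `F` of edges
(direction is ignored). -/
def adjOn (F : Set E) (a b : V) : Prop :=
  ∃ e, e ∉ F ∧ ((src e = a ∧ tgt e = b) ∨ (src e = b ∧ tgt e = a))

/-- Reachability in the graph, using only edges outside `F`. -/
def reachOn (F : Set E) : V → V → Prop :=
  Relation.ReflTransGen (adjOn src tgt F)

lemma adjOn_symm (F : Set E) : Symmetric (adjOn src tgt F) := by
  rintro a b ⟨e, he, h⟩
  exact ⟨e, he, h.symm⟩

/-- The setoid of connectivity using edges outside `F`. -/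
def connSetoid (F : Set E) : Setoid V :=
  ⟨reachOn src tgt F,
    ⟨fun _ => Relation.ReflTransGen.refl,
     fun h => (@Relation.ReflTransGen.symmetric _ _ ⟨fun _ _ h => adjOn_symm src tgt F h⟩).symm _ _ h,
     fun h h' => Relation.ReflTransGen.trans h h'⟩⟩

/-- Number of connected components of the graph with the edges in `F` deleted. -/
def ncompAvoiding (F : Set E) : ℕ :=
  Nat.card (Quotient (connSetoid src tgt F))

/-- Number of connected components. -/
def ncomp : ℕ := ncompAvoiding src tgt ∅

/-- The graph is connected. -/
def IsConnectedGraph : Prop := ∀ a b : V, reachOn src tgt ∅ a b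

/-- A cut edge (bridge): deleting it disconnects its endpoints. -/
def IsCutEdge (e : E) : Prop := ¬ reachOn src tgt {e} (src e) (tgt e)

/-- The set of cut edges. -/
def cutEdges : Set E := {e | IsCutEdge src tgt e}

/-- The setoid whose classes are the two-edge connected components
(connected components after deleting all cut edges). -/
def teccSetoid : Setoid V := connSetoid src tgt (cutEdges src tgt)

/-- Degree, in the forest of two-edge connected components, of a
two-edge connected component: the number of cut edges incident to it. -/
def teccDeg (c : Quotient (teccSetoid src tgt)) : ℕ :=
  Nat.card {e : E // IsCutEdge src tgt e ∧
    (Quotient.mk (teccSetoid src tgt) (src e) = c ∨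
      Quotient.mk (teccSetoid src tgt) (tgt e) = c)}

/-- `𝔣(G)`: the number of leaves of the forest of two-edge connected components,
single-vertex trees of the forest counting twice. -/
def frak : ℕ :=
  Nat.card {c : Quotient (teccSetoid src tgt) // teccDeg src tgt c = 1} +
    2 * Nat.card {c : Quotient (teccSetoid src tgt) // teccDeg src tgt c = 0}

end Graph

/-! ### Graph monomials -/

/-- A graph monomial: a finite directed multigraph with two roots and edges
labelled by a family index in `Fin L` and an index in `K`.  (Connectedness is
required separately via `IsConnectedGraph`.) -/
structure GraphMonomial (L : ℕ) (K : Type) where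
  V : Type
  E : Type
  fintV : Fintype V
  fintE : Fintype E
  src : E → V
  tgt : E → V
  vin : V
  vout : V
  labL : E → Fin L
  labK : E → K

attribute [instance] GraphMonomial.fintV GraphMonomial.fintE

namespace GraphMonomial

variable {L : ℕ} {K : Type} (g : GraphMonomial L K)

/-- Evaluation of a graph monomial in a collection of matrices. -/
def eval {N : ℕ} (A : Fin L → K → Matrix (Fin N) (Fin N) ℂ) :
    Matrix (Fin N) (Fin N) ℂ :=
  Matrix.of fun i j => ∑ φ : g.V → Fin N,
    if φ g.vin = j ∧ φ g.vout = i then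
      ∏ e : g.E, A (g.labL e) (g.labK e) (φ (g.tgt e)) (φ (g.src e))
    else 0

/-- The starting vertex of a step `(e, b)`: `e` traversed forward if `b = true`,
backward otherwise. -/
def stepSrc (s : g.E × Bool) : g.V := if s.2 then g.src s.1 else g.tgt s.1

/-- The ending vertex of a step. -/
def stepTgt (s : g.E × Bool) : g.V := if s.2 then g.tgt s.1 else g.src s.1

/-- A simple cycle of the underlying undirected multigraph: a nonempty cyclic
sequence of steps with pairwise distinct edges and pairwise distinct vertices. -/
def IsSimpleCycle (c : List (g.E × Bool)) : Prop :=
  ∃ h : c ≠ [],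
    (∀ i : Fin c.length,
      g.stepTgt (c.get i) =
        g.stepSrc (c.get ⟨((i : ℕ) + 1) % c.length,
          Nat.mod_lt _ (List.length_pos_iff.mpr h)⟩)) ∧
    (c.map Prod.fst).Nodup ∧ (c.map g.stepSrc).Nodup

/-- A cycle is directed when it traverses all its edges consistently with
their orientations (one way or the other). -/
def IsDirectedCycleList (c : List (g.E × Bool)) : Prop :=
  (∀ s ∈ c, s.2 = true) ∨ (∀ s ∈ c, s.2 = false)

/-- `S` is the edge set of some simple cycle. -/
def IsCycleEdgeSet (S : Finset g.E) : Prop :=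
  ∃ c, g.IsSimpleCycle c ∧ (c.map Prod.fst).toFinset = S

/-- The underlying graph is an oriented cactus: it is connected, every simple
cycle is directed, and every edge belongs to exactly one simple cycle. -/
def IsOrientedCactus : Prop :=
  IsConnectedGraph g.src g.tgt ∧
  (∀ c, g.IsSimpleCycle c → g.IsDirectedCycleList c) ∧
  (∀ e : g.E, ∃! S : Finset g.E, g.IsCycleEdgeSet S ∧ e ∈ S)

/-- A cactus-type monomial: an oriented cactus whose input and output coincide. -/
def IsCactusType : Prop := g.vin = g.vout ∧ g.IsOrientedCactus

/-- A member of `ℱ`: a directed simple path (oriented from the input, at the far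
right, to the output, at the far left) with oriented cacti attached to the
vertices of the path (the root of each cactus being a path vertex). -/
def IsPathCactusType : Prop :=
  IsConnectedGraph g.src g.tgt ∧
  ∃ (d : ℕ) (v : Fin (d + 1) → g.V) (f : Fin d → g.E),
    Function.Injective v ∧ Function.Injective f ∧
    (∀ j : Fin d, g.src (f j) = v j.succ ∧ g.tgt (f j) = v j.castSucc) ∧
    g.vin = v (Fin.last d) ∧ g.vout = v 0 ∧
    (∀ c, g.IsSimpleCycle c → g.IsDirectedCycleList c ∧ ∀ s ∈ c, s.1 ∉ Set.range f) ∧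
    (∀ e : g.E, e ∉ Set.range f →
      ∃! S : Finset g.E, g.IsCycleEdgeSet S ∧ e ∈ S) ∧
    (∀ w : g.V, ∃! j : Fin (d + 1), reachOn g.src g.tgt (Set.range f) w (v j))

end GraphMonomial
/-! ### Random matrices, expectations, test graphs -/

/-- The entries of the random matrix `X` are measurable. -/
def EntriesMeasurable {N : ℕ} {Ω : Type} [MeasurableSpace Ω]
    (X : Ω → Matrix (Fin N) (Fin N) ℂ) : Prop :=
  ∀ i j, Measurable fun ω => X ω i j

/-- The entries of the random matrix `X` are essentially bounded. -/
def EntriesBounded {N : ℕ} {Ω : Type} [MeasurableSpace Ω] (μ : Measure Ω)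
    (X : Ω → Matrix (Fin N) (Fin N) ℂ) : Prop :=
  ∃ C : ℝ, ∀ᵐ ω ∂μ, ∀ i j, ‖X ω i j‖ ≤ C

/-- The σ-algebra generated by the entries of the matrices of a family. -/
def famSigma {N : ℕ} {Ω K : Type} [MeasurableSpace Ω]
    (A : K → Ω → Matrix (Fin N) (Fin N) ℂ) : MeasurableSpace Ω :=
  ⨆ k : K, ⨆ i : Fin N, ⨆ j : Fin N,
    MeasurableSpace.comap (fun ω => A k ω i j) inferInstance

/-- Permutation invariance of a family of `N × N` random matrices. -/
def PermInvariant {N : ℕ} {Ω K : Type} [MeasurableSpace Ω] (μ : Measure Ω)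
    (A : K → Ω → Matrix (Fin N) (Fin N) ℂ) : Prop :=
  ∀ σ : Equiv.Perm (Fin N),
    Measure.map (fun ω => fun (k : K) (i j : Fin N) => A k ω (σ i) (σ j)) μ =
      Measure.map (fun ω => fun (k : K) (i j : Fin N) => A k ω i j) μ

/-- A test graph with matrix-valued edge labels. -/
structure TestGraph (N : ℕ) (Ω : Type) where
  V : Type
  E : Type
  fintV : Fintype V
  fintE : Fintype E
  src : E → V
  tgt : E → V
  lab : E → Ω → Matrix (Fin N) (Fin N) ℂ

attribute [instance] TestGraph.fintV TestGraph.fintE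

namespace TestGraph

variable {N : ℕ} {Ω : Type} [MeasurableSpace Ω]

/-- Number of connected components `c(T)` of a test graph. -/
def ncc (T : TestGraph N Ω) : ℕ := ncomp T.src T.tgt

/-- The (unnormalized) trace observable of a test graph. -/
def tauInner (T : TestGraph N Ω) (ω : Ω) : ℂ :=
  ∑ φ : T.V → Fin N, ∏ e : T.E, T.lab e ω (φ (T.tgt e)) (φ (T.src e))

/-- The (unnormalized) injective trace observable of a test graph. -/
def tau0Inner (T : TestGraph N Ω) (ω : Ω) : ℂ :=
  ∑ φ : T.V → Fin N,
    if Function.Injective φ then ∏ e : T.E, T.lab e ω (φ (T.tgt e)) (φ (T.src e)) else 0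

/-- `τ_N[T]`. -/
def tau (T : TestGraph N Ω) (μ : Measure Ω) : ℂ :=
  ((N : ℂ) ^ T.ncc)⁻¹ * ∫ ω, T.tauInner ω ∂μ

/-- `τ⁰_N[T]`. -/
def tau0 (T : TestGraph N Ω) (μ : Measure Ω) : ℂ :=
  ((N : ℂ) ^ T.ncc)⁻¹ * ∫ ω, T.tau0Inner ω ∂μ

/-- The quotient test graph `T^π` associated with a partition `π` of the
vertices of `T`. -/
def quot (T : TestGraph N Ω) (π : Setoid T.V) : TestGraph N Ω where
  V := Quotient π
  E := T.E
  fintV := @Quotient.fintype _ T.fintV π fun _ _ => Classical.propDecidable _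
  fintE := T.fintE
  src := fun e => Quotient.mk π (T.src e)
  tgt := fun e => Quotient.mk π (T.tgt e)
  lab := T.lab

end TestGraph

/-- Monomial `D₀ X_{k(1)} D₁ ⋯ X_{k(d)} D_d` evaluated in a family of matrices:
the coefficients are given as an arbitrary function `D : ℕ → Matrix`. -/
def monomialEval {K : Type} {N : ℕ} (A : K → Matrix (Fin N) (Fin N) ℂ)
    (dd : ℕ) (kk : ℕ → K) (D : ℕ → Matrix (Fin N) (Fin N) ℂ) :
    Matrix (Fin N) (Fin N) ℂ :=
  D 0 * (List.ofFn fun j : Fin dd => A (kk ((j : ℕ) + 1)) * D ((j : ℕ) + 1)).prod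

/-- The centered product `(M₁ - ΔM₁)(M₂ - ΔM₂)⋯(Mₙ - ΔMₙ)`. -/
def centeredProd {N n : ℕ} (M : Fin n → Matrix (Fin N) (Fin N) ℂ) :
    Matrix (Fin N) (Fin N) ℂ :=
  (List.ofFn fun i : Fin n => M i - dproj (M i)).prod

/-- Mutual independence of the families `A 1, …, A L` of random matrices. -/
def IndepFamilies {Ω K : Type} {L : ℕ} [MeasurableSpace Ω] (μ : Measure Ω)
    (A : (N : ℕ) → Fin L → K → Ω → Matrix (Fin N) (Fin N) ℂ) : Prop :=
  ∀ N : ℕ, ProbabilityTheory.iIndep (fun ℓ : Fin L => famSigma (A N ℓ)) μ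

/-- Uniform boundedness, in operator norm, of families of random matrices. -/
def UnifOpNormBound {Ω K : Type} {L : ℕ} [MeasurableSpace Ω] (μ : Measure Ω)
    (A : (N : ℕ) → Fin L → K → Ω → Matrix (Fin N) (Fin N) ℂ) : Prop :=
  ∃ C : ℝ, ∀ (N : ℕ) (ℓ : Fin L) (k : K), ∀ᵐ ω ∂μ, matOpNorm (A N ℓ k ω) ≤ C

/-- The growth bound (MS) for the family `A · ℓ`:
for all graph monomials `g₁, …, gₘ` labelled in the single family `ℓ` and having
equal input and output, `E[∏ᵢ Tr gᵢ(A_N)] = O(N^{Σᵢ 𝔣(gᵢ)/2})` as `N → ∞`. -/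
def MSBound {Ω K : Type} {L : ℕ} [MeasurableSpace Ω] (μ : Measure Ω)
    (A : (N : ℕ) → Fin L → K → Ω → Matrix (Fin N) (Fin N) ℂ) (ℓ : Fin L) : Prop :=
  ∀ (m : ℕ), 1 ≤ m → ∀ gs : Fin m → GraphMonomial L K,
    (∀ i : Fin m, IsConnectedGraph (gs i).src (gs i).tgt ∧
      (∀ e, (gs i).labL e = ℓ) ∧ (gs i).vin = (gs i).vout) →
    (fun N : ℕ => ∫ ω, ∏ i : Fin m,
        Matrix.trace ((gs i).eval fun ℓ' k => A N ℓ' k ω) ∂μ)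
      =O[atTop] fun N : ℕ => (N : ℝ) ^ ((∑ i : Fin m, (frak (gs i).src (gs i).tgt : ℝ)) / 2)

/-! ### Contractions, entrywise -/

section Contraction

variable {ι : Type} [Fintype ι]

/-- The bilinear form of `A` is bounded by the product of the Euclidean norms. -/
def IsContr (A : Matrix ι ι ℂ) : Prop :=
  ∀ w u : ι → ℂ, ‖∑ i, ∑ j, w i * A i j * u j‖ ^ 2 ≤ (∑ i, ‖w i‖ ^ 2) * ∑ j, ‖u j‖ ^ 2

lemma le_one_mul_of_sq_le {s t : ℝ} (hs : 0 ≤ s) (ht : 0 ≤ t) (h : s ^ 2 ≤ t * s) : s ≤ t := by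
  rcases hs.eq_or_lt with h0 | h0
  · rw [← h0]; exact ht
  · nlinarith

lemma norm_sum_mul_sq_le (f g : ι → ℂ) :
    ‖∑ i, f i * g i‖ ^ 2 ≤ (∑ i, ‖f i‖ ^ 2) * ∑ i, ‖g i‖ ^ 2 := by
  calc ‖∑ i, f i * g i‖ ^ 2 ≤ (∑ i, ‖f i‖ * ‖g i‖) ^ 2 := by
        gcongr
        refine (norm_sum_le _ _).trans_eq ?_
        simp
    _ ≤ _ := Finset.sum_mul_sq_le_sq_mul_sq _ _ _

namespace IsContr

variable {A B : Matrix ι ι ℂ}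

lemma vecMul_le (hA : IsContr A) (w : ι → ℂ) :
    ∑ j, ‖∑ i, w i * A i j‖ ^ 2 ≤ ∑ i, ‖w i‖ ^ 2 := by
  have h := hA w (fun j => star (∑ i, w i * A i j))
  have e : (∑ i, ∑ j, w i * A i j * star (∑ i, w i * A i j))
      = ((∑ j, ‖∑ i, w i * A i j‖ ^ 2 : ℝ) : ℂ) := by
    rw [Finset.sum_comm]
    push_cast
    refine Finset.sum_congr rfl fun j _ => ?_
    rw [← Finset.sum_mul]
    exact RCLike.mul_conj _
  rw [e] at h
  have hn : (0 : ℝ) ≤ ∑ j, ‖∑ i, w i * A i j‖ ^ 2 := by positivity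
  rw [Complex.norm_real, Real.norm_of_nonneg hn] at h
  simp only [norm_star] at h
  exact le_one_mul_of_sq_le hn (by positivity) h

lemma of_vecMul_le (h : ∀ w : ι → ℂ, ∑ j, ‖∑ i, w i * A i j‖ ^ 2 ≤ ∑ i, ‖w i‖ ^ 2) :
    IsContr A := by
  intro w u
  rw [Finset.sum_comm]
  simp_rw [← Finset.sum_mul]
  exact (norm_sum_mul_sq_le _ _).trans (mul_le_mul_of_nonneg_right (h w) (by positivity))

lemma transpose (hA : IsContr A) : IsContr Aᵀ := by
  intro w u
  have := hA u w
  rw [Finset.sum_comm, mul_comm (∑ i, ‖u i‖ ^ 2)] at this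
  refine le_of_eq_of_le ?_ this
  congr 2
  refine Finset.sum_congr rfl fun i _ => Finset.sum_congr rfl fun j _ => ?_
  simp only [Matrix.transpose_apply]; ring

lemma map_star (hA : IsContr A) : IsContr (A.map star) := by
  intro w u
  have := hA (fun i => star (w i)) (fun i => star (u i))
  simp only [norm_star] at this
  refine le_of_eq_of_le ?_ this
  rw [← norm_star (∑ i, ∑ j, w i * A.map star i j * u j)]
  simp [star_sum]

lemma mul (hA : IsContr A) (hB : IsContr B) : IsContr (A * B) := by
  refine of_vecMul_le fun w => ?_
  refine le_trans (le_of_eq ?_) ((hB.vecMul_le fun k => ∑ i, w i * A i k).trans (hA.vecMul_le w))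
  refine Finset.sum_congr rfl fun j _ => ?_
  congr 2
  simp_rw [Matrix.mul_apply, Finset.mul_sum, Finset.sum_mul]
  rw [Finset.sum_comm]
  simp_rw [mul_assoc]

lemma weight (hA : IsContr A) {a b : ι → ℂ} (ha : ∀ i, ‖a i‖ ≤ 1) (hb : ∀ i, ‖b i‖ ≤ 1) :
    IsContr (Matrix.of fun i j => a i * A i j * b j) := by
  intro w u
  have h := hA (fun i => w i * a i) (fun j => b j * u j)
  refine le_trans (le_of_eq ?_) (h.trans ?_)
  · congr 2
    refine Finset.sum_congr rfl fun i _ => Finset.sum_congr rfl fun j _ => ?_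
    simp only [Matrix.of_apply]; ring
  · gcongr with i _ i _
    · rw [norm_mul]; exact mul_le_of_le_one_right (norm_nonneg _) (ha i)
    · rw [norm_mul]; exact mul_le_of_le_one_left (norm_nonneg _) (hb i)

lemma one : IsContr (1 : Matrix ι ι ℂ) := by
  refine of_vecMul_le fun w => le_of_eq ?_
  simp [Matrix.one_apply]

lemma row_le (hA : IsContr A) (i : ι) : ∑ j, ‖A i j‖ ^ 2 ≤ 1 := by
  have h := hA.vecMul_le (Pi.single i 1)
  have e1 : ∀ j, ∑ k, (Pi.single i 1 : ι → ℂ) k * A k j = A i j := fun j => by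
    simp [Pi.single_apply]
  have e2 : ∑ k, ‖(Pi.single i 1 : ι → ℂ) k‖ ^ 2 = 1 := by
    rw [Finset.sum_eq_single i] <;> simp +contextual
  simpa only [e1, e2] using h

lemma col_le (hA : IsContr A) (j : ι) : ∑ i, ‖A i j‖ ^ 2 ≤ 1 := hA.transpose.row_le j

lemma entry_le (hA : IsContr A) (i j : ι) : ‖A i j‖ ≤ 1 := by
  have h := (Finset.single_le_sum (f := fun j => ‖A i j‖ ^ 2) (fun _ _ => by positivity)
    (Finset.mem_univ j)).trans (hA.row_le i)
  have h' : ‖A i j‖ ^ 2 ≤ 1 := h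
  nlinarith [norm_nonneg (A i j)]

lemma schur (hA : IsContr A) (hB : IsContr B) :
    IsContr (Matrix.of fun i j => A i j * B i j) := by
  intro w u
  have h := norm_sum_mul_sq_le (fun q : ι × ι => w q.1 * A q.1 q.2)
    (fun q => B q.1 q.2 * u q.2)
  rw [Fintype.sum_prod_type, Fintype.sum_prod_type, Fintype.sum_prod_type_right] at h
  refine le_trans (le_of_eq ?_) (h.trans ?_)
  · congr 2
    refine Finset.sum_congr rfl fun i _ => Finset.sum_congr rfl fun j _ => ?_
    simp only [Matrix.of_apply]; ring
  · gcongr with i _ i _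
    · simp_rw [norm_mul, mul_pow, ← Finset.mul_sum]
      exact mul_le_of_le_one_right (by positivity) (hA.row_le i)
    · simp_rw [norm_mul, mul_pow, ← Finset.sum_mul]
      exact mul_le_of_le_one_left (by positivity) (hB.col_le i)

lemma norm_sum_le_card (hA : IsContr A) : ‖∑ i, ∑ j, A i j‖ ≤ Fintype.card ι := by
  have h := hA (fun _ => 1) (fun _ => 1)
  simp only [one_mul, mul_one, norm_one, one_pow, Finset.sum_const, Finset.card_univ,
    nsmul_eq_mul] at h
  rw [← sq] at h
  exact le_of_sq_le_sq h (by positivity)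

lemma norm_sum_mul_le_card (hA : IsContr A) (hB : IsContr B) :
    ‖∑ i, ∑ j, A i j * B j i‖ ≤ Fintype.card ι :=
  (hA.schur hB.transpose).norm_sum_le_card

end IsContr

/-- A contraction or the all-ones matrix. -/
def IsContrOrOnes (A : Matrix ι ι ℂ) : Prop := IsContr A ∨ A = Matrix.of fun _ _ => 1

lemma norm_triangle_sum_le {P Q S : Matrix ι ι ℂ} (hP : IsContr P) (hQ : IsContr Q)
    (hS : IsContrOrOnes S) :
    ‖∑ x, ∑ y, ∑ z, P x y * Q y z * S z x‖ ≤ Fintype.card ι := by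
  have e : ∑ x, ∑ y, ∑ z, P x y * Q y z * S z x = ∑ x, ∑ z, (P * Q) x z * S z x := by
    refine Finset.sum_congr rfl fun x _ => ?_
    rw [Finset.sum_comm]
    simp_rw [Matrix.mul_apply, Finset.sum_mul]
  rw [e]
  rcases hS with hS | rfl
  · exact (hP.mul hQ).norm_sum_mul_le_card hS
  · simpa using (hP.mul hQ).norm_sum_le_card

end Contraction

/-! ### Products of contraction entries over three labels -/

section Pieces

variable {ι : Type} [Fintype ι]

lemma exists_normal_form (pl : List (Matrix ι ι ℂ × Fin 3 × Fin 3)) (h : ∀ q ∈ pl, IsContr q.1) :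
    ∃ (θ : Fin 3 → ι → ℂ) (P : Fin 3 → Matrix ι ι ℂ), (∀ a i, ‖θ a i‖ ≤ 1) ∧
      (∀ a, IsContr (P a) ∨ (P a = (Matrix.of fun _ _ => 1) ∧
        ∀ q ∈ pl, q.2 ≠ (a, a + 1) ∧ q.2 ≠ (a + 1, a))) ∧
      ∀ σ : Fin 3 → ι, (pl.map fun q => q.1 (σ q.2.1) (σ q.2.2)).prod =
        (∏ a, θ a (σ a)) * ∏ a, P a (σ a) (σ (a + 1)) := by
  induction pl with
  | nil =>
    exact ⟨fun _ _ => 1, fun _ => Matrix.of fun _ _ => 1, by simp, fun a => Or.inr (by simp),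
      by simp⟩
  | cons q pl ih =>
    obtain ⟨θ, P, hθ, hP, hprod⟩ := ih fun q hq => h q (List.mem_cons_of_mem _ hq)
    obtain ⟨Z, a, b⟩ := q
    have hZ : IsContr Z := h (Z, a, b) List.mem_cons_self
    have hcase : ∀ a b : Fin 3, a = b ∨ b = a + 1 ∨ a = b + 1 := by decide
    have hne : ∀ a : Fin 3, a ≠ a + 1 := by decide
    have hsucc : ∀ a e : Fin 3, e ≠ a →
        ((a, a + 1) ≠ (e, e + 1) ∧ (a, a + 1) ≠ (e + 1, e)) ∧
        ((a + 1, a) ≠ (e, e + 1) ∧ (a + 1, a) ≠ (e + 1, e)) := by decide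
    have hedge : ∀ (W : Matrix ι ι ℂ), IsContr W → ∀ c a b : Fin 3,
        (∀ e, e ≠ c → (a, b) ≠ (e, e + 1) ∧ (a, b) ≠ (e + 1, e)) →
        (∀ σ : Fin 3 → ι, Z (σ a) (σ b) = W (σ c) (σ (c + 1))) →
        ∃ (θ : Fin 3 → ι → ℂ) (P : Fin 3 → Matrix ι ι ℂ), (∀ a i, ‖θ a i‖ ≤ 1) ∧
          (∀ a', IsContr (P a') ∨ (P a' = (Matrix.of fun _ _ => 1) ∧
            ∀ q ∈ (Z, a, b) :: pl, q.2 ≠ (a', a' + 1) ∧ q.2 ≠ (a' + 1, a'))) ∧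
          ∀ σ : Fin 3 → ι, (((Z, a, b) :: pl).map fun q => q.1 (σ q.2.1) (σ q.2.2)).prod =
            (∏ a, θ a (σ a)) * ∏ a, P a (σ a) (σ (a + 1)) := by
      intro W hW c a b hab hZW
      refine ⟨θ, fun e => Matrix.of fun i j => P e i j * (if e = c then W i j else 1), hθ, ?_, ?_⟩
      · intro e
        by_cases hec : e = c
        · left
          simp only [hec, if_true]
          rcases hP c with h1 | ⟨h1, -⟩
          · exact h1.schur hW
          · rw [h1]
            convert hW using 1
            ext i j; simp
        · rcases hP e with h1 | ⟨h1, h2⟩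
          · left
            convert h1 using 1
            ext i j; simp [hec]
          · right
            refine ⟨by simp [hec, h1], ?_⟩
            intro q hq
            rcases List.mem_cons.1 hq with rfl | hq
            · exact hab e hec
            · exact h2 q hq
      · intro σ
        simp only [List.map_cons, List.prod_cons, hprod, Matrix.of_apply, Finset.prod_mul_distrib,
          Finset.prod_ite_eq', Finset.mem_univ, if_true, hZW]
        ring
    rcases hcase a b with rfl | rfl | rfl
    · refine ⟨fun c i => θ c i * (if c = a then Z i i else 1), P, ?_, ?_, ?_⟩
      · intro c i
        rw [norm_mul]
        refine mul_le_one₀ (hθ c i) (norm_nonneg _) ?_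
        split_ifs
        · exact hZ.entry_le i i
        · simp
      · intro c
        refine (hP c).imp_right fun ⟨h1, h2⟩ => ⟨h1, ?_⟩
        intro q hq
        rcases List.mem_cons.1 hq with rfl | hq
        · have := hne c
          constructor <;> intro h3 <;> rw [Prod.mk.injEq] at h3 <;> apply this
          · exact h3.1.symm.trans h3.2
          · exact h3.2.symm.trans h3.1
        · exact h2 q hq
      · intro σ
        simp only [List.map_cons, List.prod_cons, hprod, Finset.prod_mul_distrib,
          Finset.prod_ite_eq', Finset.mem_univ, if_true]
        ring
    · exact hedge Z hZ a a (a + 1) (fun e he => (hsucc a e he).1) fun σ => rfl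
    · exact hedge Zᵀ hZ.transpose b (b + 1) b (fun e he => (hsucc b e he).2) fun σ => rfl

/-- The entries of contractions multiplied along a connected graph on three vertices have a sum
bounded by the dimension. -/
lemma norm_sum_pieces_le (pl : List (Matrix ι ι ℂ × Fin 3 × Fin 3)) (h : ∀ q ∈ pl, IsContr q.1)
    (hconn : ∀ f : Fin 3 → Prop, (∀ q ∈ pl, (f q.2.1 ↔ f q.2.2)) → ∀ a b, f a ↔ f b)
    (w : Fin 3 → ι → ℂ) (hw : ∀ a i, ‖w a i‖ ≤ 1) :
    ‖∑ σ : Fin 3 → ι, (∏ a, w a (σ a)) * (pl.map fun q => q.1 (σ q.2.1) (σ q.2.2)).prod‖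
      ≤ Fintype.card ι := by
  obtain ⟨θ, P, hθ, hP, hprod⟩ := exists_normal_form pl h
  have htwo : ∀ a : Fin 3, IsContr (P a) ∨ IsContr (P (a + 1)) := by
    intro a
    by_contra! hcon
    have h1 := ((hP a).resolve_left hcon.1).2
    have h2 := ((hP (a + 1)).resolve_left hcon.2).2
    have hfin : ∀ a b c : Fin 3, (b, c) ≠ (a, a + 1) ∧ (b, c) ≠ (a + 1, a) →
        (b, c) ≠ (a + 1, a + 1 + 1) ∧ (b, c) ≠ (a + 1 + 1, a + 1) →
        (b = a + 1 ↔ c = a + 1) := by decide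
    have hne : ∀ a : Fin 3, a ≠ a + 1 := by decide
    exact hne a ((hconn (fun c => c = a + 1) (fun q hq => hfin a q.2.1 q.2.2 (h1 q hq) (h2 q hq))
      a (a + 1)).2 rfl)
  have hsum : ∑ σ : Fin 3 → ι, (∏ a, w a (σ a)) *
        (pl.map fun q => q.1 (σ q.2.1) (σ q.2.2)).prod
      = ∑ x, ∑ y, ∑ z, (w 0 x * θ 0 x) * P 0 x y * (w 1 y * θ 1 y) * P 1 y z
          * (w 2 z * θ 2 z) * P 2 z x := by
    rw [← (Fin.consEquiv fun _ : Fin 3 => ι).sum_comp, Fintype.sum_prod_type]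
    refine Finset.sum_congr rfl fun x _ => ?_
    rw [← (Fin.consEquiv fun _ : Fin 2 => ι).sum_comp, Fintype.sum_prod_type]
    refine Finset.sum_congr rfl fun y _ => ?_
    rw [← (Fin.consEquiv fun _ : Fin 1 => ι).sum_comp, Fintype.sum_prod_type]
    refine Finset.sum_congr rfl fun z _ => ?_
    rw [Fintype.sum_unique]
    rw [hprod]
    simp only [Fin.prod_univ_three]
    change w 0 x * w 1 y * w 2 z * (θ 0 x * θ 1 y * θ 2 z * (P 0 x y * P 1 y z * P 2 z x)) = _
    ring
  have hone : ∀ a i, ‖w a i * θ a i‖ ≤ 1 := fun a i => by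
    rw [norm_mul]; exact mul_le_one₀ (hw a i) (norm_nonneg _) (hθ a i)
  have hP' : ∀ a, IsContrOrOnes (P a) := fun a => (hP a).imp_right And.left
  set t : Fin 3 → ι → ℂ := fun a i => w a i * θ a i with ht
  have hu : ∀ i : ι, ‖(1 : ℂ)‖ ≤ 1 := by simp
  rw [hsum]
  by_cases h0 : IsContr (P 0)
  · by_cases h1 : IsContr (P 1)
    · refine le_trans (le_of_eq ?_) (norm_triangle_sum_le (h0.weight (hone 0) (hone 1))
        (h1.weight hu (hone 2)) (hP' 2))
      congr 1
      refine Finset.sum_congr rfl fun x _ => Finset.sum_congr rfl fun y _ =>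
        Finset.sum_congr rfl fun z _ => ?_
      simp only [Matrix.of_apply]; ring
    · have h2 : IsContr (P 2) := (htwo 1).resolve_left h1
      refine le_trans (le_of_eq ?_) (norm_triangle_sum_le (h2.weight (hone 2) (hone 0))
        (h0.weight hu (hone 1)) (hP' 1))
      congr 1
      calc _ = ∑ x, ∑ z, ∑ y, _ := Finset.sum_congr rfl fun x _ => Finset.sum_comm
        _ = ∑ z, ∑ x, ∑ y, _ := Finset.sum_comm
        _ = _ := by
          refine Finset.sum_congr rfl fun z _ => Finset.sum_congr rfl fun x _ =>
            Finset.sum_congr rfl fun y _ => ?_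
          simp only [Matrix.of_apply]; ring
  · have h1 : IsContr (P 1) := (htwo 0).resolve_left h0
    have h2 : IsContr (P 2) := (htwo 2).resolve_right h0
    refine le_trans (le_of_eq ?_) (norm_triangle_sum_le (h1.weight (hone 1) (hone 2))
      (h2.weight hu (hone 0)) (hP' 0))
    congr 1
    calc _ = ∑ y, ∑ x, ∑ z, _ := Finset.sum_comm
      _ = ∑ y, ∑ z, ∑ x, _ := Finset.sum_congr rfl fun x _ => Finset.sum_comm
      _ = _ := by
        refine Finset.sum_congr rfl fun y _ => Finset.sum_congr rfl fun z _ =>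
          Finset.sum_congr rfl fun x _ => ?_
        simp only [Matrix.of_apply]; ring

end Pieces

/-! ### Summing over walks with prescribed special positions -/

section Walk

variable {ι : Type}

/-- The start points of the edges of a walk `u, Φ 0, Φ 1, …` in which the walk restarts at
`σ (rho k)` after every special position `k`. -/
def walkDep {M : ℕ} (sp : ℕ → Prop) (rho : ℕ → Fin 3) (σ : Fin 3 → ι) (u : ι) (Φ : Fin M → ι) :
    Fin (M + 1) → ι :=
  Fin.cons u fun k => if sp (k + 1) then σ (rho (k + 1)) else Φ k

/-- The product of matrix entries along such a walk, which is constrained to arrive at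
`σ (lam k)` at every special position `k`. -/
def walkProd {M : ℕ} (X : ℕ → Matrix ι ι ℂ) (sp : ℕ → Prop) (lam rho : ℕ → Fin 3)
    (σ : Fin 3 → ι) (u : ι) (Φ : Fin M → ι) : ℂ :=
  ∏ k : Fin M, (if sp (k + 1) then (if Φ k = σ (lam (k + 1)) then 1 else 0) else 1) *
    X k (walkDep sp rho σ u Φ k.castSucc) (Φ k)

lemma walkDep_cons {M : ℕ} (sp : ℕ → Prop) (rho : ℕ → Fin 3) (σ : Fin 3 → ι) (u x : ι)
    (Φ : Fin M → ι) (k : Fin M) :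
    walkDep sp rho σ u (Fin.cons x Φ : Fin (M + 1) → ι) k.succ.castSucc =
      walkDep (fun k => sp (k + 1)) (fun k => rho (k + 1)) σ
        (if sp 1 then σ (rho 1) else x) Φ k.castSucc := by
  obtain _ | M := M
  · exact k.elim0
  · induction k using Fin.cases with
    | zero => simp [walkDep]
    | succ k => simp [walkDep]

lemma walkProd_cons {M : ℕ} (X : ℕ → Matrix ι ι ℂ) (sp : ℕ → Prop) (lam rho : ℕ → Fin 3)
    (σ : Fin 3 → ι) (u x : ι) (Φ : Fin M → ι) :
    walkProd X sp lam rho σ u (Fin.cons x Φ : Fin (M + 1) → ι) =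
      (if sp 1 then (if x = σ (lam 1) then 1 else 0) else 1) * X 0 u x *
      walkProd (fun k => X (k + 1)) (fun k => sp (k + 1)) (fun k => lam (k + 1))
        (fun k => rho (k + 1)) σ (if sp 1 then σ (rho 1) else x) Φ := by
  rw [walkProd, Fin.prod_univ_succ, walkProd]
  refine congr_arg₂ _ ?_ ?_
  · simp [walkDep]
  · refine Finset.prod_congr rfl fun k _ => ?_
    rw [walkDep_cons]
    simp

variable [Fintype ι]

lemma exists_pieces (M : ℕ) (X : ℕ → Matrix ι ι ℂ) (sp : ℕ → Prop) (lam rho : ℕ → Fin 3)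
    (W : ℕ → ι → ℂ) (hX : ∀ k, IsContr (X k)) (hW : ∀ k i, ‖W k i‖ ≤ 1) (hsp : sp (M + 1)) :
    ∃ (Z : Matrix ι ι ℂ) (b : Fin 3) (pl : List (Matrix ι ι ℂ × Fin 3 × Fin 3)), IsContr Z ∧
      (∀ q ∈ pl, IsContr q.1) ∧
      (∀ σ u, ∑ Φ : Fin (M + 1) → ι, (∏ k : Fin _, W k (Φ k)) * walkProd X sp lam rho σ u Φ =
        Z u (σ b) * (pl.map fun q => q.1 (σ q.2.1) (σ q.2.2)).prod) ∧
      ∀ f : Fin 3 → Prop, (∀ q ∈ pl, (f q.2.1 ↔ f q.2.2)) → ∃ h : ℕ → Fin 3, h 0 = b ∧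
        ∀ k ≤ M, (sp (k + 1) → h k = lam (k + 1) ∧
          (k < M → (f (rho (k + 1)) ↔ f (h (k + 1))))) ∧ (¬ sp (k + 1) → h k = h (k + 1)) := by
  have hone : ∀ i : ι, ‖(1 : ℂ)‖ ≤ 1 := by simp
  induction M generalizing X sp lam rho W with
  | zero =>
    refine ⟨_, lam 1, [], (hX 0).weight hone (hW 0), by simp, ?_, ?_⟩
    · intro σ u
      rw [← (Fin.consEquiv fun _ : Fin 1 => ι).sum_comp, Fintype.sum_prod_type]
      have he : ∀ x Φ, Fin.consEquiv (fun _ : Fin 1 => ι) (x, Φ) = Fin.cons x Φ := fun _ _ => rfl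
      simp only [he, walkProd_cons]
      simp [walkProd, hsp, mul_comm]
    · intro f _
      refine ⟨fun _ => lam 1, rfl, fun k hk => ?_⟩
      obtain rfl : k = 0 := by omega
      exact ⟨fun _ => ⟨rfl, fun h => absurd h (lt_irrefl 0)⟩, fun h => absurd hsp h⟩
  | succ M ih =>
    obtain ⟨Z, b, pl, hZ, hpl, hsum, hf⟩ := ih (fun k => X (k + 1)) (fun k => sp (k + 1))
      (fun k => lam (k + 1)) (fun k => rho (k + 1)) (fun k => W (k + 1)) (fun k => hX _)
      (fun k => hW _) hsp
    have hrec : ∀ σ u, ∑ Φ : Fin (M + 1 + 1) → ι, (∏ k : Fin _, W k (Φ k)) * walkProd X sp lam rho σ u Φ =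
        ∑ x, W 0 x * (if sp 1 then (if x = σ (lam 1) then 1 else 0) else 1) * X 0 u x *
          (Z (if sp 1 then σ (rho 1) else x) (σ b) *
            (pl.map fun q => q.1 (σ q.2.1) (σ q.2.2)).prod) := by
      intro σ u
      rw [← (Fin.consEquiv fun _ : Fin (M + 1 + 1) => ι).sum_comp, Fintype.sum_prod_type]
      refine Finset.sum_congr rfl fun x _ => ?_
      rw [← hsum, Finset.mul_sum]
      refine Finset.sum_congr rfl fun Φ _ => ?_
      have he : Fin.consEquiv (fun _ : Fin (M + 1 + 1) => ι) (x, Φ) = Fin.cons x Φ := rfl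
      simp only [he, walkProd_cons, Fin.prod_univ_succ (n := M + 1),
        Fin.cons_zero, Fin.cons_succ, Fin.val_succ, Fin.val_zero]
      ring
    by_cases h1 : sp 1
    · refine ⟨_, lam 1, (Z, rho 1, b) :: pl, (hX 0).weight hone (hW 0), ?_, ?_, ?_⟩
      · simpa [hZ] using hpl
      · intro σ u
        rw [hrec]
        simp [h1, -mul_eq_mul_right_iff, -mul_eq_mul_left_iff]
        ring
      · intro f hfp
        obtain ⟨h, h0, hh⟩ := hf f fun q hq => hfp q (List.mem_cons_of_mem _ hq)
        refine ⟨fun k => k.casesOn (lam 1) h, rfl, fun k hk => ?_⟩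
        obtain _ | k := k
        · refine ⟨fun _ => ⟨rfl, fun _ => ?_⟩, fun h => absurd h1 h⟩
          change f (rho 1) ↔ f (h 0)
          rw [h0]
          exact hfp (Z, rho 1, b) List.mem_cons_self
        · have := hh k (by omega)
          exact ⟨fun h => ⟨(this.1 h).1, fun hk => (this.1 h).2 (by omega)⟩, this.2⟩
    · refine ⟨_, b, pl, ((hX 0).weight hone (hW 0)).mul hZ, hpl, ?_, ?_⟩
      · intro σ u
        rw [hrec, Matrix.mul_apply, Finset.sum_mul]
        refine Finset.sum_congr rfl fun x _ => ?_
        simp [h1]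
        ring
      · intro f hfp
        obtain ⟨h, h0, hh⟩ := hf f hfp
        refine ⟨fun k => k.casesOn b h, rfl, fun k hk => ?_⟩
        obtain _ | k := k
        · exact ⟨fun h => absurd h h1, fun _ => h0.symm⟩
        · have := hh k (by omega)
          exact ⟨fun h => ⟨(this.1 h).1, fun hk => (this.1 h).2 (by omega)⟩, this.2⟩

/-- A sum over walks whose special positions carry three labels, and whose path between the special
positions `0` and `q₁`, and between `q₂` and the end, links the three labels. -/
lemma norm_sum_walkProd_le {M : ℕ} (X : ℕ → Matrix ι ι ℂ) (sp : ℕ → Prop) (lam rho : ℕ → Fin 3)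
    (hX : ∀ k, IsContr (X k)) (q₁ q₂ : ℕ) (hq₁ : 0 < q₁) (hq₁M : q₁ ≤ M) (hq₂ : 0 < q₂)
    (hq₂M : q₂ < M)
    (hsp₁ : sp q₁) (hsp₂ : sp q₂) (hspM : sp M)
    (hrho0 : rho 0 = 1) (hlam₁ : lam q₁ = 2) (hrho₂ : rho q₂ = 2) (hlamM : lam M = 0)
    (hpure₁ : ∀ k, 0 < k → k < q₁ → sp k → lam k = rho k)
    (hpure₂ : ∀ k, q₂ < k → k < M → sp k → lam k = rho k)
    (w : Fin 3 → ι → ℂ) (hw : ∀ a i, ‖w a i‖ ≤ 1) (W : ℕ → ι → ℂ) (hW : ∀ k i, ‖W k i‖ ≤ 1) :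
    ‖∑ σ : Fin 3 → ι, (∏ a, w a (σ a)) * ∑ Φ : Fin M → ι, (∏ k : Fin _, W k (Φ k)) *
      walkProd X sp lam rho σ (σ (rho 0)) Φ‖ ≤ Fintype.card ι := by
  obtain _ | M := M
  · omega
  obtain ⟨Z, b, pl, hZ, hpl, hsum, hf⟩ := exists_pieces M X sp lam rho W hX hW hspM
  have := norm_sum_pieces_le ((Z, rho 0, b) :: pl) (by simpa [hZ] using hpl) ?_ w hw
  · simp only [hsum]
    simpa using this
  intro f hfp
  obtain ⟨h, h0, hh⟩ := hf f fun q hq => hfp q (List.mem_cons_of_mem _ hq)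
  have hstart : f (rho 0) ↔ f (h 0) := by
    rw [h0]; exact hfp (Z, rho 0, b) List.mem_cons_self
  have hlink : ∀ i m, (f (rho i) ↔ f (h i)) → i + m ≤ M →
      (∀ k, i < k → k < i + m + 1 → sp k → lam k = rho k) → (f (rho i) ↔ f (h (i + m))) := by
    intro i m hi
    induction m with
    | zero => intro _ _; exact hi
    | succ m ih =>
      intro hm hp
      rw [ih (by omega) fun k h1 h2 => hp k h1 (by omega)]
      by_cases hs : sp (i + m + 1)
      · obtain ⟨h1, h2⟩ := (hh (i + m) (by omega)).1 hs
        rw [h1, hp (i + m + 1) (by omega) (by omega) hs]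
        exact h2 (by omega)
      · rw [(hh (i + m) (by omega)).2 hs]
        rfl
  have e1 : f 1 ↔ f 2 := by
    have h1 := hlink 0 (q₁ - 1) hstart (by omega) fun k h1 h2 => hpure₁ k h1 (by omega)
    obtain ⟨q, rfl⟩ : ∃ q, q₁ = q + 1 := ⟨q₁ - 1, by omega⟩
    rw [zero_add, Nat.add_sub_cancel, ((hh q (by omega)).1 hsp₁).1, hrho0, hlam₁] at h1
    exact h1
  have e2 : f 2 ↔ f 0 := by
    obtain ⟨q, rfl⟩ : ∃ q, q₂ = q + 1 := ⟨q₂ - 1, by omega⟩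
    have h1 := hlink (q + 1) (M - (q + 1)) (((hh q (by omega)).1 hsp₂).2 (by omega)) (by omega)
      fun k h1 h2 => hpure₂ k h1 (by omega)
    rw [show q + 1 + (M - (q + 1)) = M by omega, ((hh M le_rfl).1 hspM).1, hrho₂, hlamM] at h1
    exact h1
  have e : ∀ a, f a ↔ f 2
    | 0 => e2.symm
    | 1 => e1
    | 2 => Iff.rfl
  exact fun a b => (e a).trans (e b).symm

end Walk

/-! ### Restricting a sum to a prescribed coincidence pattern -/

section Pattern

variable {ι S : Type}

/-- `Ψ` identifies exactly the pairs related by `E`. -/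
def HasPattern (E : S → S → Prop) (Ψ : S → ι) : Prop := ∀ a b, Ψ a = Ψ b ↔ E a b

variable [Fintype ι]

lemma sum_sign_mul_sign (x y : ι) :
    ∑ s : ι → Bool, ((if s x then 1 else -1) * (if s y then 1 else -1) : ℂ) =
      if x = y then (2 : ℂ) ^ Fintype.card ι else 0 := by
  split_ifs with h
  · subst h
    have : ∀ s : ι → Bool, ((if s x then 1 else -1) * (if s x then 1 else -1) : ℂ) = 1 := by
      intro s; split_ifs <;> norm_num
    simp [this]
  · refine Finset.sum_involution (fun s _ => Function.update s x (!s x)) ?_ ?_ ?_ ?_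
    · intro s _
      rw [Function.update_self, Function.update_of_ne (Ne.symm h)]
      cases s x <;> cases s y <;> simp
    · intro s _ _ heq
      have := congrFun heq x
      simp at this
    · simp
    · intro s _
      simp

variable [Fintype S] [DecidableEq S]

lemma norm_sum_pattern_le (F : (S → ι) → ℂ) (B : ℝ)
    (hB : ∀ W : S → ι → ℂ, (∀ s i, ‖W s i‖ ≤ 1) → ‖∑ Ψ, (∏ s, W s (Ψ s)) * F Ψ‖ ≤ B)
    (E : S → S → Prop) :
    ‖∑ Ψ, if HasPattern E Ψ then F Ψ else 0‖ ≤ 2 ^ (Fintype.card S ^ 2) * B := by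
  have key : ∀ T : Finset (S × S), ∀ W : S → ι → ℂ, (∀ s i, ‖W s i‖ ≤ 1) →
      ‖∑ Ψ, (∏ s, W s (Ψ s)) * (if ∀ q ∈ T, (Ψ q.1 = Ψ q.2 ↔ E q.1 q.2) then F Ψ else 0)‖
        ≤ 2 ^ T.card * B := by
    intro T
    induction T using Finset.induction_on with
    | empty => simpa using hB
    | insert q T hq ih =>
      intro W hW
      obtain ⟨a, b⟩ := q
      set G : (S → ι) → ℂ := fun Ψ =>
        if ∀ q ∈ T, (Ψ q.1 = Ψ q.2 ↔ E q.1 q.2) then F Ψ else 0 with hG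
      have hB0 : 0 ≤ 2 ^ T.card * B := (norm_nonneg _).trans (ih W hW)
      have heq : ‖∑ Ψ, (∏ s, W s (Ψ s)) * (if Ψ a = Ψ b then G Ψ else 0)‖ ≤ 2 ^ T.card * B := by
        have hsign : ∑ s : ι → Bool, ∑ Ψ : S → ι, (∏ c, (W c (Ψ c) *
            (if c = a then (if s (Ψ c) then 1 else -1) else 1) *
            (if c = b then (if s (Ψ c) then 1 else -1) else 1))) * G Ψ
            = 2 ^ Fintype.card ι * ∑ Ψ, (∏ s, W s (Ψ s)) * (if Ψ a = Ψ b then G Ψ else 0) := by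
          rw [Finset.sum_comm, Finset.mul_sum]
          refine Finset.sum_congr rfl fun Ψ _ => ?_
          simp only [Finset.prod_mul_distrib, Finset.prod_ite_eq', Finset.mem_univ, if_true]
          rw [← Finset.sum_mul]
          simp only [mul_assoc]
          rw [← Finset.mul_sum, sum_sign_mul_sign]
          split_ifs
          · ring
          · simp
        have hle := norm_sum_le (Finset.univ : Finset (ι → Bool)) fun s =>
          ∑ Ψ : S → ι, (∏ c, (W c (Ψ c) *
            (if c = a then (if s (Ψ c) then 1 else -1) else 1) *
            (if c = b then (if s (Ψ c) then 1 else -1) else 1))) * G Ψ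
        rw [hsign] at hle
        have hle2 := hle.trans (Finset.sum_le_card_nsmul _ _ (2 ^ T.card * B) fun s _ =>
          ih (fun c i => W c i * (if c = a then (if s i then 1 else -1) else 1) *
            (if c = b then (if s i then 1 else -1) else 1)) fun c i => by
              rw [norm_mul, norm_mul]
              have h1 : ‖(if c = a then (if s i then 1 else -1) else 1 : ℂ)‖ = 1 := by
                split_ifs <;> simp
              have h2 : ‖(if c = b then (if s i then 1 else -1) else 1 : ℂ)‖ = 1 := by
                split_ifs <;> simp
              rw [h1, h2, mul_one, mul_one]
              exact hW c i)
        rw [norm_mul] at hle2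
        simp only [norm_pow, Complex.norm_ofNat, Finset.card_univ, Fintype.card_pi,
          Fintype.card_bool, Finset.prod_const, nsmul_eq_mul, Nat.cast_pow, Nat.cast_ofNat] at hle2
        exact le_of_mul_le_mul_left hle2 (by positivity)
      have hsplit : ∀ Ψ : S → ι,
          (if ∀ q ∈ insert (a, b) T, (Ψ q.1 = Ψ q.2 ↔ E q.1 q.2) then F Ψ else 0) =
          if E a b then (if Ψ a = Ψ b then G Ψ else 0)
            else G Ψ - (if Ψ a = Ψ b then G Ψ else 0) := by
        intro Ψ
        simp only [Finset.forall_mem_insert, hG]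
        by_cases h1 : E a b <;> by_cases h2 : Ψ a = Ψ b <;> simp [h1, h2]
      simp only [hsplit]
      rw [Finset.card_insert_of_notMem hq, pow_succ]
      by_cases h1 : E a b
      · simp only [h1, if_true]
        linarith
      · simp only [h1, if_false, mul_sub, Finset.sum_sub_distrib]
        have := norm_sub_le (∑ Ψ, (∏ s, W s (Ψ s)) * G Ψ)
          (∑ Ψ, (∏ s, W s (Ψ s)) * (if Ψ a = Ψ b then G Ψ else 0))
        linarith [ih W hW]
  have := key Finset.univ (fun _ _ => 1) (by simp)
  rw [Finset.card_univ, Fintype.card_prod, ← sq] at this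
  refine le_of_eq_of_le (congrArg norm (Finset.sum_congr rfl fun Ψ _ => ?_)) this
  rw [Finset.prod_const_one, one_mul]
  exact if_congr (by simp [HasPattern]) rfl rfl

end Pattern

/-! ### Counting functions with a given coincidence pattern -/

section PatternCount

variable {S : Type} {N : ℕ}

lemma exists_perm_comp_eq (Ψ Ψ₀ : S → Fin N) (h : ∀ a b, Ψ a = Ψ b ↔ Ψ₀ a = Ψ₀ b) :
    ∃ τ : Equiv.Perm (Fin N), ∀ a, Ψ a = τ (Ψ₀ a) := by
  rcases isEmpty_or_nonempty (Fin N) with hN | hN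
  · exact ⟨1, fun a => hN.elim (Ψ a)⟩
  obtain ⟨e, he⟩ := (Function.factorsThrough_iff Ψ).1 (fun a b hab => (h a b).2 hab)
  obtain ⟨g, hg⟩ := Finset.exists_equiv_extend_of_card_eq (α := Fin N) (t := (Finset.univ :
    Finset (Fin N))) (by simp) (s := Finset.univ.filter fun i => ∃ a, Ψ₀ a = i) (f := e)
    (Finset.subset_univ _) (by
      intro i hi j hj hij
      obtain ⟨a, rfl⟩ := (Finset.mem_filter.1 hi).2
      obtain ⟨b, rfl⟩ := (Finset.mem_filter.1 hj).2
      rw [← h a b, he]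
      exact hij)
  refine ⟨g.trans (Equiv.subtypeUnivEquiv fun _ => Finset.mem_univ _), fun a => ?_⟩
  rw [he]
  exact (hg (Ψ₀ a) (by simp)).symm

lemma pow_card_le_card_pattern [Fintype S] [DecidableEq S] (Ψ₀ : S → Fin N) (hN : 2 * Fintype.card S ≤ N) :
    N ^ (Finset.univ.image Ψ₀).card ≤ 2 ^ Fintype.card S *
      (Finset.univ.filter fun Ψ : S → Fin N => HasPattern (fun a b => Ψ₀ a = Ψ₀ b) Ψ).card := by
  set R := Finset.univ.image Ψ₀ with hR
  have hRS : R.card ≤ Fintype.card S := Finset.card_image_le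
  have hmem : ∀ a, Ψ₀ a ∈ R := fun a => Finset.mem_image_of_mem _ (Finset.mem_univ a)
  have h1 : Fintype.card (R ↪ Fin N) ≤
      (Finset.univ.filter fun Ψ : S → Fin N => HasPattern (fun a b => Ψ₀ a = Ψ₀ b) Ψ).card := by
    rw [← Finset.card_univ]
    refine Finset.card_le_card_of_injOn (fun e a => e ⟨Ψ₀ a, hmem a⟩) ?_ ?_
    · intro e _
      exact Finset.mem_filter.2 ⟨Finset.mem_univ _, fun a b => by simp⟩
    · intro e _ e' _ hee
      ext ⟨i, hi⟩
      obtain ⟨a, -, rfl⟩ := Finset.mem_image.1 hi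
      exact congrArg Fin.val (congrFun hee a)
  rw [Fintype.card_embedding_eq, Fintype.card_fin, Fintype.card_coe] at h1
  have h2 := Nat.pow_sub_le_descFactorial N R.card
  calc N ^ R.card ≤ (2 * (N + 1 - R.card)) ^ R.card := Nat.pow_le_pow_left (by omega) _
    _ = 2 ^ R.card * (N + 1 - R.card) ^ R.card := mul_pow _ _ _
    _ ≤ _ := Nat.mul_le_mul (Nat.pow_le_pow_right (by norm_num) hRS) (h2.trans h1)

end PatternCount

/-! ### The expectation of a closed walk -/

section ClosedWalk

lemma walkDep_comp {ι : Type} {M : ℕ} (sp : ℕ → Prop) (rho : ℕ → Fin 3) (σ : Fin 3 → ι) (u : ι)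
    (Φ : Fin M → ι) (τ : ι → ι) (k : Fin (M + 1)) :
    walkDep sp rho (τ ∘ σ) (τ u) (τ ∘ Φ) k = τ (walkDep sp rho σ u Φ k) := by
  induction k using Fin.cases with
  | zero => rfl
  | succ k =>
    simp only [walkDep, Fin.cons_succ, Function.comp_apply]
    split_ifs <;> rfl

variable {Ω : Type} [MeasurableSpace Ω] {μ : Measure Ω} [IsProbabilityMeasure μ] {N L M : ℕ}

lemma integrable_prod_entries (Y : ℕ → Ω → Matrix (Fin N) (Fin N) ℂ)
    (hYm : ∀ k, EntriesMeasurable (Y k)) (hY : ∀ᵐ ω ∂μ, ∀ k, IsContr (Y k ω))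
    (ψ ψ' : Fin M → Fin N) (a : Fin M → ℂ) (ha : ∀ k, ‖a k‖ ≤ 1) :
    Integrable (fun ω => ∏ k : Fin M, a k * Y k ω (ψ k) (ψ' k)) μ := by
  refine Integrable.of_bound (C := 1) (Measurable.aestronglyMeasurable
    (Finset.measurable_prod _ fun k _ => measurable_const.mul (hYm k _ _))) ?_
  filter_upwards [hY] with ω hω
  rw [norm_prod]
  refine Finset.prod_le_one (fun _ _ => norm_nonneg _) fun k _ => ?_
  rw [norm_mul]
  exact mul_le_one₀ (ha k) (norm_nonneg _) ((hω k).entry_le _ _)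

lemma norm_sum_pattern_walkProd_le {N M : ℕ} (X : ℕ → Matrix (Fin N) (Fin N) ℂ) (sp : ℕ → Prop)
    (lam rho : ℕ → Fin 3) (hX : ∀ k, IsContr (X k)) (q₁ q₂ : ℕ) (hq₁ : 0 < q₁) (hq₁M : q₁ ≤ M)
    (hq₂ : 0 < q₂) (hq₂M : q₂ < M) (hsp₁ : sp q₁) (hsp₂ : sp q₂) (hspM : sp M)
    (hrho0 : rho 0 = 1) (hlam₁ : lam q₁ = 2) (hrho₂ : rho q₂ = 2) (hlamM : lam M = 0)
    (hpure₁ : ∀ k, 0 < k → k < q₁ → sp k → lam k = rho k)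
    (hpure₂ : ∀ k, q₂ < k → k < M → sp k → lam k = rho k)
    (E : Fin 3 ⊕ Fin M → Fin 3 ⊕ Fin M → Prop) :
    ‖∑ Ψ : Fin 3 ⊕ Fin M → Fin N, if HasPattern E Ψ then
      walkProd X sp lam rho (Ψ ∘ Sum.inl) (Ψ (Sum.inl (rho 0))) (Ψ ∘ Sum.inr) else 0‖ ≤
      2 ^ ((M + 3) ^ 2) * N := by
  have hcard : Fintype.card (Fin 3 ⊕ Fin M) = M + 3 := by simp [add_comm]
  rw [← hcard]
  refine norm_sum_pattern_le _ _ (fun W hW => ?_) E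
  have hw := norm_sum_walkProd_le (M := M) X sp lam rho hX q₁ q₂ hq₁ hq₁M hq₂ hq₂M hsp₁ hsp₂ hspM
    hrho0 hlam₁ hrho₂ hlamM hpure₁ hpure₂ (fun a => W (Sum.inl a)) (fun a => hW _)
    (fun k i => if hk : k < M then W (Sum.inr ⟨k, hk⟩) i else 1) (fun k i => by
      split_ifs
      · exact hW _ _
      · simp)
  rw [Fintype.card_fin] at hw
  refine le_of_eq_of_le (congrArg norm ?_) hw
  rw [← (Equiv.sumArrowEquivProdArrow (Fin 3) (Fin M) (Fin N)).symm.sum_comp,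
    Fintype.sum_prod_type]
  refine Finset.sum_congr rfl fun σ _ => ?_
  rw [Finset.mul_sum]
  refine Finset.sum_congr rfl fun Φ _ => ?_
  rw [Fintype.prod_sum_type, ← mul_assoc]
  refine congr_arg₂ _ (congr_arg₂ _ rfl ?_) rfl
  refine Finset.prod_congr rfl fun k _ => ?_
  simp [Equiv.sumArrowEquivProdArrow]

lemma norm_integral_closed_walk_le (Y : ℕ → Ω → Matrix (Fin N) (Fin N) ℂ)
    (hYm : ∀ k, EntriesMeasurable (Y k)) (hY : ∀ᵐ ω ∂μ, ∀ k, IsContr (Y k ω))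
    (c : ℕ → Fin L)
    (hsym : ∀ (τ : Fin L → Equiv.Perm (Fin N)) (ψ ψ' : Fin M → Fin N),
      ∫ ω, ∏ k : Fin M, Y k ω (τ (c k) (ψ k)) (τ (c k) (ψ' k)) ∂μ =
        ∫ ω, ∏ k : Fin M, Y k ω (ψ k) (ψ' k) ∂μ)
    (f : ℕ → Fin N) (hfM : f M = f 0) (ℓ : Fin L) (q₁ q₂ : ℕ) (hq₁ : 0 < q₁) (hq₁M : q₁ ≤ M)
    (hq₂ : 0 < q₂) (hq₂M : q₂ < M) (hne : f q₁ ≠ f 0) (heq : f q₂ = f q₁)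
    (hc0 : c 0 ≠ ℓ) (hcM : c (M - 1) = ℓ)
    (hpure₁ : ∀ k, 0 < k → k < q₁ → f k = f 0 → c (k - 1) = c k)
    (hpure₂ : ∀ k, q₂ < k → k < M → f k = f 0 → c (k - 1) = c k)
    (hN : 2 * (M + 3) ≤ N) :
    ‖∫ ω, ∏ k : Fin M, Y k ω (f k) (f (k + 1)) ∂μ‖ *
      N ^ (Finset.univ.image fun k : Fin M => f k).card ≤ 2 ^ ((M + 3) ^ 2 + (M + 3)) := by
  set v := f 0 with hv
  set z := f q₁ with hz
  obtain ⟨y, hy⟩ : ∃ y, ∀ k ≤ M, f k ≠ y := by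
    by_contra! hcon
    have : (Finset.univ : Finset (Fin N)) ⊆ (Finset.range (M + 1)).image f := by
      intro y _
      obtain ⟨k, hk, hk'⟩ := hcon y
      exact Finset.mem_image.2 ⟨k, Finset.mem_range.2 (by omega), hk'⟩
    have := (Finset.card_le_card this).trans Finset.card_image_le
    simp at this
    omega
  have hyv : v ≠ y := hy 0 (by omega)
  have hyz : z ≠ y := hy q₁ hq₁M
  let sp : ℕ → Prop := fun k => f k = v ∨ f k = z
  let lam : ℕ → Fin 3 := fun k => if f k = z then 2 else if c (k - 1) = ℓ then 0 else 1
  let rho : ℕ → Fin 3 := fun k => if f k = z then 2 else if c k = ℓ then 0 else 1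
  let base : Fin 3 → Fin N := ![v, y, z]
  let Φ₀ : Fin M → Fin N := fun k => if sp (k + 1) then base (lam (k + 1)) else f (k + 1)
  let Ψ₀ : Fin 3 ⊕ Fin M → Fin N := Sum.elim base Φ₀
  let F : Ω → (Fin 3 ⊕ Fin M → Fin N) → ℂ := fun ω Ψ =>
    walkProd (fun k => Y k ω) sp lam rho (Ψ ∘ Sum.inl) (Ψ (Sum.inl (rho 0))) (Ψ ∘ Sum.inr)
  set I := ∫ ω, ∏ k : Fin M, Y k ω (f k) (f (k + 1)) ∂μ with hI
  have hsplit : ∀ (k : ℕ), k ≤ M → ∀ cc : Fin L,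
      (if sp k then base (if f k = z then 2 else if cc = ℓ then 0 else 1) else f k) =
        (if cc = ℓ then (1 : Equiv.Perm (Fin N)) else Equiv.swap v y) (f k) := by
    intro k hk cc
    by_cases h1 : f k = z
    · have h2 : sp k := Or.inr h1
      rw [if_pos h2, if_pos h1, h1]
      split_ifs
      · rfl
      · exact (Equiv.swap_apply_of_ne_of_ne hne hyz).symm
    · by_cases h2 : f k = v
      · have h3 : sp k := Or.inl h2
        rw [if_pos h3, if_neg h1, h2]
        split_ifs
        · rfl
        · exact (Equiv.swap_apply_left v y).symm
      · have h3 : ¬ sp k := fun h => h.elim h2 h1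
        rw [if_neg h3]
        split_ifs
        · rfl
        · exact (Equiv.swap_apply_of_ne_of_ne h2 (hy k hk)).symm
  have hEq : ∀ Ψ, HasPattern (fun a b => Ψ₀ a = Ψ₀ b) Ψ → ∫ ω, F ω Ψ ∂μ = I := by
    intro Ψ hΨ
    obtain ⟨τ, hτ⟩ := exists_perm_comp_eq Ψ Ψ₀ hΨ
    rw [hI, ← hsym (fun cc => if cc = ℓ then 1 else Equiv.swap v y),
      ← hsym (fun _ => τ)]
    congr 1
    ext ω
    have e1 : Ψ ∘ Sum.inl = τ ∘ base := funext fun a => hτ (Sum.inl a)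
    have e2 : Ψ ∘ Sum.inr = τ ∘ Φ₀ := funext fun a => hτ (Sum.inr a)
    have e3 : Ψ (Sum.inl (rho 0)) = τ (base (rho 0)) := hτ _
    simp only [F, e1, e2, e3, walkProd, walkDep_comp]
    refine Finset.prod_congr rfl fun k _ => ?_
    have hcons : (if sp (k + 1) then (if (τ ∘ Φ₀) k = (τ ∘ base) (lam (k + 1)) then (1 : ℂ) else 0)
        else 1) = 1 := by
      by_cases h : sp (k + 1)
      · simp [h, Φ₀]
      · simp [h]
    rw [hcons, one_mul]
    refine congr_arg₂ (Y k ω) ?_ ?_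
    · have hdep : walkDep sp rho base (base (rho 0)) Φ₀ k.castSucc =
          if sp k then base (rho k) else f k := by
        obtain ⟨k, hk⟩ := k
        obtain _ | k := k
        · have h0 : sp 0 := Or.inl rfl
          simp [walkDep, h0]
        · have : (⟨k + 1, hk⟩ : Fin M).castSucc = Fin.succ ⟨k, by omega⟩ := rfl
          rw [this]
          simp only [walkDep, Fin.cons_succ, Φ₀]
          by_cases h : sp (k + 1) <;> simp [h]
      rw [hdep]
      exact congrArg τ (hsplit k k.is_lt.le (c k))
    · exact congrArg τ (hsplit (k + 1) k.is_lt (c k))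
  have h_int : ∀ Ψ, Integrable (fun ω => F ω Ψ) μ := fun Ψ =>
    integrable_prod_entries Y hYm hY _ _ _ fun k => by split_ifs <;> simp
  have hbound : ∀ᵐ ω ∂μ, ‖∑ Ψ, if HasPattern (fun a b => Ψ₀ a = Ψ₀ b) Ψ then F ω Ψ else 0‖ ≤
      2 ^ ((M + 3) ^ 2) * N := by
    filter_upwards [hY] with ω hω
    refine norm_sum_pattern_walkProd_le (fun k => Y k ω) sp lam rho hω q₁ q₂ hq₁ hq₁M hq₂ hq₂M
      (Or.inr rfl) (Or.inr heq) (Or.inl hfM) (by simp only [rho, ← hv, if_neg hne.symm, if_neg hc0]) (if_pos rfl)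
      (by simp [rho, heq]) (by simp only [lam, hfM, if_neg hne.symm, if_pos hcM]) ?_ ?_ fun a b => Ψ₀ a = Ψ₀ b
    · intro k h1 h2 h3
      by_cases h4 : f k = z
      · simp [lam, rho, h4]
      · simp [lam, rho, hpure₁ k h1 h2 (h3.resolve_right h4)]
    · intro k h1 h2 h3
      by_cases h4 : f k = z
      · simp [lam, rho, h4]
      · simp [lam, rho, hpure₂ k h1 h2 (h3.resolve_right h4)]
  set P := Finset.univ.filter fun Ψ : Fin 3 ⊕ Fin M → Fin N => HasPattern (fun a b => Ψ₀ a = Ψ₀ b) Ψ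
    with hP
  have hmain : P.card * ‖I‖ ≤ 2 ^ ((M + 3) ^ 2) * N := by
    have h1 := norm_integral_le_of_norm_le_const hbound
    simp only [← Finset.sum_filter] at h1
    rw [integral_finsetSum _ fun Ψ _ => h_int Ψ, Finset.sum_congr rfl fun Ψ hΨ =>
      hEq Ψ (Finset.mem_filter.1 hΨ).2, Finset.sum_const, nsmul_eq_mul, norm_mul] at h1
    simpa using h1
  have hcount : N ^ ((Finset.univ.image fun k : Fin M => f k).card + 1) ≤
      2 ^ (M + 3) * P.card := by
    have h1 := pow_card_le_card_pattern Ψ₀ (by simpa [add_comm] using hN)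
    have hcard : Fintype.card (Fin 3 ⊕ Fin M) = M + 3 := by simp [add_comm]
    rw [hcard] at h1
    refine le_trans (Nat.pow_le_pow_right (by omega) ?_) h1
    have hy' : y ∉ Finset.univ.image fun k : Fin M => f k := by
      simp only [Finset.mem_image, Finset.mem_univ, true_and, not_exists]
      exact fun k => hy k (by omega)
    rw [← Finset.card_insert_of_notMem hy']
    refine Finset.card_le_card ?_
    intro i hi
    rw [Finset.mem_image]
    rcases Finset.mem_insert.1 hi with rfl | hi
    · exact ⟨Sum.inl 1, Finset.mem_univ _, rfl⟩
    obtain ⟨k, -, rfl⟩ := Finset.mem_image.1 hi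
    by_cases h1 : f k = v
    · exact ⟨Sum.inl 0, Finset.mem_univ _, h1.symm⟩
    by_cases h2 : f k = z
    · exact ⟨Sum.inl 2, Finset.mem_univ _, h2.symm⟩
    obtain ⟨k, hk⟩ := k
    obtain _ | k := k
    · exact absurd rfl h1
    refine ⟨Sum.inr ⟨k, by omega⟩, Finset.mem_univ _, ?_⟩
    have h3 : ¬ sp (k + 1) := fun h => h.elim h1 h2
    simp [Ψ₀, Φ₀, h3]
  have hcount' : (N : ℝ) ^ ((Finset.univ.image fun k : Fin M => f k).card + 1) ≤
      2 ^ (M + 3) * P.card := by exact_mod_cast hcount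
  have hNpos : (0 : ℝ) < N := by
    have : 0 < N := by omega
    exact_mod_cast this
  refine le_of_mul_le_mul_right ?_ hNpos
  calc ‖I‖ * N ^ (Finset.univ.image fun k : Fin M => f k).card * N
      = ‖I‖ * N ^ ((Finset.univ.image fun k : Fin M => f k).card + 1) := by ring
    _ ≤ ‖I‖ * (2 ^ (M + 3) * P.card) := by gcongr
    _ = 2 ^ (M + 3) * (P.card * ‖I‖) := by ring
    _ ≤ 2 ^ (M + 3) * (2 ^ ((M + 3) ^ 2) * N) := by gcongr
    _ = _ := by rw [pow_add]; ring

end ClosedWalk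

/-! ### Joint symmetry of independent permutation invariant families -/

section Symmetry

variable {K : Type} {N : ℕ}

/-- The entries of a letter: the identity matrix, or a rescaled member of the family `B`, or its
entrywise conjugate. -/
def letter (s : ℂ) (κ : Option K × Bool) (B : K → Fin N → Fin N → ℂ) :
    Matrix (Fin N) (Fin N) ℂ :=
  Matrix.of fun i j => match κ.1 with
    | none => if i = j then 1 else 0
    | some k => if κ.2 then star (s * B k i j) else s * B k i j

lemma letter_perm (s : ℂ) (κ : Option K × Bool) (B : K → Fin N → Fin N → ℂ)
    (τ : Equiv.Perm (Fin N)) (i j : Fin N) :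
    letter s κ B (τ i) (τ j) = letter s κ (fun k i j => B k (τ i) (τ j)) i j := by
  obtain ⟨_ | k, b⟩ := κ <;> simp [letter]

lemma measurable_letter (s : ℂ) (κ : Option K × Bool) (i j : Fin N) :
    Measurable fun B : K → Fin N → Fin N → ℂ => letter s κ B i j := by
  have hev : ∀ k, Measurable fun B : K → Fin N → Fin N → ℂ => s * B k i j := fun k =>
    measurable_const.mul
      ((measurable_pi_apply j).comp ((measurable_pi_apply i).comp (measurable_pi_apply k)))
  obtain ⟨_ | k, _ | _⟩ := κ
  · simp [letter]
  · simp [letter]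
  · simpa [letter] using hev k
  · exact continuous_star.measurable.comp (hev k)

variable {Ω : Type} [MeasurableSpace Ω] {μ : Measure Ω} {L M : ℕ}

lemma comap_family_le_famSigma (A : K → Ω → Matrix (Fin N) (Fin N) ℂ) :
    MeasurableSpace.comap (fun ω => fun (k : K) (i j : Fin N) => A k ω i j) inferInstance ≤
      famSigma A := by
  simp only [MeasurableSpace.pi, MeasurableSpace.comap_iSup, MeasurableSpace.comap_comp]
  exact iSup_mono fun k => iSup_mono fun i => iSup_mono fun j => le_rfl

lemma integral_prod_letter_perm (A : Fin L → K → Ω → Matrix (Fin N) (Fin N) ℂ)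
    (hmeas : ∀ ℓ k, EntriesMeasurable (A ℓ k))
    (hindep : iIndep (fun ℓ => famSigma (A ℓ)) μ) (hperm : ∀ ℓ, PermInvariant μ (A ℓ))
    (s : ℂ) (c : ℕ → Fin L) (κ : ℕ → Option K × Bool) (τ : Fin L → Equiv.Perm (Fin N))
    (ψ ψ' : Fin M → Fin N) :
    ∫ ω, ∏ k : Fin M, letter s (κ k) (fun k' => A (c k) k' ω) (τ (c k) (ψ k)) (τ (c k) (ψ' k)) ∂μ =
      ∫ ω, ∏ k : Fin M, letter s (κ k) (fun k' => A (c k) k' ω) (ψ k) (ψ' k) ∂μ := by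
  let X : (ℓ : Fin L) → Ω → K → Fin N → Fin N → ℂ := fun ℓ ω k i j => A ℓ k ω i j
  have hXm : ∀ ℓ, Measurable (X ℓ) := fun ℓ => measurable_pi_lambda _ fun k =>
    measurable_pi_lambda _ fun i => measurable_pi_lambda _ fun j => hmeas ℓ k i j
  have hXperm : ∀ ℓ (σ : Equiv.Perm (Fin N)),
      Measurable fun ω => fun (k : K) (i j : Fin N) => A ℓ k ω (σ i) (σ j) := fun ℓ σ =>
    measurable_pi_lambda _ fun k => measurable_pi_lambda _ fun i =>
      measurable_pi_lambda _ fun j => hmeas ℓ k _ _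
  have hX : iIndepFun X μ := by
    rw [iIndepFun_iff_iIndep]
    refine iIndep_of_iIndep_of_le hindep fun ℓ => ?_
    exact comap_family_le_famSigma (A ℓ)
  let H : (Fin M → Fin N) → (Fin M → Fin N) → Fin L → (K → Fin N → Fin N → ℂ) → ℂ :=
    fun ψ ψ' ℓ B => ∏ k ∈ Finset.univ.filter (fun k : Fin M => c k = ℓ), letter s (κ k) B (ψ k) (ψ' k)
  have hH : ∀ ψ ψ' ℓ, Measurable (H ψ ψ' ℓ) := fun ψ ψ' ℓ =>
    Finset.measurable_prod _ fun k _ => measurable_letter _ _ _ _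
  have hsplit : ∀ ψ ψ' : Fin M → Fin N,
      ∫ ω, ∏ k : Fin M, letter s (κ k) (fun k' => A (c k) k' ω) (ψ k) (ψ' k) ∂μ =
        ∏ ℓ, ∫ ω, H ψ ψ' ℓ (X ℓ ω) ∂μ := by
    intro ψ ψ'
    rw [← hX.integral_fun_prod_comp (fun ℓ => (hXm ℓ).aemeasurable)
      fun ℓ => (hH ψ ψ' ℓ).aestronglyMeasurable]
    congr 1
    ext ω
    rw [← Finset.prod_fiberwise (s := Finset.univ) (g := fun k : Fin M => c k)]
    refine Finset.prod_congr rfl fun ℓ _ => ?_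
    refine Finset.prod_congr (Finset.filter_congr_decidable _ _ _) fun k hk => ?_
    rw [(Finset.mem_filter.1 hk).2]
  rw [hsplit, hsplit]
  refine Finset.prod_congr rfl fun ℓ _ => ?_
  have e1 : ∀ ω, H (fun k => τ (c k) (ψ k)) (fun k => τ (c k) (ψ' k)) ℓ (X ℓ ω) =
      H ψ ψ' ℓ (fun k i j => A ℓ k ω (τ ℓ i) (τ ℓ j)) := by
    intro ω
    refine Finset.prod_congr rfl fun k hk => ?_
    beta_reduce
    rw [(Finset.mem_filter.1 hk).2, letter_perm]
  simp only [e1]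
  rw [← integral_map (φ := fun ω => fun (k : K) (i j : Fin N) => A ℓ k ω (τ ℓ i) (τ ℓ j))
    (hXperm ℓ (τ ℓ)).aemeasurable (hH ψ ψ' ℓ).aestronglyMeasurable, hperm ℓ (τ ℓ),
    integral_map (hXm ℓ).aemeasurable (hH ψ ψ' ℓ).aestronglyMeasurable]

end Symmetry

/-! ### Operator norm bounds -/

section OpNorm

variable {N : ℕ}

lemma matOpNorm_nonneg (A : Matrix (Fin N) (Fin N) ℂ) : 0 ≤ matOpNorm A := norm_nonneg _

lemma matOpNorm_mul_le (A B : Matrix (Fin N) (Fin N) ℂ) :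
    matOpNorm (A * B) ≤ matOpNorm A * matOpNorm B := by
  unfold matOpNorm
  rw [map_mul]
  exact norm_mul_le _ _

lemma matOpNorm_one_le : matOpNorm (1 : Matrix (Fin N) (Fin N) ℂ) ≤ 1 := by
  unfold matOpNorm
  rw [map_one]
  exact ContinuousLinearMap.norm_id_le

lemma matOpNorm_sub_le (A B : Matrix (Fin N) (Fin N) ℂ) :
    matOpNorm (A - B) ≤ matOpNorm A + matOpNorm B := by
  unfold matOpNorm
  rw [map_sub]
  exact norm_sub_le _ _

lemma matOpNorm_list_prod_le {r : ℝ} (l : List (Matrix (Fin N) (Fin N) ℂ))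
    (h : ∀ A ∈ l, matOpNorm A ≤ r) : matOpNorm l.prod ≤ r ^ l.length := by
  induction l with
  | nil => simpa using matOpNorm_one_le
  | cons A l ih =>
    have hA := h A (by simp)
    rw [List.prod_cons, List.length_cons, pow_succ']
    exact (matOpNorm_mul_le _ _).trans (mul_le_mul hA (ih fun B hB => h B (by simp [hB]))
      (matOpNorm_nonneg _) ((matOpNorm_nonneg _).trans hA))

lemma norm_sum_mul_entries_le (A : Matrix (Fin N) (Fin N) ℂ) (w u : Fin N → ℂ) :
    ‖∑ i, ∑ j, w i * A i j * u j‖ ^ 2 ≤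
      matOpNorm A ^ 2 * ((∑ i, ‖w i‖ ^ 2) * ∑ j, ‖u j‖ ^ 2) := by
  have e : ∑ i, ∑ j, w i * A i j * u j = ∑ i, w i * (A *ᵥ u) i := by
    simp [Matrix.mulVec, dotProduct, Finset.mul_sum, mul_assoc]
  have hA : ∑ i, ‖(A *ᵥ u) i‖ ^ 2 ≤ matOpNorm A ^ 2 * ∑ j, ‖u j‖ ^ 2 := by
    have h := (Matrix.toEuclideanCLM (𝕜 := ℂ) A).le_opNorm (WithLp.toLp 2 u)
    have h2 := pow_le_pow_left₀ (norm_nonneg _) h 2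
    rw [mul_pow, EuclideanSpace.norm_sq_eq, EuclideanSpace.norm_sq_eq] at h2
    simpa [matOpNorm] using h2
  rw [e]
  calc _ ≤ (∑ i, ‖w i‖ ^ 2) * ∑ i, ‖(A *ᵥ u) i‖ ^ 2 := norm_sum_mul_sq_le _ _
    _ ≤ (∑ i, ‖w i‖ ^ 2) * (matOpNorm A ^ 2 * ∑ j, ‖u j‖ ^ 2) := by gcongr
    _ = _ := by ring

lemma isContr_of_matOpNorm_le {A : Matrix (Fin N) (Fin N) ℂ} {C : ℝ} (hC : 1 ≤ C)
    (h : matOpNorm A ≤ C) : IsContr (Matrix.of fun i j => (C : ℂ)⁻¹ * A i j) := by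
  intro w u
  have e : ∑ i, ∑ j, w i * (Matrix.of fun i j => (C : ℂ)⁻¹ * A i j) i j * u j =
      (C : ℂ)⁻¹ * ∑ i, ∑ j, w i * A i j * u j := by
    simp only [Finset.mul_sum, Matrix.of_apply]
    refine Finset.sum_congr rfl fun i _ => Finset.sum_congr rfl fun j _ => ?_
    ring
  have hC0 : (0 : ℝ) < C := by linarith
  rw [e, norm_mul, mul_pow, norm_inv, Complex.norm_real, Real.norm_of_nonneg hC0.le, inv_pow,
    inv_mul_le_iff₀ (by positivity)]
  refine (norm_sum_mul_entries_le A w u).trans ?_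
  gcongr
  exact matOpNorm_nonneg _

lemma norm_entry_le_matOpNorm (A : Matrix (Fin N) (Fin N) ℂ) (i j : Fin N) :
    ‖A i j‖ ≤ matOpNorm A := by
  have h := norm_sum_mul_entries_le A (Pi.single i 1) (Pi.single j 1)
  have e : ∀ i : Fin N, ∑ k, ‖(Pi.single i 1 : Fin N → ℂ) k‖ ^ 2 = 1 := by
    intro i
    rw [Finset.sum_eq_single i] <;> simp +contextual
  rw [e, e] at h
  simp only [Pi.single_apply, ite_mul, one_mul, zero_mul, mul_ite, mul_one, mul_zero,
    Finset.sum_ite_eq', Finset.mem_univ, if_true] at h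
  exact le_of_sq_le_sq h (matOpNorm_nonneg _)

lemma matOpNorm_dproj_le (A : Matrix (Fin N) (Fin N) ℂ) : matOpNorm (dproj A) ≤ matOpNorm A := by
  refine ContinuousLinearMap.opNorm_le_bound _ (matOpNorm_nonneg _) fun u => ?_
  refine le_of_sq_le_sq ?_ (mul_nonneg (matOpNorm_nonneg _) (norm_nonneg _))
  rw [mul_pow, EuclideanSpace.norm_sq_eq, EuclideanSpace.norm_sq_eq, Finset.mul_sum]
  refine Finset.sum_le_sum fun i _ => ?_
  have e : (Matrix.toEuclideanCLM (𝕜 := ℂ) (dproj A) u) i = A i i * u i := by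
    simp [dproj, Matrix.mulVec, dotProduct]
  rw [e, norm_mul, mul_pow]
  gcongr
  exact norm_entry_le_matOpNorm _ _ _

lemma matOpNorm_monomialEval_le {K : Type} {A : K → Matrix (Fin N) (Fin N) ℂ} {dd : ℕ}
    {kk : ℕ → K} {D : ℕ → Matrix (Fin N) (Fin N) ℂ} {C C' : ℝ} (hC : 0 ≤ C)
    (hA : ∀ k, matOpNorm (A k) ≤ C) (hD : ∀ j, matOpNorm (D j) ≤ C') :
    matOpNorm (monomialEval A dd kk D) ≤ C' * (C * C') ^ dd := by
  have hC' : 0 ≤ C' := (matOpNorm_nonneg _).trans (hD 0)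
  refine (matOpNorm_mul_le _ _).trans (mul_le_mul (hD 0) ?_ (matOpNorm_nonneg _) hC')
  refine (matOpNorm_list_prod_le (r := C * C') _ ?_).trans (by simp)
  intro B hB
  obtain ⟨j, rfl⟩ := List.mem_ofFn.1 hB
  exact (matOpNorm_mul_le _ _).trans (mul_le_mul (hA _) (hD _) (matOpNorm_nonneg _) hC)

lemma matOpNorm_centeredProd_le {n : ℕ} {M : Fin n → Matrix (Fin N) (Fin N) ℂ} {r : ℝ}
    (hM : ∀ i, matOpNorm (M i) ≤ r) : matOpNorm (centeredProd M) ≤ (2 * r) ^ n := by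
  refine (matOpNorm_list_prod_le (r := 2 * r) _ ?_).trans (by simp)
  intro B hB
  obtain ⟨j, rfl⟩ := List.mem_ofFn.1 hB
  refine (matOpNorm_sub_le _ _).trans ?_
  linarith [hM j, matOpNorm_dproj_le (M j)]

lemma isContr_letter {K : Type} {C : ℝ} (hC : 1 ≤ C) (κ : Option K × Bool)
    {B : K → Matrix (Fin N) (Fin N) ℂ} (hB : ∀ k, matOpNorm (B k) ≤ C) :
    IsContr (letter (C : ℂ)⁻¹ κ B) := by
  have h1 : ∀ b, IsContr (letter (C : ℂ)⁻¹ ((none : Option K), b) (fun k i j => B k i j)) := by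
    intro b
    convert IsContr.one (ι := Fin N)
    ext i j
    simp [letter, Matrix.one_apply]
  obtain ⟨_ | k, _ | _⟩ := κ
  · exact h1 _
  · exact h1 _
  · exact isContr_of_matOpNorm_le hC (hB k)
  · exact (isContr_of_matOpNorm_le hC (hB k)).map_star

end OpNorm

/-! ### Traces of powers of diagonal projections -/

section DiagonalTrace

variable {N : ℕ}

lemma dproj_eq_diagonal (A : Matrix (Fin N) (Fin N) ℂ) :
    dproj A = Matrix.diagonal fun i => A i i := by
  ext i j
  by_cases h : i = j
  · subst h; simp [dproj]
  · simp [dproj, h]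

lemma trace_dproj_mul_map_star (A : Matrix (Fin N) (Fin N) ℂ) :
    Matrix.trace (dproj A * (dproj A).map star) = ((∑ i, ‖A i i‖ ^ 2 : ℝ) : ℂ) := by
  have e : (dproj A).map star = Matrix.diagonal fun i => star (A i i) := by
    rw [dproj_eq_diagonal, Matrix.diagonal_map (star_zero _)]
  rw [e, dproj_eq_diagonal, Matrix.diagonal_mul_diagonal, Matrix.trace_diagonal]
  push_cast
  refine Finset.sum_congr rfl fun i _ => ?_
  exact Complex.mul_conj' _

lemma norm_trace_dproj_pow_le {A : Matrix (Fin N) (Fin N) ℂ} {r : ℝ} (hr : matOpNorm A ≤ r)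
    (p : ℕ) :
    ‖Matrix.trace ((dproj A * (dproj A)ᴴ) ^ (p + 1))‖ ≤ (r ^ 2) ^ p * ∑ i, ‖A i i‖ ^ 2 := by
  rw [dproj_eq_diagonal, Matrix.diagonal_conjTranspose, Matrix.diagonal_mul_diagonal,
    Matrix.diagonal_pow, Matrix.trace_diagonal, Finset.mul_sum]
  refine (norm_sum_le _ _).trans (Finset.sum_le_sum fun i _ => ?_)
  have h : ‖A i i‖ ≤ r := (norm_entry_le_matOpNorm _ _ _).trans hr
  simp only [Pi.pow_apply, Pi.star_apply, norm_pow, norm_mul, norm_star]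
  rw [← sq, pow_succ]
  gcongr

end DiagonalTrace

/-! ### Closed walks whose first half is centered -/

section PeriodicWalk

lemma prod_range_add_of_periodic {α : Type} [CommMonoid α] {G : ℕ → α} {M : ℕ}
    (hG : ∀ k, G (k + M) = G k) (s : ℕ) :
    ∏ k ∈ Finset.range M, G (s + k) = ∏ k ∈ Finset.range M, G k := by
  induction s with
  | zero => simp
  | succ s ih =>
    rw [← ih]
    cases M with
    | zero => simp
    | succ M =>
      rw [Finset.prod_range_succ, Finset.prod_range_succ']
      refine congr_arg₂ _ (Finset.prod_congr rfl fun k _ => ?_) ?_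
      · congr 1; ring
      · rw [← hG (s + 0)]; congr 1; ring

lemma image_add_of_periodic {α : Type} [DecidableEq α] {f : ℕ → α} {M : ℕ} (hM : 0 < M)
    (hf : ∀ k, f (k + M) = f k) (s : ℕ) :
    (Finset.univ.image fun k : Fin M => f (s + k)) = Finset.univ.image fun k : Fin M => f k := by
  have hmod : ∀ k, f (k % M) = f k := fun k => Function.Periodic.map_mod_nat hf k
  ext x
  simp only [Finset.mem_image, Finset.mem_univ, true_and]
  constructor
  · rintro ⟨k, rfl⟩
    exact ⟨⟨(s + k) % M, Nat.mod_lt _ hM⟩, hmod _⟩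
  · rintro ⟨k, rfl⟩
    refine ⟨⟨(k + (M - s % M)) % M, Nat.mod_lt _ hM⟩, ?_⟩
    have hs := Nat.mod_lt s hM
    rw [← hmod (s + _), ← hmod k]
    refine congr_arg f ?_
    simp only [Nat.add_mod_mod]
    have e : s + (k + (M - s % M)) = k + M * (s / M + 1) := by
      have := Nat.mod_add_div s M
      rw [mul_add, mul_one]
      omega
    rw [e, Nat.add_mul_mod_self_left]

lemma pred_div_eq_div {d k : ℕ} (h : ¬ d ∣ k) : (k - 1) / d = k / d := by
  cases k with
  | zero => simp at h
  | succ k => rw [Nat.succ_div, if_neg h]; simp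

variable {Ω : Type} [MeasurableSpace Ω] {μ : Measure Ω} [IsProbabilityMeasure μ] {N L : ℕ}

lemma norm_integral_centered_walk_le {n d M : ℕ} (hd : 0 < d) (hn : 2 ≤ n) (hM : M = 2 * (n * d))
    (Y : ℕ → Ω → Matrix (Fin N) (Fin N) ℂ) (hYm : ∀ k, EntriesMeasurable (Y k))
    (hY : ∀ᵐ ω ∂μ, ∀ k, IsContr (Y k ω)) (hYper : ∀ k, Y (k + M) = Y k)
    (c : ℕ → Fin L) (ℓ : ℕ → Fin L) (hc : ∀ k, c k = ℓ (k / d % n))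
    (hℓ : ∀ a, a + 1 < n → ℓ a ≠ ℓ (a + 1))
    (hsym : ∀ (s : ℕ) (τ : Fin L → Equiv.Perm (Fin N)) (ψ ψ' : Fin M → Fin N),
      ∫ ω, ∏ k : Fin M, Y (s + k) ω (τ (c (s + k)) (ψ k)) (τ (c (s + k)) (ψ' k)) ∂μ =
        ∫ ω, ∏ k : Fin M, Y (s + k) ω (ψ k) (ψ' k) ∂μ)
    (f : ℕ → Fin N) (hf : ∀ k, f (k + M) = f k) (hclosed : f 0 = f (n * d))
    (hcent : ∀ a < n, f (a * d) ≠ f ((a + 1) * d)) (hN : 2 * (M + 3) ≤ N) :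
    ‖∫ ω, ∏ k ∈ Finset.range M, Y k ω (f k) (f (k + 1)) ∂μ‖ *
      N ^ (Finset.univ.image fun k : Fin M => f k).card ≤ 2 ^ ((M + 3) ^ 2 + (M + 3)) := by
  have hex : ∃ m, 0 < m ∧ ∃ a, a + m ≤ n ∧ f (a * d) = f ((a + m) * d) :=
    ⟨n, by omega, 0, by omega, by simpa using hclosed⟩
  obtain ⟨hm0, a, ham, hfa⟩ := Nat.find_spec hex
  have hmin : ∀ m', 0 < m' → m' < Nat.find hex → ∀ a', a' + m' ≤ n →
      f (a' * d) ≠ f ((a' + m') * d) := fun m' h0 h1 a' h2 h3 =>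
    Nat.find_min hex h1 ⟨h0, a', h2, h3⟩
  generalize Nat.find hex = m at hm0 ham hfa hmin
  have hm2 : 2 ≤ m := by
    by_contra h
    obtain rfl : m = 1 := by omega
    exact hcent a (by omega) hfa
  obtain ⟨m, rfl⟩ : ∃ m', m = m' + 2 := ⟨m - 2, by omega⟩
  have hndd : d * 2 ≤ n * d := by rw [mul_comm n]; exact Nat.mul_le_mul_left d hn
  have hmd : (m + 1) * d ≤ n * d := Nat.mul_le_mul_right d (by omega)
  have hdM : d ∣ M := hM ▸ (Dvd.intro_left n rfl).mul_left 2
  have hM0 : 0 < M := by omega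
  have hcd : ∀ j i, i < d → c (j * d + i) = ℓ (j % n) := by
    intro j i hi
    rw [hc, mul_comm, Nat.mul_add_div hd, Nat.div_eq_of_lt hi, add_zero]
  have hpure : ∀ k, ¬ d ∣ k → 0 < k → c ((a + 1) * d + (k - 1)) = c ((a + 1) * d + k) := by
    intro k hk hk0
    rw [hc, hc, ← Nat.add_sub_assoc hk0, pred_div_eq_div]
    rwa [Nat.dvd_add_right (Dvd.intro_left _ rfl)]
  have key := norm_integral_closed_walk_le (μ := μ) (M := M) (fun k => Y ((a + 1) * d + k))
    (fun k => hYm _) (hY.mono fun ω h k => h _) (fun k => c ((a + 1) * d + k)) (hsym _)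
    (fun k => f ((a + 1) * d + k)) (by simpa using hf ((a + 1) * d)) (ℓ a)
    ((m + 1) * d) (M - d) (by positivity) (by omega) (by omega) (by omega)
    (by
      have := hcent a (by omega)
      rw [hfa] at this
      convert this using 2 <;> ring)
    (by
      have e1 : (a + 1) * d + (M - d) = a * d + M := by rw [add_mul]; omega
      have e2 : (a + 1) * d + (m + 1) * d = (a + (m + 2)) * d := by ring
      rw [e1, e2, hf, hfa])
    (by
      have := hcd (a + 1) 0 hd
      simp only [this]
      rw [Nat.mod_eq_of_lt (by omega)]
      exact (hℓ a (by omega)).symm)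
    (by
      have e1 : (a + 1) * d + (M - 1) = (a + 2 * n) * d + (d - 1) := by
        have e2 : (a + 2 * n) * d = a * d + M := by rw [hM]; ring
        rw [e2, add_mul]; omega
      simp only [e1]
      rw [hcd _ _ (by omega), Nat.add_mul_mod_self_right, Nat.mod_eq_of_lt (by omega)])
    (by
      intro k hk0 hk hfk
      refine hpure k ?_ hk0
      rintro ⟨j, rfl⟩
      have hj : j < m + 1 := by
        rw [mul_comm] at hk
        exact lt_of_mul_lt_mul_right hk (Nat.zero_le d)
      have hj0 : 0 < j := Nat.pos_of_mul_pos_left hk0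
      refine hmin j hj0 (by omega) (a + 1) (by omega) ?_
      rw [add_zero] at hfk
      rw [← hfk]
      congr 1
      ring)
    (by
      intro k hk hkM _
      refine hpure k ?_ (by omega)
      intro hdk
      have h1 : d ∣ M - k := Nat.dvd_sub hdM hdk
      have := Nat.le_of_dvd (by omega) h1
      omega)
    hN
  rw [image_add_of_periodic hM0 hf] at key
  have hrot : ∀ ω, ∏ k ∈ Finset.range M, Y k ω (f k) (f (k + 1)) =
      ∏ k : Fin M, Y ((a + 1) * d + k) ω (f ((a + 1) * d + k)) (f ((a + 1) * d + (k + 1))) := by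
    intro ω
    rw [← prod_range_add_of_periodic (G := fun k => Y k ω (f k) (f (k + 1))) _ ((a + 1) * d),
      Finset.prod_range]
    · rfl
    · intro k
      have e : k + M + 1 = k + 1 + M := by ring
      simp only [hYper, hf, e]
  simpa only [hrot] using key

end PeriodicWalk

/-! ### Matrix entries as sums over walks -/

section PathSum

variable {N : ℕ}

/-- The walk `φ`, continued by the constant `y`. -/
def walkExt {α : Type} {m : ℕ} (φ : Fin m → α) (y : α) (k : ℕ) : α :=
  if h : k < m then φ ⟨k, h⟩ else y

/-- The weight `w` only depends on the first `m` steps of a walk. -/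
def LocalTo (m : ℕ) (w : (ℕ → Fin N) → ℂ) : Prop :=
  ∀ f g : ℕ → Fin N, (∀ k ≤ m, f k = g k) → w f = w g

/-- The entry `P x y` is the sum over walks of length `m` from `x` to `y` of the weight `w` times
the product of the entries of the `Y k` along the walk. -/
def IsPathSum (P : Matrix (Fin N) (Fin N) ℂ) (m : ℕ) (w : (ℕ → Fin N) → ℂ)
    (Y : ℕ → Matrix (Fin N) (Fin N) ℂ) : Prop :=
  ∀ x y, P x y = ∑ φ : Fin m → Fin N, if walkExt φ y 0 = x then
    w (walkExt φ y) * ∏ k ∈ Finset.range m, Y k (walkExt φ y k) (walkExt φ y (k + 1)) else 0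

lemma walkExt_append_of_le {α : Type} {m m' : ℕ} (φ : Fin m → α) (ψ : Fin m' → α) (y : α) {k : ℕ}
    (hk : k ≤ m) : walkExt (Fin.append φ ψ) y k = walkExt φ (walkExt ψ y 0) k := by
  rcases hk.lt_or_eq with h | rfl
  · have e : (⟨k, by omega⟩ : Fin (m + m')) = Fin.castAdd m' ⟨k, h⟩ := rfl
    rw [walkExt, dif_pos (by omega), walkExt, dif_pos h, e, Fin.append_left]
  · by_cases h : 0 < m'
    · have e : (⟨k, by omega⟩ : Fin (k + m')) = Fin.natAdd k ⟨0, h⟩ := rfl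
      rw [walkExt, dif_pos (by omega), walkExt, dif_neg (by omega), walkExt, dif_pos h, e,
        Fin.append_right]
    · rw [walkExt, dif_neg (by omega), walkExt, dif_neg (by omega), walkExt, dif_neg h]

lemma walkExt_append_add {α : Type} {m m' : ℕ} (φ : Fin m → α) (ψ : Fin m' → α) (y : α) (j : ℕ) :
    walkExt (Fin.append φ ψ) y (m + j) = walkExt ψ y j := by
  by_cases h : j < m'
  · have e : (⟨m + j, by omega⟩ : Fin (m + m')) = Fin.natAdd m ⟨j, h⟩ := rfl
    rw [walkExt, dif_pos (by omega), walkExt, dif_pos h, e, Fin.append_right]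
  · rw [walkExt, dif_neg (by omega), walkExt, dif_neg h]

lemma walkExt_length {α : Type} {m : ℕ} (φ : Fin m → α) (y : α) : walkExt φ y m = y := by
  rw [walkExt, dif_neg (lt_irrefl m)]

namespace IsPathSum

variable {P Q : Matrix (Fin N) (Fin N) ℂ} {m m' : ℕ} {w w' : (ℕ → Fin N) → ℂ}
  {Y Y' : ℕ → Matrix (Fin N) (Fin N) ℂ}

lemma one : IsPathSum (1 : Matrix (Fin N) (Fin N) ℂ) 0 (fun _ => 1) Y := by
  intro x y
  simp [walkExt, Matrix.one_apply, eq_comm]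

lemma single (b : Fin N → ℂ) (hP : ∀ x y, P x y = b x * Y 0 x y) :
    IsPathSum P 1 (fun f => b (f 0)) Y := by
  intro x y
  rw [← (Equiv.funUnique (Fin 1) (Fin N)).symm.sum_comp]
  simp [walkExt, hP]

lemma mul (hP : IsPathSum P m w Y) (hw : LocalTo m w)
    (hQ : IsPathSum Q m' w' fun k => Y (m + k)) :
    IsPathSum (P * Q) (m + m') (fun f => w f * w' fun j => f (m + j)) Y := by
  intro x y
  rw [Matrix.mul_apply, ← (Fin.appendEquiv m m').sum_comp, Fintype.sum_prod_type]
  simp only [hP x, hQ _ y, Finset.sum_mul]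
  rw [Finset.sum_comm]
  refine Finset.sum_congr rfl fun φ _ => ?_
  simp only [Finset.mul_sum]
  rw [Finset.sum_comm]
  refine Finset.sum_congr rfl fun ψ _ => ?_
  simp only [mul_ite, mul_zero, Finset.sum_ite_eq, Finset.mem_univ, if_true]
  have e1 : ∀ k ≤ m, walkExt (Fin.appendEquiv m m' (φ, ψ)) y k = walkExt φ (walkExt ψ y 0) k :=
    fun k hk => walkExt_append_of_le φ ψ y hk
  have e2 : ∀ j, walkExt (Fin.appendEquiv m m' (φ, ψ)) y (m + j) = walkExt ψ y j :=
    walkExt_append_add φ ψ y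
  rw [e1 0 (Nat.zero_le m), hw _ _ e1, Finset.prod_range_add]
  simp only [add_assoc, e2]
  have e3 : ∏ k ∈ Finset.range m, Y k (walkExt (Fin.appendEquiv m m' (φ, ψ)) y k)
      (walkExt (Fin.appendEquiv m m' (φ, ψ)) y (k + 1)) =
      ∏ k ∈ Finset.range m, Y k (walkExt φ (walkExt ψ y 0) k)
        (walkExt φ (walkExt ψ y 0) (k + 1)) := by
    refine Finset.prod_congr rfl fun k hk => ?_
    have := Finset.mem_range.1 hk
    rw [e1 k (by omega), e1 (k + 1) (by omega)]
  rw [e3]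
  split_ifs
  · ring
  · simp

lemma congr (hP : IsPathSum P m w Y) (hw : ∀ f, w f = w' f) (hY : ∀ k < m, Y k = Y' k) :
    IsPathSum P m w' Y' := by
  intro x y
  rw [hP x y]
  refine Finset.sum_congr rfl fun φ _ => ?_
  rw [hw, Finset.prod_congr rfl fun k hk => by rw [hY k (Finset.mem_range.1 hk)]]

lemma map_star (hP : IsPathSum P m w Y) :
    IsPathSum (P.map star) m (fun f => star (w f)) fun k => (Y k).map star := by
  intro x y
  rw [Matrix.map_apply, hP x y, star_sum]
  refine Finset.sum_congr rfl fun φ _ => ?_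
  split_ifs
  · simp
  · simp

lemma dproj (hP : IsPathSum P m w Y) :
    IsPathSum (dproj P) m (fun f => (if f 0 = f m then 1 else 0) * w f) Y := by
  intro x y
  rw [_root_.dproj, Matrix.of_apply, hP x y]
  simp only [walkExt_length]
  by_cases hxy : x = y
  · rw [if_pos hxy]
    refine Finset.sum_congr rfl fun φ _ => ?_
    split_ifs with h1 h2
    · ring
    · exact absurd (h1.trans hxy) h2
    · rfl
  · rw [if_neg hxy, eq_comm]
    refine Finset.sum_eq_zero fun φ _ => ?_
    split_ifs with h1 h2
    · exact absurd (h1.symm.trans h2) hxy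
    · ring
    · rfl

lemma sub_dproj (hP : IsPathSum P m w Y) :
    IsPathSum (P - _root_.dproj P) m (fun f => (if f 0 = f m then 0 else 1) * w f) Y := by
  intro x y
  rw [Matrix.sub_apply, hP x y, hP.dproj x y, ← Finset.sum_sub_distrib]
  refine Finset.sum_congr rfl fun φ _ => ?_
  beta_reduce
  by_cases h1 : walkExt φ y 0 = x
  · rw [if_pos h1, if_pos h1, if_pos h1]
    by_cases h2 : walkExt φ y 0 = walkExt φ y m
    · rw [if_pos h2, if_pos h2]; ring
    · rw [if_neg h2, if_neg h2]; ring
  · rw [if_neg h1, if_neg h1, if_neg h1, sub_zero]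

lemma trace_eq (hP : IsPathSum P m w Y) (hm : 0 < m) :
    P.trace = ∑ φ : Fin m → Fin N, w (walkExt φ (φ ⟨0, hm⟩)) *
      ∏ k ∈ Finset.range m, Y k (walkExt φ (φ ⟨0, hm⟩) k) (walkExt φ (φ ⟨0, hm⟩) (k + 1)) := by
  have e : ∀ (φ : Fin m → Fin N) x, walkExt φ x 0 = φ ⟨0, hm⟩ := fun φ x => by
    rw [walkExt, dif_pos hm]
  simp only [Matrix.trace, Matrix.diag_apply, hP _ _, e]
  rw [Finset.sum_comm]
  simp

lemma list_prod {P : ℕ → Matrix (Fin N) (Fin N) ℂ} {d : ℕ} {w : ℕ → (ℕ → Fin N) → ℂ} (n : ℕ)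
    (hP : ∀ a < n, IsPathSum (P a) d (w a) fun k => Y (a * d + k)) (hw : ∀ a, LocalTo d (w a)) :
    IsPathSum (List.ofFn fun a : Fin n => P a).prod (n * d)
      (fun f => ∏ a ∈ Finset.range n, w a fun j => f (a * d + j)) Y := by
  induction n with
  | zero => simpa using one
  | succ n ih =>
    rw [List.ofFn_succ', List.concat_eq_append, List.prod_append, List.prod_singleton,
      Nat.succ_mul]
    refine ((ih fun a ha => hP a (by omega)).mul ?_ (hP n (by omega))).congr ?_ fun _ _ => rfl
    · intro f g h
      refine Finset.prod_congr rfl fun a ha => hw a _ _ fun k hk => h _ ?_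
      have h1 : (a + 1) * d ≤ n * d := Nat.mul_le_mul_right d (Finset.mem_range.1 ha)
      rw [add_mul] at h1
      omega
    · intro f
      rw [Finset.prod_range_succ]

end IsPathSum

end PathSum

/-! ### Counting walks by their number of vertices -/

lemma sum_inv_pow_card_insert_le {N : ℕ} (S : Finset (Fin N)) :
    ∑ a, ((N : ℝ) ^ (insert a S).card)⁻¹ ≤ (S.card + 1) * ((N : ℝ) ^ S.card)⁻¹ := by
  have h1 : ∑ a ∈ S, ((N : ℝ) ^ (insert a S).card)⁻¹ = S.card * ((N : ℝ) ^ S.card)⁻¹ := by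
    rw [Finset.sum_congr rfl fun a ha => by rw [Finset.insert_eq_of_mem ha], Finset.sum_const,
      nsmul_eq_mul]
  have h2 : ∑ a ∈ Sᶜ, ((N : ℝ) ^ (insert a S).card)⁻¹ ≤ ((N : ℝ) ^ S.card)⁻¹ := by
    rw [Finset.sum_congr rfl fun a ha => by
      rw [Finset.card_insert_of_notMem (Finset.mem_compl.1 ha)], Finset.sum_const, nsmul_eq_mul]
    rcases Nat.eq_zero_or_pos N with rfl | hN
    · have : (Sᶜ).card = 0 := Finset.card_eq_zero.2 (Finset.eq_empty_of_isEmpty _)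
      rw [this]
      simp
    have hc : ((Sᶜ).card : ℝ) ≤ N := by
      exact_mod_cast (Finset.card_le_univ _).trans_eq (Fintype.card_fin N)
    have hN' : (0 : ℝ) < N := by exact_mod_cast hN
    rw [pow_succ, mul_inv, mul_comm _ (N : ℝ)⁻¹, ← mul_assoc]
    refine mul_le_of_le_one_left (by positivity) ?_
    rw [← div_eq_mul_inv, div_le_one hN']
    exact hc
  rw [← Finset.sum_add_sum_compl S, h1]
  linarith

lemma sum_inv_pow_card_image_le (N M : ℕ) :
    ∑ φ : Fin M → Fin N, ((N : ℝ) ^ (Finset.univ.image φ).card)⁻¹ ≤ M.factorial := by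
  induction M with
  | zero => simp
  | succ M ih =>
    rw [← (Fin.consEquiv fun _ => Fin N).sum_comp, Fintype.sum_prod_type_right]
    have hcons : ∀ (φ : Fin M → Fin N) a,
        Finset.univ.image (Fin.consEquiv (fun _ => Fin N) (a, φ)) =
          insert a (Finset.univ.image φ) := by
      intro φ a
      ext x
      simp [Fin.exists_fin_succ, eq_comm]
    simp only [hcons]
    calc _ ≤ ∑ φ : Fin M → Fin N,
          ((M : ℝ) + 1) * ((N : ℝ) ^ (Finset.univ.image φ).card)⁻¹ := by
          refine Finset.sum_le_sum fun φ _ => (sum_inv_pow_card_insert_le _).trans ?_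
          have : (Finset.univ.image φ).card ≤ M :=
            Finset.card_image_le.trans_eq (Finset.card_fin M)
          gcongr
      _ ≤ _ := by
          rw [← Finset.mul_sum, Nat.factorial_succ]
          push_cast
          gcongr

/-! ### Monomials as sums over walks of a fixed length -/

section Monomial

variable {K : Type} {N L : ℕ}

/-- The diagonal coefficient in front of the letter number `j`, after padding by identities. -/
def monCoeff (C : ℝ) (dd : ℕ) (D : ℕ → Matrix (Fin N) (Fin N) ℂ) (j : ℕ) (x : Fin N) : ℂ :=
  if j < dd then C * D j x x else if j = dd then D j x x else 1

/-- The letter number `j`, after padding by identities. -/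
def monLetter (dd : ℕ) (kk : ℕ → K) (j : ℕ) : Option K :=
  if j < dd then some (kk (j + 1)) else none

lemma norm_monCoeff_le {C C' : ℝ} (hC : 1 ≤ C) (hC' : 1 ≤ C') (dd : ℕ)
    {D : ℕ → Matrix (Fin N) (Fin N) ℂ} (hD : ∀ j, matOpNorm (D j) ≤ C') (j : ℕ) (x : Fin N) :
    ‖monCoeff C dd D j x‖ ≤ C * C' := by
  have h := (norm_entry_le_matOpNorm (D j) x x).trans (hD j)
  unfold monCoeff
  split_ifs
  · rw [norm_mul, Complex.norm_real, Real.norm_of_nonneg (by linarith)]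
    gcongr
  · nlinarith
  · rw [norm_one]; nlinarith

lemma prod_ofFn_mul_eq (D X : ℕ → Matrix (Fin N) (Fin N) ℂ) (m : ℕ) :
    (List.ofFn fun j : Fin m => D j * X j).prod * D m =
      D 0 * (List.ofFn fun j : Fin m => X j * D (j + 1)).prod := by
  induction m with
  | zero => simp
  | succ m ih =>
    simp only [List.ofFn_succ', List.concat_eq_append, List.prod_append, List.prod_singleton,
      Fin.val_castSucc, Fin.val_last]
    rw [← mul_assoc, ← mul_assoc (D 0), ← ih]
    simp only [mul_assoc]

lemma monomialEval_eq_prod {C : ℝ} (hC : 1 ≤ C) (A : K → Matrix (Fin N) (Fin N) ℂ) {dd dmax : ℕ}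
    (hdd : dd ≤ dmax) (kk : ℕ → K) (D : ℕ → Matrix (Fin N) (Fin N) ℂ)
    (hD : ∀ j, (D j).IsDiag) :
    monomialEval A dd kk D = (List.ofFn fun j : Fin (dmax + 1) => Matrix.of fun x y =>
      monCoeff C dd D j x * letter (C : ℂ)⁻¹ (monLetter dd kk j, false) A x y).prod := by
  set G : ℕ → Matrix (Fin N) (Fin N) ℂ := fun j => Matrix.of fun x y =>
      monCoeff C dd D j x * letter (C : ℂ)⁻¹ (monLetter dd kk j, false) A x y with hG
  have hDd : ∀ j, D j = Matrix.diagonal fun x => D j x x := fun j => ((hD j).diagonal_diag).symm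
  have hC0 : (C : ℂ) ≠ 0 := by
    have : C ≠ 0 := by linarith
    exact_mod_cast this
  have hlt : ∀ j < dd, G j = D j * A (kk (j + 1)) := by
    intro j hj
    ext x y
    rw [hDd j, Matrix.diagonal_mul]
    simp only [hG, monCoeff, monLetter, letter, hj, if_true, Matrix.of_apply]
    simp only [Bool.false_eq_true, if_false]
    field_simp
  have heq : G dd = D dd := by
    ext x y
    rw [hDd dd]
    by_cases h : x = y <;> simp [hG, monCoeff, monLetter, letter, h]
  have hgt : ∀ j, dd < j → G j = 1 := by
    intro j hj
    ext x y
    simp [hG, monCoeff, monLetter, letter, Matrix.one_apply, hj.not_gt, hj.ne']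
  obtain ⟨e, rfl⟩ := Nat.exists_eq_add_of_le hdd
  change _ = (List.ofFn fun j : Fin (dd + e + 1) => G j).prod
  clear hdd
  induction e with
  | zero =>
    rw [List.ofFn_succ', List.concat_eq_append, List.prod_append, List.prod_singleton]
    simp only [Fin.val_castSucc, Fin.val_last, heq]
    rw [monomialEval, ← prod_ofFn_mul_eq D (fun j => A (kk (j + 1)))]
    refine congr_arg (fun l : List _ => l.prod * D dd) (congr_arg _ (funext fun j => ?_))
    exact (hlt j j.2).symm
  | succ e ih =>
    rw [List.ofFn_succ', List.concat_eq_append, List.prod_append, List.prod_singleton]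
    simp only [Fin.val_castSucc, Fin.val_last]
    rw [hgt _ (by omega), mul_one]
    exact ih

end Monomial

/-! ### The diagonal of a centered product as a sum over walks -/

section CenteredWalk

variable {K : Type} {N L n : ℕ}

lemma isPathSum_monomialEval {C : ℝ} (hC : 1 ≤ C) (A : K → Matrix (Fin N) (Fin N) ℂ)
    {dd dmax : ℕ} (hdd : dd ≤ dmax) (kk : ℕ → K) (D : ℕ → Matrix (Fin N) (Fin N) ℂ)
    (hD : ∀ j, (D j).IsDiag) :
    IsPathSum (monomialEval A dd kk D) (dmax + 1)
      (fun f => ∏ j ∈ Finset.range (dmax + 1), monCoeff C dd D j (f j))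
      fun j => letter (C : ℂ)⁻¹ (monLetter dd kk j, false) A := by
  rw [monomialEval_eq_prod hC A hdd kk D hD]
  have h := IsPathSum.list_prod (N := N) (d := 1)
    (P := fun j => Matrix.of fun x y =>
      monCoeff C dd D j x * letter (C : ℂ)⁻¹ (monLetter dd kk j, false) A x y)
    (w := fun j f => monCoeff C dd D j (f 0))
    (Y := fun j => letter (C : ℂ)⁻¹ (monLetter dd kk j, false) A) (dmax + 1)
    (fun a _ => IsPathSum.single _ fun x y => by simp)
    (fun a f g h => congr_arg (monCoeff C dd D a) (h 0 (Nat.zero_le 1)))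
  simpa using h

/-- The colour of the step number `k`. -/
def stepColour (hn : 0 < n) (ℓv : Fin n → Fin L) (d k : ℕ) : Fin L :=
  ℓv ⟨k / d % n, Nat.mod_lt _ hn⟩

/-- The letter of the step number `k`. -/
def stepLetter (hn : 0 < n) (dv : Fin n → ℕ) (kv : Fin n → ℕ → K) (d k : ℕ) : Option K :=
  monLetter (dv ⟨k / d % n, Nat.mod_lt _ hn⟩) (kv ⟨k / d % n, Nat.mod_lt _ hn⟩) (k % d)

/-- The weight of the walks that contribute to a centered monomial. -/
def blockWeight (C : ℝ) (d dd : ℕ) (D : ℕ → Matrix (Fin N) (Fin N) ℂ) (f : ℕ → Fin N) : ℂ :=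
  (if f 0 = f d then 0 else 1) * ∏ j ∈ Finset.range d, monCoeff C dd D j (f j)

lemma localTo_blockWeight (C : ℝ) (d dd : ℕ) (D : ℕ → Matrix (Fin N) (Fin N) ℂ) :
    LocalTo d (blockWeight C d dd D) := by
  intro f g h
  rw [blockWeight, blockWeight, h 0 (Nat.zero_le d), h d le_rfl,
    Finset.prod_congr rfl fun j hj => by rw [h j (Finset.mem_range.1 hj).le]]

lemma norm_blockWeight_le {C C' : ℝ} (hC : 1 ≤ C) (hC' : 1 ≤ C') (d dd : ℕ)
    {D : ℕ → Matrix (Fin N) (Fin N) ℂ} (hD : ∀ j, matOpNorm (D j) ≤ C') (f : ℕ → Fin N) :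
    ‖blockWeight C d dd D f‖ ≤ (C * C') ^ d := by
  have h1 : ‖(if f 0 = f d then 0 else 1 : ℂ)‖ ≤ 1 := by split_ifs <;> simp
  have h2 : ‖∏ j ∈ Finset.range d, monCoeff C dd D j (f j)‖ ≤ (C * C') ^ d := by
    rw [norm_prod]
    refine (Finset.prod_le_prod (fun _ _ => norm_nonneg _) fun j _ =>
      norm_monCoeff_le hC hC' _ hD j (f j)).trans ?_
    simp
  rw [blockWeight, norm_mul]
  exact (mul_le_of_le_one_left (norm_nonneg _) h1).trans h2

lemma exists_weight_centeredProd (hn : 0 < n) {C C' : ℝ} (hC : 1 ≤ C) (hC' : 1 ≤ C')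
    (ℓv : Fin n → Fin L) (dv : Fin n → ℕ) (kv : Fin n → ℕ → K)
    (D : Fin n → ℕ → Matrix (Fin N) (Fin N) ℂ) (hdiag : ∀ i j, (D i j).IsDiag) {dmax d : ℕ}
    (hd : d = dmax + 1) (hdeg : ∀ i, dv i ≤ dmax) (hD : ∀ i j, matOpNorm (D i j) ≤ C') :
    ∃ w : (ℕ → Fin N) → ℂ, LocalTo (n * d) w ∧ (∀ f, ‖w f‖ ≤ (C * C') ^ (n * d)) ∧
      (∀ f, w f ≠ 0 → f 0 = f (n * d) ∧ ∀ a < n, f (a * d) ≠ f ((a + 1) * d)) ∧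
      ∀ A : Fin L → K → Matrix (Fin N) (Fin N) ℂ,
        IsPathSum (dproj (centeredProd fun i => monomialEval (A (ℓv i)) (dv i) (kv i) (D i)))
          (n * d) w fun k => letter (C : ℂ)⁻¹ (stepLetter hn dv kv d k, false)
            (A (stepColour hn ℓv d k)) := by
  have hd0 : 0 < d := by omega
  let q : ℕ → Fin n := fun a => ⟨a % n, Nat.mod_lt _ hn⟩
  let v : ℕ → (ℕ → Fin N) → ℂ := fun a => blockWeight C d (dv (q a)) (D (q a))
  refine ⟨fun f => (if f 0 = f (n * d) then 1 else 0) *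
    ∏ a ∈ Finset.range n, v a fun j => f (a * d + j), ?_, ?_, ?_, ?_⟩
  · intro f g h
    have e : ∏ a ∈ Finset.range n, v a (fun j => f (a * d + j)) =
        ∏ a ∈ Finset.range n, v a fun j => g (a * d + j) := by
      refine Finset.prod_congr rfl fun a ha => localTo_blockWeight C d _ _ _ _ fun k hk => h _ ?_
      have h1 : (a + 1) * d ≤ n * d := Nat.mul_le_mul_right d (Finset.mem_range.1 ha)
      rw [add_mul] at h1
      omega
    simp only [h 0 (Nat.zero_le _), h (n * d) le_rfl, e]
  · intro f
    have h1 : ‖(if f 0 = f (n * d) then 1 else 0 : ℂ)‖ ≤ 1 := by split_ifs <;> simp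
    rw [norm_mul]
    refine (mul_le_of_le_one_left (norm_nonneg _) h1).trans ?_
    rw [norm_prod]
    calc ∏ a ∈ Finset.range n, ‖v a fun j => f (a * d + j)‖
        ≤ ∏ _a ∈ Finset.range n, (C * C') ^ d :=
          Finset.prod_le_prod (fun _ _ => norm_nonneg _) fun a _ => norm_blockWeight_le hC hC' d _ (hD (q a)) _
      _ = (C * C') ^ (n * d) := by
          rw [Finset.prod_const, Finset.card_range, ← pow_mul, mul_comm d]
  · intro f hf
    have h1 := left_ne_zero_of_mul hf
    have h2 := right_ne_zero_of_mul hf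
    refine ⟨by_contra fun h => h1 (if_neg h), fun a ha h => ?_⟩
    have h3 : v a (fun j => f (a * d + j)) ≠ 0 :=
      Finset.prod_ne_zero_iff.1 h2 a (Finset.mem_range.2 ha)
    refine h3 (mul_eq_zero_of_left (if_pos ?_) _)
    beta_reduce
    rw [add_zero, h, add_mul, one_mul]
  · intro A
    have hcp : centeredProd (fun i => monomialEval (A (ℓv i)) (dv i) (kv i) (D i)) =
        (List.ofFn fun a : Fin n =>
          monomialEval (A (ℓv (q a))) (dv (q a)) (kv (q a)) (D (q a)) -
            dproj (monomialEval (A (ℓv (q a))) (dv (q a)) (kv (q a)) (D (q a)))).prod := by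
      have hq : ∀ a : Fin n, q a = a := fun a => Fin.ext (Nat.mod_eq_of_lt a.2)
      simp only [centeredProd, hq]
    rw [hcp]
    refine IsPathSum.dproj (IsPathSum.list_prod (P := fun a =>
      monomialEval (A (ℓv (q a))) (dv (q a)) (kv (q a)) (D (q a)) -
        dproj (monomialEval (A (ℓv (q a))) (dv (q a)) (kv (q a)) (D (q a)))) n ?_
      fun a => localTo_blockWeight C d _ _)
    intro a _
    have h := (isPathSum_monomialEval hC (A (ℓv (q a))) (hdeg (q a)) (kv (q a)) (D (q a))
      (hdiag (q a))).sub_dproj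
    rw [← hd] at h
    refine h.congr (fun f => rfl) fun k hk => ?_
    have e1 : (a * d + k) / d = a := by
      rw [mul_comm, Nat.mul_add_div hd0, Nat.div_eq_of_lt hk, add_zero]
    have e2 : (a * d + k) % d = k := by
      rw [mul_comm, Nat.mul_add_mod, Nat.mod_eq_of_lt hk]
    simp only [stepLetter, stepColour, e1, e2, q]

end CenteredWalk

/-! ### The second moment of the diagonal of a centered product -/

section SecondMoment

variable {Ω : Type} [MeasurableSpace Ω] {μ : Measure Ω} [IsProbabilityMeasure μ] {K : Type}
  {N L n : ℕ}

lemma integral_sum_sq_centeredProd_le (A : Fin L → K → Ω → Matrix (Fin N) (Fin N) ℂ)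
    (hmeas : ∀ ℓ k, EntriesMeasurable (A ℓ k))
    (hindep : iIndep (fun ℓ => famSigma (A ℓ)) μ) (hperm : ∀ ℓ, PermInvariant μ (A ℓ))
    {C C' : ℝ} (hC : 1 ≤ C) (hC' : 1 ≤ C') (hA : ∀ᵐ ω ∂μ, ∀ ℓ k, matOpNorm (A ℓ k ω) ≤ C)
    (hn : 2 ≤ n) (ℓv : Fin n → Fin L)
    (hadj : ∀ (i : ℕ) (h1 : i + 1 < n), ℓv ⟨i, Nat.lt_of_succ_lt h1⟩ ≠ ℓv ⟨i + 1, h1⟩)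
    (dv : Fin n → ℕ) (kv : Fin n → ℕ → K)
    (D : Fin n → ℕ → Matrix (Fin N) (Fin N) ℂ) (hdiag : ∀ i j, (D i j).IsDiag) {dmax d M : ℕ}
    (hd : d = dmax + 1) (hM : M = n * d + n * d) (hdeg : ∀ i, dv i ≤ dmax)
    (hD : ∀ i j, matOpNorm (D i j) ≤ C') (hN : 2 * (M + 3) ≤ N) :
    Integrable (fun ω => ∑ x, ‖centeredProd
        (fun i => monomialEval (fun k => A (ℓv i) k ω) (dv i) (kv i) (D i)) x x‖ ^ 2) μ ∧
      ∫ ω, ∑ x, ‖centeredProd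
        (fun i => monomialEval (fun k => A (ℓv i) k ω) (dv i) (kv i) (D i)) x x‖ ^ 2 ∂μ ≤
        (C * C') ^ M * (2 ^ ((M + 3) ^ 2 + (M + 3)) * M.factorial) := by
  have hn0 : 0 < n := by omega
  have hd0 : 0 < d := by omega
  have hnd : 0 < n * d := Nat.mul_pos hn0 hd0
  have hM0 : 0 < M := by omega
  have hCC : 1 ≤ C * C' := one_le_mul_of_one_le_of_one_le hC hC'
  obtain ⟨w, hloc, hwn, hw0, hps⟩ :=
    exists_weight_centeredProd hn0 hC hC' ℓv dv kv D hdiag hd hdeg hD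
  set c : ℕ → Fin L := stepColour hn0 ℓv d with hc
  set κ : ℕ → Option K × Bool := fun k =>
    (stepLetter hn0 dv kv d k, decide (k / (n * d) % 2 = 1)) with hκ
  set Y : ℕ → Ω → Matrix (Fin N) (Fin N) ℂ := fun k ω =>
    letter (C : ℂ)⁻¹ (κ k) (fun k' => A (c k) k' ω) with hYdef
  have hper : ∀ k, (n * d + k) / d % n = k / d % n ∧ (n * d + k) % d = k % d := by
    intro k
    rw [mul_comm, Nat.mul_add_div hd0, Nat.add_mod_left, Nat.mul_add_mod]
    exact ⟨rfl, rfl⟩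
  have hcper : ∀ k, c (n * d + k) = c k := fun k => by
    simp only [hc, stepColour, hper k]
  have hlper : ∀ k, stepLetter hn0 dv kv d (n * d + k) = stepLetter hn0 dv kv d k := fun k => by
    simp only [stepLetter, hper k]
  have hYper : ∀ k, Y (k + M) = Y k := by
    intro k
    have e : k + M = n * d + (n * d + k) := by omega
    have e2 : (n * d + (n * d + k)) / (n * d) % 2 = k / (n * d) % 2 := by
      rw [Nat.add_div_left _ hnd, Nat.add_div_left _ hnd]
      omega
    simp only [hYdef, hκ, e, hcper, hlper, e2]
  have hYfirst : ∀ ω, ∀ k < n * d, letter (C : ℂ)⁻¹ (stepLetter hn0 dv kv d k, false)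
      (fun k' => A (c k) k' ω) = Y k ω := by
    intro ω k hk
    simp only [hYdef, hκ, Nat.div_eq_of_lt hk]
    rfl
  have hYsecond : ∀ ω, ∀ k < n * d, (Y k ω).map star = Y (n * d + k) ω := by
    intro ω k hk
    rw [← hYfirst ω k hk]
    have e : (n * d + k) / (n * d) = 1 := by
      rw [Nat.add_div_left _ hnd, Nat.div_eq_of_lt hk]
    simp only [hYdef, hκ, hcper, hlper, e]
    ext x y
    cases stepLetter hn0 dv kv d k <;> simp [letter, apply_ite]
  have hfam : ∀ ℓ, Measurable fun ω => fun (k : K) (i j : Fin N) => A ℓ k ω i j := fun ℓ =>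
    measurable_pi_lambda _ fun k => measurable_pi_lambda _ fun i =>
      measurable_pi_lambda _ fun j => hmeas ℓ k i j
  have hYm : ∀ k, EntriesMeasurable (Y k) := fun k i j =>
    (measurable_letter _ _ i j).comp (hfam (c k))
  have hYc : ∀ᵐ ω ∂μ, ∀ k, IsContr (Y k ω) := hA.mono fun ω h k => isContr_letter hC _ (h _)
  let f : (Fin M → Fin N) → ℕ → Fin N := fun φ k => φ ⟨k % M, Nat.mod_lt _ hM0⟩
  have hfper : ∀ φ k, f φ (k + M) = f φ k := fun φ k => by simp [f]
  have hfext : ∀ φ, ∀ k ≤ M, walkExt φ (φ ⟨0, hM0⟩) k = f φ k := by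
    intro φ k hk
    rcases hk.lt_or_eq with h | rfl
    · simp only [walkExt, dif_pos h, f, Nat.mod_eq_of_lt h]
    · simp [walkExt, f]
  let W : (ℕ → Fin N) → ℂ := fun f => w f * star (w fun j => f (n * d + j))
  have hWn : ∀ f, ‖W f‖ ≤ (C * C') ^ M := by
    intro f
    rw [norm_mul, norm_star, hM, pow_add]
    exact mul_le_mul (hwn _) (hwn _) (norm_nonneg _) (by positivity)
  have hWloc : ∀ φ, W (walkExt φ (φ ⟨0, hM0⟩)) = W (f φ) := by
    intro φ
    have h1 := hloc _ _ fun k hk => hfext φ k (by omega)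
    have h2 := hloc (fun j => walkExt φ (φ ⟨0, hM0⟩) (n * d + j)) (fun j => f φ (n * d + j))
      fun k hk => hfext φ _ (by omega)
    simp only [W, h1, h2]
  set S : Ω → ℝ := fun ω => ∑ x, ‖centeredProd
    (fun i => monomialEval (fun k => A (ℓv i) k ω) (dv i) (kv i) (D i)) x x‖ ^ 2 with hS
  have hexp : ∀ ω, (S ω : ℂ) = ∑ φ : Fin M → Fin N, W (f φ) *
      ∏ k ∈ Finset.range M, Y k ω (f φ k) (f φ (k + 1)) := by
    intro ω
    have h1 := (hps fun ℓ k => A ℓ k ω).congr (fun _ => rfl) (hYfirst ω)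
    have h2 := h1.map_star.congr (fun _ => rfl) (hYsecond ω)
    have h3 := h1.mul hloc h2
    rw [← hM] at h3
    rw [hS, ← trace_dproj_mul_map_star, h3.trace_eq hM0]
    refine Finset.sum_congr rfl fun φ _ => congr_arg₂ _ (hWloc φ) ?_
    refine Finset.prod_congr rfl fun k hk => ?_
    have := Finset.mem_range.1 hk
    rw [hfext φ k (by omega), hfext φ (k + 1) (by omega)]
  have h_int : ∀ φ : Fin M → Fin N, Integrable (fun ω =>
      W (f φ) * ∏ k ∈ Finset.range M, Y k ω (f φ k) (f φ (k + 1))) μ := by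
    intro φ
    have h := integrable_prod_entries (μ := μ) (M := M) Y hYm hYc (fun k => f φ k)
      (fun k => f φ (k + 1)) (fun _ => 1) (by simp)
    simp only [one_mul] at h
    simp only [Finset.prod_range fun k => Y k _ (f φ k) (f φ (k + 1))]
    exact h.const_mul _
  have hSint : Integrable (fun ω => (S ω : ℂ)) μ := by
    simp only [hexp]
    exact integrable_finsetSum _ fun φ _ => h_int φ
  refine ⟨by simpa using hSint.re, ?_⟩
  have hterm : ∀ φ : Fin M → Fin N,
      ‖∫ ω, W (f φ) * ∏ k ∈ Finset.range M, Y k ω (f φ k) (f φ (k + 1)) ∂μ‖ ≤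
        (C * C') ^ M * (2 ^ ((M + 3) ^ 2 + (M + 3)) *
          ((N : ℝ) ^ (Finset.univ.image φ).card)⁻¹) := by
    intro φ
    rw [integral_const_mul, norm_mul]
    by_cases hw : w (f φ) = 0
    · have : W (f φ) = 0 := by simp only [W, hw, zero_mul]
      rw [this, norm_zero, zero_mul]
      positivity
    obtain ⟨hcl, hcent⟩ := hw0 _ hw
    have hN0 : (0 : ℝ) < N := by
      have : 0 < N := by omega
      exact_mod_cast this
    have key := norm_integral_centered_walk_le (μ := μ) hd0 hn (hM.trans (two_mul _).symm) Y hYm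
      hYc hYper c (fun a => ℓv ⟨a % n, Nat.mod_lt _ hn0⟩)
      (fun k => by simp only [hc, stepColour, Nat.mod_mod])
      (fun a ha => by
        have e1 : a % n = a := Nat.mod_eq_of_lt (by omega)
        have e2 : (a + 1) % n = a + 1 := Nat.mod_eq_of_lt ha
        simp only [e1, e2]
        exact hadj a ha)
      (fun s => integral_prod_letter_perm A hmeas hindep hperm _ (fun k => c (s + k))
        fun k => κ (s + k))
      (f φ) (hfper φ) hcl hcent hN
    have him : (Finset.univ.image fun k : Fin M => f φ k) = Finset.univ.image φ := by
      refine congr_arg (fun g => Finset.image g Finset.univ) (funext fun k => ?_)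
      simp only [f, Nat.mod_eq_of_lt k.2]
    rw [him] at key
    refine mul_le_mul (hWn _) ?_ (norm_nonneg _) (by positivity)
    rwa [← div_eq_mul_inv, le_div_iff₀ (by positivity)]
  calc ∫ ω, S ω ∂μ ≤ ‖((∫ ω, S ω ∂μ : ℝ) : ℂ)‖ := by
        rw [Complex.norm_real]
        exact le_abs_self _
    _ = ‖∑ φ : Fin M → Fin N,
          ∫ ω, W (f φ) * ∏ k ∈ Finset.range M, Y k ω (f φ k) (f φ (k + 1)) ∂μ‖ := by
        rw [← integral_finsetSum _ fun φ _ => h_int φ, ← integral_complex_ofReal]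
        exact congr_arg _ (integral_congr_ae (ae_of_all _ hexp))
    _ ≤ ∑ φ : Fin M → Fin N, (C * C') ^ M * (2 ^ ((M + 3) ^ 2 + (M + 3)) *
          ((N : ℝ) ^ (Finset.univ.image φ).card)⁻¹) :=
        (norm_sum_le _ _).trans (Finset.sum_le_sum fun φ _ => hterm φ)
    _ ≤ _ := by
        rw [← Finset.mul_sum, ← Finset.mul_sum]
        gcongr
        exact sum_inv_pow_card_image_le N M

end SecondMoment

/-- Theorem 1.2, convergence in expectation.
Independent, permutation invariant families of random matrices, uniformly
bounded in operator norm, are asymptotically free with amalgamation over the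
diagonal, in expectation: for monomials `P_{N,i}` with uniformly bounded
deterministic diagonal coefficients and uniformly bounded degrees, setting
`M_{N,i} = P_{N,i}(A_{N,ℓ_i})` and
`ε_N = Δ[(M_{N,1} - ΔM_{N,1}) ⋯ (M_{N,n} - ΔM_{N,n})]`, one has
`E[(1/N) Tr((ε_N ε_N^*)^p)] → 0` for every `p ≥ 1`. -/
theorem asymptotically_free_amalg_diagonal_expectation
    {Ω : Type} [MeasurableSpace Ω] (μ : Measure Ω) [IsProbabilityMeasure μ]
    {K : Type} [Nonempty K] [Finite K] {L : ℕ} (hL : 1 ≤ L)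
    (A : (N : ℕ) → Fin L → K → Ω → Matrix (Fin N) (Fin N) ℂ)
    (hmeas : ∀ N ℓ k, EntriesMeasurable (A N ℓ k))
    (hop : UnifOpNormBound μ A)
    (hindep : IndepFamilies μ A)
    (hperm : ∀ (N : ℕ) (ℓ : Fin L), PermInvariant μ (A N ℓ))
    (n : ℕ) (hn : 2 ≤ n) (ℓv : Fin n → Fin L)
    (hadj : ∀ (i : ℕ) (h1 : i + 1 < n),
      ℓv ⟨i, Nat.lt_of_succ_lt h1⟩ ≠ ℓv ⟨i + 1, h1⟩)
    (dv : ℕ → Fin n → ℕ) (kv : ℕ → Fin n → ℕ → K)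
    (D : (N : ℕ) → Fin n → ℕ → Matrix (Fin N) (Fin N) ℂ)
    (hdiag : ∀ N i j, (D N i j).IsDiag)
    (dmax : ℕ) (hdeg : ∀ N i, dv N i ≤ dmax)
    (C' : ℝ) (hDbdd : ∀ N i j, matOpNorm (D N i j) ≤ C')
    (p : ℕ) (hp : 1 ≤ p) :
    Filter.Tendsto
      (fun N : ℕ => ∫ ω,
        (N : ℂ)⁻¹ *
          (fun ε : Matrix (Fin N) (Fin N) ℂ => Matrix.trace ((ε * εᴴ) ^ p))
            (dproj (centeredProd fun i : Fin n =>
              monomialEval (fun k => A N (ℓv i) k ω) (dv N i) (kv N i) (D N i))) ∂μ)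
      atTop (nhds 0) := by
  obtain ⟨C₀, hC₀⟩ := hop
  set C : ℝ := max C₀ 1 with hCdef
  set B : ℝ := max C' 1 with hBdef
  have hC : 1 ≤ C := le_max_right _ _
  have hB : 1 ≤ B := le_max_right _ _
  have hDB : ∀ N i j, matOpNorm (D N i j) ≤ B := fun N i j => (hDbdd N i j).trans (le_max_left _ _)
  have hA : ∀ N, ∀ᵐ ω ∂μ, ∀ ℓ k, matOpNorm (A N ℓ k ω) ≤ C := fun N =>
    ae_all_iff.2 fun ℓ => ae_all_iff.2 fun k =>
      (hC₀ N ℓ k).mono fun ω h => h.trans (le_max_left _ _)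
  obtain ⟨p, rfl⟩ : ∃ q, p = q + 1 := ⟨p - 1, by omega⟩
  set M : ℕ := n * (dmax + 1) + n * (dmax + 1) with hM
  set r : ℝ := (2 * (B * (C * B) ^ dmax)) ^ n with hr
  set R : ℝ := (r ^ 2) ^ p *
    ((C * B) ^ M * (2 ^ ((M + 3) ^ 2 + (M + 3)) * M.factorial)) with hR
  have hlim : Tendsto (fun N : ℕ => R * (N : ℝ)⁻¹) atTop (nhds 0) := by
    simpa using tendsto_inv_atTop_nhds_zero_nat.const_mul R
  refine squeeze_zero_norm' ?_ hlim
  filter_upwards [eventually_ge_atTop (2 * (M + 3))] with N hN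
  obtain ⟨h_int, hle⟩ := integral_sum_sq_centeredProd_le (A N) (hmeas N) (hindep N) (hperm N) hC hB
    (hA N) hn ℓv hadj (dv N) (kv N) (D N) (hdiag N) rfl hM (hdeg N) (hDB N) hN
  refine (norm_integral_le_of_norm_le (h_int.const_mul ((N : ℝ)⁻¹ * (r ^ 2) ^ p)) ?_).trans ?_
  · filter_upwards [hA N] with ω hω
    rw [norm_mul, norm_inv, Complex.norm_natCast, mul_assoc]
    refine mul_le_mul_of_nonneg_left (norm_trace_dproj_pow_le ?_ p) (by positivity)
    refine matOpNorm_centeredProd_le fun i => ?_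
    refine (matOpNorm_monomialEval_le (by linarith) (fun k => hω _ k) (hDB N i)).trans ?_
    have hCB : 1 ≤ C * B := one_le_mul_of_one_le_of_one_le hC hB
    gcongr
    exact hdeg N i
  · rw [integral_const_mul, hR, mul_comm _ (N : ℝ)⁻¹, mul_assoc]
    gcongr
end
end

section
/- For every N and every union A_N of families of N×N random matrices with essentially bounded entries, the linear spans 𝒞_N and ℱ_N are unital subalgebras of the algebra of N×N random matrices (they contain the identity matrix and are closed under matrix product), and Δ(ℱ_N) = 𝒞_N. -/
open MeasureTheory ProbabilityTheory Filter Matrix Asymptotics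
open scoped BigOperators ENNReal
open scoped Classical

noncomputable section

namespace GraphMonomial

variable {L : ℕ} {K : Type}

/-! ### Walks -/

/-- `g.IsWalk a l b`: the consecutive steps of `l` lead from `a` to `b`. -/
def IsWalk (g : GraphMonomial L K) : g.V → List (g.E × Bool) → g.V → Prop
  | a, [], b => a = b
  | a, s :: l, b => g.stepSrc s = a ∧ g.IsWalk (g.stepTgt s) l b

section Walk

variable {g : GraphMonomial L K}

lemma isWalk_nil {a b : g.V} : g.IsWalk a [] b ↔ a = b := Iff.rfl

lemma isWalk_cons {a b : g.V} {s : g.E × Bool} {l : List (g.E × Bool)} :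
    g.IsWalk a (s :: l) b ↔ g.stepSrc s = a ∧ g.IsWalk (g.stepTgt s) l b := Iff.rfl

lemma isWalk_append {a b : g.V} {l₁ l₂ : List (g.E × Bool)} :
    g.IsWalk a (l₁ ++ l₂) b ↔ ∃ c, g.IsWalk a l₁ c ∧ g.IsWalk c l₂ b := by
  induction l₁ generalizing a with
  | nil => simp [isWalk_nil]
  | cons s l ih => simp [isWalk_cons, ih, and_assoc]

lemma isWalk_cons_iff_getElem {a b : g.V} {s : g.E × Bool} {l : List (g.E × Bool)} :
    g.IsWalk a (s :: l) b ↔ g.stepSrc s = a ∧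
      (∀ i (h : i + 1 < (s :: l).length),
        g.stepTgt ((s :: l)[i]) = g.stepSrc ((s :: l)[i + 1])) ∧
      g.stepTgt ((s :: l)[l.length]) = b := by
  induction l generalizing a s with
  | nil => simp [IsWalk]
  | cons t l ih =>
    rw [isWalk_cons, ih]
    constructor
    · rintro ⟨h1, h2, h3, h4⟩
      refine ⟨h1, ?_, by simpa using h4⟩
      rintro (_ | i) h
      · simpa using h2.symm
      · exact h3 i (by simpa using h)
    · rintro ⟨h1, h2, h3⟩
      refine ⟨h1, by simpa using (h2 0 (by simp)).symm, fun i h => ?_, by simpa using h3⟩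
      exact h2 (i + 1) (by simpa using h)

lemma isSimpleCycle_iff {c : List (g.E × Bool)} :
    g.IsSimpleCycle c ↔ c ≠ [] ∧ (∃ a, g.IsWalk a c a) ∧
      (c.map Prod.fst).Nodup ∧ (c.map g.stepSrc).Nodup := by
  unfold IsSimpleCycle
  cases c with
  | nil => simp
  | cons s l =>
    simp only [ne_eq, reduceCtorEq, not_false_eq_true, exists_true_left, true_and]
    refine and_congr_left fun _ => ?_
    simp only [isWalk_cons_iff_getElem, List.get_eq_getElem]
    constructor
    · intro h
      refine ⟨g.stepSrc s, rfl, fun i hi => ?_, ?_⟩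
      · have := h ⟨i, by omega⟩
        simpa only [Nat.mod_eq_of_lt hi] using this
      · have := h ⟨l.length, by simp⟩
        simpa using this
    · rintro ⟨a, rfl, h, h'⟩ ⟨i, hi⟩
      by_cases hi' : i + 1 < (s :: l).length
      · simpa only [Nat.mod_eq_of_lt hi'] using h i hi'
      · obtain rfl : i = l.length := by simp at hi hi'; omega
        simpa using h'

lemma IsWalk.map_stepSrc_append {a b : g.V} {l : List (g.E × Bool)} (h : g.IsWalk a l b) :
    l.map g.stepSrc ++ [b] = a :: l.map g.stepTgt := by
  induction l generalizing a with
  | nil => simpa [isWalk_nil, eq_comm] using h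
  | cons s l ih =>
    obtain ⟨rfl, h⟩ := h
    simp [ih h]

/-- Traversing the steps backwards. -/
def revSteps (l : List (g.E × Bool)) : List (g.E × Bool) :=
  (l.map fun s => (s.1, !s.2)).reverse

lemma stepSrc_not (e : g.E) (b : Bool) : g.stepSrc (e, !b) = g.stepTgt (e, b) := by
  cases b <;> simp [stepSrc, stepTgt]

lemma stepTgt_not (e : g.E) (b : Bool) : g.stepTgt (e, !b) = g.stepSrc (e, b) := by
  cases b <;> simp [stepSrc, stepTgt]

lemma IsWalk.reverse {a b : g.V} {l : List (g.E × Bool)} (h : g.IsWalk a l b) :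
    g.IsWalk b (revSteps l) a := by
  induction l generalizing a with
  | nil => exact h.symm
  | cons s l ih =>
    obtain ⟨rfl, h⟩ := h
    simp only [revSteps, List.map_cons, List.reverse_cons]
    exact isWalk_append.2 ⟨_, ih h, stepSrc_not _ _, stepTgt_not _ _⟩

lemma map_stepSrc_revSteps (l : List (g.E × Bool)) :
    (revSteps l).map g.stepSrc = (l.map g.stepTgt).reverse := by
  simp only [revSteps, List.map_reverse, List.map_map]
  congr 2
  funext s
  exact stepSrc_not _ _

lemma IsDirectedCycleList.of_perm {c c' : List (g.E × Bool)} (h : c'.Perm c)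
    (hc : g.IsDirectedCycleList c') : g.IsDirectedCycleList c :=
  hc.imp (fun H s hs => H s (h.mem_iff.2 hs)) (fun H s hs => H s (h.mem_iff.2 hs))

end Walk

/-! ### Graph homomorphisms -/

/-- A pair of maps on vertices and edges compatible with sources and targets. -/
structure IsHom (g h : GraphMonomial L K) (i : g.V → h.V) (j : g.E → h.E) : Prop where
  src : ∀ e, h.src (j e) = i (g.src e)
  tgt : ∀ e, h.tgt (j e) = i (g.tgt e)

section Hom

variable {g h : GraphMonomial L K} {i : g.V → h.V} {j : g.E → h.E}

lemma IsHom.stepSrc (hij : IsHom g h i j) (s : g.E × Bool) :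
    h.stepSrc (Prod.map j id s) = i (g.stepSrc s) := by
  obtain ⟨e, _ | _⟩ := s <;> simp [GraphMonomial.stepSrc, hij.src, hij.tgt]

lemma IsHom.stepTgt (hij : IsHom g h i j) (s : g.E × Bool) :
    h.stepTgt (Prod.map j id s) = i (g.stepTgt s) := by
  obtain ⟨e, _ | _⟩ := s <;> simp [GraphMonomial.stepTgt, hij.src, hij.tgt]

lemma IsHom.isWalk (hij : IsHom g h i j) {a b : g.V} {l : List (g.E × Bool)}
    (hl : g.IsWalk a l b) : h.IsWalk (i a) (l.map (Prod.map j id)) (i b) := by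
  induction l generalizing a with
  | nil => exact congrArg i hl
  | cons s l ih =>
    obtain ⟨rfl, hl⟩ := hl
    exact ⟨hij.stepSrc s, hij.stepTgt s ▸ ih hl⟩

lemma IsHom.isSimpleCycle (hij : IsHom g h i j) (hj : Function.Injective j)
    {c : List (g.E × Bool)} (hc : g.IsSimpleCycle c) (hi : ((c.map g.stepSrc).map i).Nodup) :
    h.IsSimpleCycle (c.map (Prod.map j id)) := by
  rw [isSimpleCycle_iff] at hc ⊢
  obtain ⟨h1, ⟨a, h2⟩, h3, h4⟩ := hc
  refine ⟨by simpa using h1, ⟨_, hij.isWalk h2⟩, ?_, ?_⟩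
  · have : (c.map (Prod.map j id)).map Prod.fst = (c.map Prod.fst).map j := by simp
    rw [this]
    exact h3.map hj
  · have : (c.map (Prod.map j id)).map h.stepSrc = (c.map g.stepSrc).map i := by
      simp [hij.stepSrc]
    rwa [this]

lemma IsHom.reachOn (hij : IsHom g h i j) {F : Set g.E} {F' : Set h.E}
    (hF : ∀ e ∉ F, j e ∉ F') {a b : g.V} (hab : reachOn g.src g.tgt F a b) :
    reachOn h.src h.tgt F' (i a) (i b) := by
  refine Relation.ReflTransGen.lift i ?_ _ _ hab
  rintro x y ⟨e, he, H⟩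
  refine ⟨j e, hF e he, ?_⟩
  rw [hij.src, hij.tgt]
  exact H.imp (fun H => ⟨congrArg i H.1, congrArg i H.2⟩)
    (fun H => ⟨congrArg i H.1, congrArg i H.2⟩)

/-- Walks lift along a homomorphism whose image contains all edges at vertices of the image. -/
lemma IsHom.exists_isWalk (hij : IsHom g h i j) (hi : Function.Injective i)
    (hsrc : ∀ e u, h.src e = i u → e ∈ Set.range j)
    (htgt : ∀ e u, h.tgt e = i u → e ∈ Set.range j)
    {a : g.V} {b : h.V} {l : List (h.E × Bool)} (hl : h.IsWalk (i a) l b) :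
    ∃ l' b', l = l'.map (Prod.map j id) ∧ b = i b' ∧ g.IsWalk a l' b' := by
  induction l generalizing a with
  | nil => exact ⟨[], a, rfl, hl.symm, rfl⟩
  | cons s l ih =>
    obtain ⟨h1, h2⟩ := hl
    obtain ⟨e, he⟩ : s.1 ∈ Set.range j := by
      obtain ⟨e, _ | _⟩ := s
      · exact htgt e a (by simpa [GraphMonomial.stepSrc] using h1)
      · exact hsrc e a (by simpa [GraphMonomial.stepSrc] using h1)
    have hs : s = Prod.map j id (e, s.2) := Prod.ext he.symm rfl
    rw [hs, hij.stepTgt] at h2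
    rw [hs, hij.stepSrc] at h1
    obtain ⟨l', b', rfl, rfl, h3⟩ := ih h2
    exact ⟨(e, s.2) :: l', b', by rw [List.map_cons, ← hs], rfl, hi h1, h3⟩

lemma IsHom.exists_isSimpleCycle (hij : IsHom g h i j) (hi : Function.Injective i)
    (hsrc : ∀ e u, h.src e = i u → e ∈ Set.range j)
    (htgt : ∀ e u, h.tgt e = i u → e ∈ Set.range j)
    {a : g.V} {c : List (h.E × Bool)} (hc : h.IsSimpleCycle c) (ha : h.IsWalk (i a) c (i a)) :
    ∃ c', c = c'.map (Prod.map j id) ∧ g.IsSimpleCycle c' := by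
  obtain ⟨c', b, rfl, hb, hw⟩ := hij.exists_isWalk hi hsrc htgt ha
  obtain rfl := hi hb
  rw [isSimpleCycle_iff] at hc
  obtain ⟨h1, -, h3, h4⟩ := hc
  refine ⟨c', rfl, isSimpleCycle_iff.2 ⟨by simpa using h1, ⟨a, hw⟩, ?_, ?_⟩⟩
  · have : (c'.map (Prod.map j id)).map Prod.fst = (c'.map Prod.fst).map j := by simp
    rw [this] at h3
    exact h3.of_map _
  · have : (c'.map (Prod.map j id)).map h.stepSrc = (c'.map g.stepSrc).map i := by
      simp [hij.stepSrc]
    rw [this] at h4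
    exact h4.of_map _

end Hom

/-! ### Identifying two vertices -/

/-- The graph monomial obtained from `g` by identifying the vertices `a` and `b`. -/
def collapse (g : GraphMonomial L K) (a b : g.V) : GraphMonomial L K where
  V := Quot fun u w : g.V => u = a ∧ w = b
  E := g.E
  fintV := Fintype.ofFinite _
  fintE := g.fintE
  src e := Quot.mk _ (g.src e)
  tgt e := Quot.mk _ (g.tgt e)
  vin := Quot.mk _ g.vin
  vout := Quot.mk _ g.vout
  labL := g.labL
  labK := g.labK

/-- The quotient map of `collapse`. -/
def proj (g : GraphMonomial L K) (a b : g.V) : g.V → (g.collapse a b).V := Quot.mk _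

section Collapse

variable {g : GraphMonomial L K} {a b : g.V}

lemma proj_surjective : Function.Surjective (g.proj a b) := Quot.mk_surjective

lemma proj_left_eq_right : g.proj a b a = g.proj a b b := Quot.sound ⟨rfl, rfl⟩

lemma proj_eq_iff {u w : g.V} :
    g.proj a b u = g.proj a b w ↔ u = w ∨ ((u = a ∨ u = b) ∧ (w = a ∨ w = b)) := by
  constructor
  · intro h
    have := congrArg (Quot.lift (fun x => if x = b then a else x)
      (by rintro x y ⟨rfl, rfl⟩; simp)) h
    simp only [proj] at this
    split_ifs at this <;> grind
  · have := proj_left_eq_right (g := g) (a := a) (b := b)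
    rintro (rfl | ⟨rfl | rfl, rfl | rfl⟩) <;> simp [this]

lemma isHom_proj : IsHom g (g.collapse a b) (g.proj a b) id := ⟨fun _ => rfl, fun _ => rfl⟩

lemma collapse_stepSrc (s : g.E × Bool) :
    (g.collapse a b).stepSrc s = g.proj a b (g.stepSrc s) := isHom_proj.stepSrc s

lemma collapse_stepTgt (s : g.E × Bool) :
    (g.collapse a b).stepTgt s = g.proj a b (g.stepTgt s) := isHom_proj.stepTgt s

lemma exists_isWalk_of_collapse {z : g.V} {y : (g.collapse a b).V} {l : List (g.E × Bool)}
    (h : (g.collapse a b).IsWalk (g.proj a b z) l y)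
    (hl : ∀ s ∈ l, g.stepSrc s ≠ a ∧ g.stepSrc s ≠ b) :
    ∃ w, g.IsWalk z l w ∧ g.proj a b w = y := by
  induction l generalizing z with
  | nil => exact ⟨z, rfl, h⟩
  | cons s l ih =>
    obtain ⟨h1, h2⟩ := h
    rw [collapse_stepTgt] at h2
    obtain ⟨w, hw, rfl⟩ := ih h2 fun s hs => hl s (List.mem_cons_of_mem _ hs)
    refine ⟨w, ⟨?_, hw⟩, rfl⟩
    rw [collapse_stepSrc, proj_eq_iff] at h1
    have := hl s List.mem_cons_self
    tauto

/-- Up to rotation, a simple cycle of the collapsed graph is a simple cycle of the original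
graph, or a simple path between the two identified vertices. -/
lemma exists_perm_of_collapse {c : List (g.E × Bool)}
    (hc : (g.collapse a b).IsSimpleCycle c) :
    ∃ c' : List (g.E × Bool), c'.Perm c ∧ (g.IsSimpleCycle c' ∨
      ∃ x y, x ≠ y ∧ (x = a ∧ y = b ∨ x = b ∧ y = a) ∧ g.IsWalk x c' y ∧
        (c'.map g.stepSrc ++ [y]).Nodup) := by
  obtain ⟨h1, ⟨q, h2⟩, h3, h4⟩ := isSimpleCycle_iff.1 hc
  replace h4 : ((c.map g.stepSrc).map (g.proj a b)).Nodup := by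
    rw [List.map_map]
    convert h4 using 2
    exact List.map_congr_left fun s _ => (collapse_stepSrc (g := g) s).symm
  -- rotate so that no step but the first starts at `a` or `b`
  obtain ⟨s, l, hp, q', hw, hl⟩ : ∃ s l, (s :: l).Perm c ∧ ∃ q',
      (g.collapse a b).IsWalk q' (s :: l) q' ∧
      ∀ t ∈ l, g.stepSrc t ≠ a ∧ g.stepSrc t ≠ b := by
    by_cases H : ∃ s ∈ c, g.stepSrc s = a ∨ g.stepSrc s = b
    · obtain ⟨s, hs, hsab⟩ := H
      obtain ⟨l₁, l₂, rfl⟩ := List.append_of_mem hs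
      obtain ⟨q', hw1, hw2⟩ := isWalk_append.1 h2
      have hp : (s :: (l₂ ++ l₁)).Perm (l₁ ++ s :: l₂) :=
        List.perm_append_comm (l₁ := s :: l₂) (l₂ := l₁)
      refine ⟨s, l₂ ++ l₁, hp, q', (isWalk_append (g := g.collapse a b) (l₁ := s :: l₂)).2 ⟨q, hw2, hw1⟩, ?_⟩
      intro t ht
      have h5 := (((hp.map _).map _).nodup_iff).2 h4
      rw [List.map_cons, List.map_cons, List.nodup_cons] at h5
      by_contra hcon
      refine h5.1 (List.mem_map.2 ⟨_, List.mem_map_of_mem ht, ?_⟩)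
      rw [proj_eq_iff]
      tauto
    · push Not at H
      obtain ⟨s, l, rfl⟩ := List.exists_cons_of_ne_nil h1
      exact ⟨s, l, .refl _, q, h2, fun t ht => H t (List.mem_cons_of_mem _ ht)⟩
  obtain ⟨hq, hw⟩ := hw
  rw [collapse_stepTgt] at hw
  obtain ⟨w, hwl, rfl⟩ := exists_isWalk_of_collapse hw hl
  have h3' := ((hp.map Prod.fst).nodup_iff).2 h3
  have h4' := (((hp.map g.stepSrc).map (g.proj a b)).nodup_iff).2 h4
  have h5 := h4'.of_map
  have hsw : g.IsWalk (g.stepSrc s) (s :: l) w := ⟨rfl, hwl⟩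
  refine ⟨s :: l, hp, ?_⟩
  by_cases he : g.stepSrc s = w
  · exact .inl (isSimpleCycle_iff.2 ⟨by simp, ⟨w, he ▸ hsw⟩, h3', h5⟩)
  · rw [collapse_stepSrc] at hq
    refine .inr ⟨_, w, he, ?_, hsw, ?_⟩
    · have := proj_eq_iff.1 hq
      grind
    · rw [List.nodup_append_comm, List.singleton_append, List.nodup_cons]
      refine ⟨fun hm => ?_, h5⟩
      rw [List.map_cons, List.map_cons, List.nodup_cons, hq] at h4'
      rw [List.map_cons, List.mem_cons] at hm
      exact hm.elim (fun h => he h.symm) fun h => h4'.1 (List.mem_map_of_mem h)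

lemma sum_collapse {N : ℕ} {M : Type*} [AddCommMonoid M] (F : (g.V → Fin N) → M) :
    ∑ φ : (g.collapse a b).V → Fin N, F (φ ∘ g.proj a b) =
      ∑ φ : g.V → Fin N, if φ a = φ b then F φ else 0 := by
  rw [← Finset.sum_filter]
  refine Finset.sum_bij (fun φ _ => φ ∘ g.proj a b) ?_ ?_ ?_ fun _ _ => rfl
  · intro φ _
    simpa using congrArg φ proj_left_eq_right
  · intro φ _ ψ _ h
    exact proj_surjective.injective_comp_right h
  · intro φ hφ
    refine ⟨Quot.lift φ ?_, Finset.mem_univ _, rfl⟩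
    rintro _ _ ⟨rfl, rfl⟩
    simpa using hφ

lemma collapse_eval_apply {N : ℕ} (A : Fin L → K → Matrix (Fin N) (Fin N) ℂ) (i j : Fin N) :
    (g.collapse a b).eval A i j = ∑ φ : g.V → Fin N, if φ a = φ b then
      (if φ g.vin = j ∧ φ g.vout = i then
        ∏ e : g.E, A (g.labL e) (g.labK e) (φ (g.tgt e)) (φ (g.src e)) else 0) else 0 :=
  sum_collapse (g := g) (a := a) (b := b) fun φ => if φ g.vin = j ∧ φ g.vout = i then
    ∏ e : g.E, A (g.labL e) (g.labK e) (φ (g.tgt e)) (φ (g.src e)) else 0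

lemma collapse_eval_vin_vout {N : ℕ} (A : Fin L → K → Matrix (Fin N) (Fin N) ℂ) :
    (g.collapse g.vin g.vout).eval A = dproj (g.eval A) := by
  ext i j
  rw [collapse_eval_apply]
  simp only [dproj, eval, Matrix.of_apply]
  split_ifs with hij
  · subst hij
    refine Finset.sum_congr rfl fun φ _ => ?_
    split_ifs <;> grind
  · refine Finset.sum_eq_zero fun φ _ => ?_
    split_ifs <;> grind

end Collapse

/-! ### Cacti attached to a path -/

/-- All simple cycles are directed and avoid `F`, and every edge outside `F` belongs to exactly
one simple cycle. -/
def IsCactusOff (g : GraphMonomial L K) (F : Set g.E) : Prop :=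
  (∀ c, g.IsSimpleCycle c → g.IsDirectedCycleList c ∧ ∀ s ∈ c, s.1 ∉ F) ∧
  ∀ e ∉ F, ∃! S : Finset g.E, g.IsCycleEdgeSet S ∧ e ∈ S

lemma isOrientedCactus_iff {g : GraphMonomial L K} :
    g.IsOrientedCactus ↔ IsConnectedGraph g.src g.tgt ∧ g.IsCactusOff ∅ := by
  simp [IsOrientedCactus, IsCactusOff]

/-- The vertices `v 0, …, v d` and edges `f` form a directed path from `g.vin` to `g.vout`, and
`lam w` is the index of the only path vertex to which `w` is connected outside the path. -/
structure IsPathLabelling (g : GraphMonomial L K) (d : ℕ) (v : ℕ → g.V) (f : Fin d → g.E)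
    (lam : g.V → ℕ) : Prop where
  lam_v : ∀ j ≤ d, lam (v j) = j
  src_f : ∀ j, g.src (f j) = v (j + 1)
  tgt_f : ∀ j, g.tgt (f j) = v j
  vin_eq : g.vin = v d
  vout_eq : g.vout = v 0
  lam_edge : ∀ e ∉ Set.range f, lam (g.src e) = lam (g.tgt e)
  lam_le : ∀ w, lam w ≤ d
  reach : ∀ w, reachOn g.src g.tgt (Set.range f) w (v (lam w))

section Labelling

variable {g : GraphMonomial L K} {d : ℕ} {v : ℕ → g.V} {f : Fin d → g.E} {lam : g.V → ℕ}

lemma IsPathLabelling.lam_eq_of_reachOn (P : g.IsPathLabelling d v f lam) {a b : g.V}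
    (h : reachOn g.src g.tgt (Set.range f) a b) : lam a = lam b := by
  induction h with
  | refl => rfl
  | tail _ h ih =>
    obtain ⟨e, he, ⟨rfl, rfl⟩ | ⟨rfl, rfl⟩⟩ := h
    · exact ih.trans (P.lam_edge e he)
    · exact ih.trans (P.lam_edge e he).symm

lemma IsPathLabelling.v_inj (P : g.IsPathLabelling d v f lam) {i j : ℕ} (hi : i ≤ d) (hj : j ≤ d)
    (h : v i = v j) : i = j := by
  rw [← P.lam_v i hi, h, P.lam_v j hj]

lemma isPathCactusType_iff : g.IsPathCactusType ↔ IsConnectedGraph g.src g.tgt ∧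
    ∃ (d : ℕ) (v : ℕ → g.V) (f : Fin d → g.E) (lam : g.V → ℕ),
      g.IsPathLabelling d v f lam ∧ g.IsCactusOff (Set.range f) := by
  refine and_congr_right fun _ => exists_congr fun d => ⟨?_, ?_⟩
  · rintro ⟨v, f, hv, hf, hvf, hin, hout, hc, he, hw⟩
    choose lam hlam hlam' using hw
    refine ⟨fun n => if h : n < d + 1 then v ⟨n, h⟩ else g.vin, f, fun w => lam w,
      ⟨?_, ?_, ?_, ?_, ?_, ?_, ?_, ?_⟩, hc, he⟩
    · intro j hj
      rw [dif_pos (by omega), ← hlam' _ _ Relation.ReflTransGen.refl]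
    · intro j
      rw [(hvf j).1, dif_pos (by omega)]
      rfl
    · intro j
      rw [(hvf j).2, dif_pos (by omega)]
      rfl
    · rw [hin, dif_pos (by omega)]
      rfl
    · rw [hout, dif_pos (by omega)]
      rfl
    · intro e he
      refine congrArg _ (hlam' _ _ (.head ?_ (hlam _))).symm
      exact ⟨e, he, .inl ⟨rfl, rfl⟩⟩
    · intro w
      omega
    · intro w
      rw [dif_pos (by omega)]
      exact hlam w
  · rintro ⟨v, f, lam, P, hc, he⟩
    refine ⟨fun j => v j, f, ?_, ?_, fun j => ⟨P.src_f j, P.tgt_f j⟩, P.vin_eq, P.vout_eq, hc,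
      he, ?_⟩
    · intro i j h
      exact Fin.ext (P.v_inj (by omega) (by omega) h)
    · intro i j h
      refine Fin.ext (P.v_inj (by omega) (by omega) ?_)
      rw [← P.tgt_f, ← P.tgt_f, h]
    · intro w
      have := P.lam_le w
      refine ⟨⟨lam w, by omega⟩, P.reach w, fun j hj => Fin.ext ?_⟩
      exact (P.lam_v j (by omega)).symm.trans (P.lam_eq_of_reachOn hj).symm

lemma IsCactusType.isPathCactusType (h : g.IsCactusType) : g.IsPathCactusType := by
  obtain ⟨hroot, hg⟩ := h
  obtain ⟨hconn, hc⟩ := isOrientedCactus_iff.1 hg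
  have hr : Set.range (Fin.elim0 : Fin 0 → g.E) = ∅ := Set.range_eq_empty _
  refine isPathCactusType_iff.2 ⟨hconn, 0, fun _ => g.vin, Fin.elim0, fun _ => 0,
    ⟨fun j hj => by omega, fun j => j.elim0, fun j => j.elim0, rfl, hroot.symm, fun _ _ => rfl,
      fun _ => le_rfl, fun w => ?_⟩, ?_⟩
  · rw [hr]
    exact hconn _ _
  · rwa [hr]

/-- A step along an edge outside the path keeps the label, and the steps along the path start
at path vertices. -/
lemma IsPathLabelling.lam_stepTgt (P : g.IsPathLabelling d v f lam) (s : g.E × Bool) :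
    lam (g.stepTgt s) = lam (g.stepSrc s) ∨ g.stepSrc s = v (lam (g.stepSrc s)) := by
  obtain ⟨e, b⟩ := s
  by_cases he : e ∈ Set.range f
  · obtain ⟨i, rfl⟩ := he
    right
    cases b
    · simp [stepSrc, P.tgt_f, P.lam_v i (by omega)]
    · simp [stepSrc, P.src_f, P.lam_v (i + 1) (by omega)]
  · left
    cases b
    · simp [stepSrc, stepTgt, P.lam_edge e he]
    · simp [stepSrc, stepTgt, P.lam_edge e he]

lemma IsPathLabelling.lam_eq_of_isWalk (P : g.IsPathLabelling d v f lam) {a b : g.V}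
    {l : List (g.E × Bool)} (h : g.IsWalk a l b) (hl : v (lam a) ∉ l.map g.stepSrc) :
    lam b = lam a := by
  induction l generalizing a with
  | nil => exact congrArg lam (isWalk_nil.1 h).symm
  | cons s l ih =>
    obtain ⟨rfl, h⟩ := h
    simp only [List.map_cons, List.mem_cons, not_or] at hl
    have h1 : lam (g.stepTgt s) = lam (g.stepSrc s) :=
      (P.lam_stepTgt s).resolve_right fun h => hl.1 h.symm
    rw [← h1]
    exact ih h (h1 ▸ hl.2)

lemma IsPathLabelling.lam_stepSrc_of_isWalk (P : g.IsPathLabelling d v f lam) {a b : g.V}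
    {l : List (g.E × Bool)} (h : g.IsWalk a l b) (hl : ∀ s ∈ l, s.1 ∉ Set.range f) :
    ∀ s ∈ l, lam (g.stepSrc s) = lam a := by
  induction l generalizing a with
  | nil => simp
  | cons s l ih =>
    obtain ⟨rfl, h⟩ := h
    simp only [List.forall_mem_cons] at hl ⊢
    refine ⟨trivial, fun t ht => (ih h hl.2 t ht).trans ?_⟩
    have := P.lam_edge s.1 hl.1
    obtain ⟨e, _ | _⟩ := s <;> simp [stepSrc, stepTgt, this]

/-- A simple path from `v j` to `v 0` that visits no `v i` with `i > j` follows the edges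
`f (j - 1), …, f 0`. -/
lemma IsPathLabelling.path_unique (P : g.IsPathLabelling d v f lam) {j : ℕ} (hj : j ≤ d)
    {l : List (g.E × Bool)} (hw : g.IsWalk (v j) l (v 0))
    (hnd : (l.map g.stepSrc ++ [v 0]).Nodup)
    (hv : ∀ i ≤ d, j < i → v i ∉ l.map g.stepSrc) :
    (∀ s ∈ l, s.2 = true) ∧ ∀ e, e ∈ l.map Prod.fst ↔ ∃ i : Fin d, (i : ℕ) < j ∧ f i = e := by
  induction j generalizing l with
  | zero =>
    cases l with
    | nil => simp
    | cons s l =>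
      have := hw.1
      simp [this] at hnd
  | succ j ih =>
    cases l with
    | nil =>
      have := P.v_inj hj (by omega) (isWalk_nil.1 hw)
      omega
    | cons s l =>
      obtain ⟨hs, hw⟩ := hw
      rw [List.map_cons, List.cons_append, List.nodup_cons] at hnd
      obtain ⟨hns, hnd⟩ := hnd
      rw [List.mem_append, not_or] at hns
      by_cases he : s.1 ∈ Set.range f
      · obtain ⟨i, hi⟩ := he
        obtain ⟨e, _ | _⟩ := s
        · obtain rfl : f i = e := hi
          simp only [stepSrc, stepTgt, P.src_f, P.tgt_f, Bool.false_eq_true, if_false] at hs hw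
          have hij : (i : ℕ) = j + 1 := P.v_inj (by omega) hj hs
          exfalso
          cases l with
          | nil =>
            have := P.v_inj (by omega) (by omega) (isWalk_nil.1 hw)
            omega
          | cons t l =>
            refine hv (i + 1) (by omega) (by omega) ?_
            simp [hw.1]
        · obtain rfl : f i = e := hi
          simp only [stepSrc, stepTgt, P.src_f, P.tgt_f, if_true] at hs hw
          have hij : (i : ℕ) + 1 = j + 1 := P.v_inj (by omega) hj hs
          obtain rfl : (i : ℕ) = j := by omega
          have := ih (by omega) hw hnd ?_
          · refine ⟨by simpa using this.1, fun e => ?_⟩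
            rw [List.map_cons, List.mem_cons, this.2]
            constructor
            · rintro (rfl | ⟨k, hk, rfl⟩)
              · exact ⟨i, by omega, rfl⟩
              · exact ⟨k, by omega, rfl⟩
            · rintro ⟨k, hk, rfl⟩
              rcases eq_or_ne k i with rfl | hki
              · exact .inl rfl
              · exact .inr ⟨k, by have := Fin.val_ne_of_ne hki; omega, rfl⟩
          · intro k hk hik hmem
            rcases eq_or_ne k (i + 1) with rfl | hki
            · apply hns.1
              rw [show g.stepSrc (f i, true) = v (i + 1) from P.src_f i]
              exact hmem
            · exact hv k hk (by omega) (List.mem_cons_of_mem _ hmem)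
      · exfalso
        have h1 : lam (g.stepTgt s) = j + 1 := by
          rw [← P.lam_v (j + 1) hj, ← hs]
          have := P.lam_edge s.1 he
          obtain ⟨e, _ | _⟩ := s <;> simp [stepSrc, stepTgt, this]
        have := P.lam_eq_of_isWalk hw (by rw [h1, ← hs]; exact hns.1)
        rw [h1, P.lam_v 0 (by omega)] at this
        omega

/-- A simple path between the ends of the path is the path itself. -/
lemma IsPathLabelling.path_unique_ends (P : g.IsPathLabelling d v f lam) {x y : g.V}
    (hxy : x = g.vin ∧ y = g.vout ∨ x = g.vout ∧ y = g.vin) {l : List (g.E × Bool)}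
    (hw : g.IsWalk x l y) (hnd : (l.map g.stepSrc ++ [y]).Nodup) :
    g.IsDirectedCycleList l ∧ ∀ e, e ∈ l.map Prod.fst ↔ e ∈ Set.range f := by
  rw [P.vin_eq, P.vout_eq] at hxy
  obtain ⟨rfl, rfl⟩ | ⟨rfl, rfl⟩ := hxy
  · have := P.path_unique le_rfl hw hnd fun i hi hi' => by omega
    exact ⟨.inl this.1, fun e => by simp [this.2]⟩
  · have hnd' : ((revSteps l).map g.stepSrc ++ [v 0]).Nodup := by
      rw [map_stepSrc_revSteps, ← List.reverse_cons, List.nodup_reverse,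
        ← hw.map_stepSrc_append]
      exact hnd
    have := P.path_unique le_rfl hw.reverse hnd' fun i hi hi' => by omega
    refine ⟨.inr fun s hs => ?_, fun e => ?_⟩
    · simpa using this.1 (s.1, !s.2) (List.mem_reverse.2 (List.mem_map_of_mem hs))
    · have h2 := this.2 e
      simp only [revSteps, List.map_reverse, List.map_map, List.mem_reverse] at h2
      simpa [Function.comp_def] using h2

lemma isConnectedGraph_collapse {a b : g.V} (h : IsConnectedGraph g.src g.tgt) :
    IsConnectedGraph (g.collapse a b).src (g.collapse a b).tgt := by
  intro x y
  obtain ⟨x, rfl⟩ := proj_surjective x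
  obtain ⟨y, rfl⟩ := proj_surjective y
  exact isHom_proj.reachOn (fun _ _ => id) (h x y)

lemma IsPathLabelling.isCycleEdgeSet_collapse_iff (P : g.IsPathLabelling d v f lam)
    (hf : ∀ c, g.IsSimpleCycle c → ∀ s ∈ c, s.1 ∉ Set.range f) (S : Finset g.E) :
    (g.collapse g.vin g.vout).IsCycleEdgeSet S ↔
      g.IsCycleEdgeSet S ∨ 0 < d ∧ ∀ e, e ∈ S ↔ e ∈ Set.range f := by
  constructor
  · rintro ⟨c, hc, rfl⟩
    obtain ⟨c', hp, h | ⟨x, y, hne, hxy, hw, hnd⟩⟩ := exists_perm_of_collapse hc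
    · exact .inl ⟨c', h, List.toFinset_eq_of_perm _ _ (hp.map _)⟩
    · refine .inr ⟨?_, fun e => ?_⟩
      · rw [P.vin_eq, P.vout_eq] at hxy
        by_contra hd
        obtain rfl : d = 0 := by omega
        grind
      · exact List.mem_toFinset.trans ((hp.map Prod.fst).mem_iff.symm.trans
          ((P.path_unique_ends hxy hw hnd).2 e))
  · rintro (⟨c, hc, rfl⟩ | ⟨hd, hS⟩)
    · have hnd := (isSimpleCycle_iff.1 hc).2.2.2
      obtain ⟨a, hw⟩ := (isSimpleCycle_iff.1 hc).2.1
      have := (isHom_proj (a := g.vin) (b := g.vout)).isSimpleCycle Function.injective_id hc ?_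
      · exact ⟨_, this, congrArg List.toFinset (List.map_map.trans rfl)⟩
      · refine List.Nodup.map_on ?_ hnd
        intro x hx y hy hxy
        obtain ⟨s, hs, rfl⟩ := List.mem_map.1 hx
        obtain ⟨t, ht, rfl⟩ := List.mem_map.1 hy
        have h1 := P.lam_stepSrc_of_isWalk hw (hf c hc) s hs
        have h2 := P.lam_stepSrc_of_isWalk hw (hf c hc) t ht
        have h3 := P.lam_v d le_rfl
        have h4 := P.lam_v 0 (by omega)
        rw [proj_eq_iff, P.vin_eq, P.vout_eq] at hxy
        grind
    · have hnext (i j : Fin d) (hij : (j : ℕ) = (i + 1) % d) :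
          g.proj g.vin g.vout (g.src (f i)) = g.proj g.vin g.vout (g.tgt (f j)) := by
        rw [P.src_f, P.tgt_f, hij]
        by_cases hi : (i : ℕ) + 1 < d
        · rw [Nat.mod_eq_of_lt hi]
        · rw [show (i : ℕ) + 1 = d by omega, Nat.mod_self, ← P.vin_eq, ← P.vout_eq,
            proj_left_eq_right]
      refine ⟨List.ofFn fun j : Fin d => (f j, false), ⟨?_, ?_, ?_, ?_⟩, ?_⟩
      · simp [List.ofFn_eq_nil_iff]; omega
      · rintro ⟨i, hi⟩
        simp only [List.length_ofFn] at hi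
        simp only [List.get_eq_getElem, List.getElem_ofFn, List.length_ofFn, stepSrc, stepTgt,
          Bool.false_eq_true, if_false]
        exact hnext ⟨i, hi⟩ ⟨_, Nat.mod_lt _ hd⟩ rfl
      · rw [List.map_ofFn, List.nodup_ofFn]
        intro i j h
        have h : f i = f j := h
        refine Fin.ext (P.v_inj (by omega) (by omega) ?_)
        rw [← P.tgt_f, ← P.tgt_f, h]
      · rw [List.map_ofFn, List.nodup_ofFn]
        intro i j h
        have h : g.proj g.vin g.vout (g.tgt (f i)) = g.proj g.vin g.vout (g.tgt (f j)) := h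
        rw [proj_eq_iff, P.tgt_f, P.tgt_f, P.vin_eq, P.vout_eq] at h
        have h1 := P.lam_v i (by omega)
        have h2 := P.lam_v j (by omega)
        have h3 := P.lam_v d le_rfl
        have h4 := P.lam_v 0 (by omega)
        refine Fin.ext ?_
        grind
      · refine Finset.ext fun e => List.mem_toFinset.trans (Iff.trans ?_ (hS e).symm)
        rw [List.map_ofFn, List.mem_ofFn]
        rfl

/-- Identifying the ends of the path turns a path with cacti into an oriented cactus. -/
lemma IsPathCactusType.collapse (h : g.IsPathCactusType) :
    (g.collapse g.vin g.vout).IsCactusType := by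
  obtain ⟨hconn, d, v, f, lam, P, hc, he⟩ := isPathCactusType_iff.1 h
  have hS := P.isCycleEdgeSet_collapse_iff fun c h => (hc c h).2
  have hav : ∀ S, g.IsCycleEdgeSet S → ∀ e ∈ S, e ∉ Set.range f := by
    rintro _ ⟨c, h, rfl⟩ e he
    obtain ⟨s, hs, rfl⟩ := List.mem_map.1 (List.mem_toFinset.1 he)
    exact (hc c h).2 s hs
  refine ⟨proj_left_eq_right, isConnectedGraph_collapse hconn, fun c h => ?_, fun e => ?_⟩
  · obtain ⟨c', hp, h | ⟨x, y, hne, hxy, hw, hnd⟩⟩ := exists_perm_of_collapse h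
    · exact (hc c' h).1.of_perm hp
    · exact (P.path_unique_ends hxy hw hnd).1.of_perm hp
  · by_cases her : e ∈ Set.range f
    · obtain ⟨R, hR⟩ : ∃ R : Finset g.E, ∀ e, e ∈ R ↔ e ∈ Set.range f :=
        ⟨Finset.univ.filter (· ∈ Set.range f), by simp⟩
      refine ⟨R, ⟨(hS _).2 (.inr ⟨?_, hR⟩), (hR e).2 her⟩, ?_⟩
      · obtain ⟨i, -⟩ := her
        have := i.2
        omega
      · rintro S ⟨hSc, heS⟩
        obtain h | ⟨-, h⟩ := (hS S).1 hSc
        · exact absurd her (hav S h e heS)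
        · exact Finset.ext fun e' => (h e').trans (hR e').symm
    · obtain ⟨S, ⟨h1, h2⟩, h3⟩ := he e her
      refine ⟨S, ⟨(hS S).2 (.inl h1), h2⟩, ?_⟩
      rintro T ⟨hT, heT⟩
      obtain h | ⟨-, h⟩ := (hS T).1 hT
      · exact h3 T ⟨h, heT⟩
      · exact absurd ((h e).1 heT) her

end Labelling

/-! ### Concatenation of graph monomials -/

/-- The disjoint union of `g` and `h`, with the input of `h` and the output of `g`. -/
def disjUnion (g h : GraphMonomial L K) : GraphMonomial L K where
  V := g.V ⊕ h.V
  E := g.E ⊕ h.E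
  fintV := inferInstance
  fintE := inferInstance
  src := Sum.map g.src h.src
  tgt := Sum.map g.tgt h.tgt
  vin := .inr h.vin
  vout := .inl g.vout
  labL := Sum.elim g.labL h.labL
  labK := Sum.elim g.labK h.labK

/-- The graph monomial obtained by identifying the input of `g` with the output of `h`. -/
def wedge (g h : GraphMonomial L K) : GraphMonomial L K :=
  (g.disjUnion h).collapse (.inl g.vin) (.inr h.vout)

section Wedge

variable {g h : GraphMonomial L K}

lemma isHom_disjUnion_inl : IsHom g (g.disjUnion h) Sum.inl Sum.inl :=
  ⟨fun _ => rfl, fun _ => rfl⟩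

lemma isHom_disjUnion_inr : IsHom h (g.disjUnion h) Sum.inr Sum.inr :=
  ⟨fun _ => rfl, fun _ => rfl⟩

lemma exists_isWalk_of_inl {a : g.V} {b : g.V ⊕ h.V} {l : List ((g.E ⊕ h.E) × Bool)}
    (hl : (g.disjUnion h).IsWalk (.inl a) l b) :
    ∃ l' b', l = l'.map (Prod.map Sum.inl id) ∧ b = .inl b' ∧ g.IsWalk a l' b' := by
  refine isHom_disjUnion_inl.exists_isWalk Sum.inl_injective ?_ ?_ hl
  all_goals
    rintro (e | e) u h
    · exact ⟨e, rfl⟩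
    · cases h

lemma exists_isWalk_of_inr {a : h.V} {b : g.V ⊕ h.V} {l : List ((g.E ⊕ h.E) × Bool)}
    (hl : (g.disjUnion h).IsWalk (.inr a) l b) :
    ∃ l' b', l = l'.map (Prod.map Sum.inr id) ∧ b = .inr b' ∧ h.IsWalk a l' b' := by
  refine isHom_disjUnion_inr.exists_isWalk Sum.inr_injective ?_ ?_ hl
  all_goals
    rintro (e | e) u h
    · cases h
    · exact ⟨e, rfl⟩

lemma exists_isSimpleCycle_of_disjUnion {c : List ((g.E ⊕ h.E) × Bool)}
    (hc : (g.disjUnion h).IsSimpleCycle c) :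
    (∃ c', c = c'.map (Prod.map Sum.inl id) ∧ g.IsSimpleCycle c') ∨
      ∃ c', c = c'.map (Prod.map Sum.inr id) ∧ h.IsSimpleCycle c' := by
  obtain ⟨a | a, hw⟩ := (isSimpleCycle_iff.1 hc).2.1
  · refine .inl (isHom_disjUnion_inl.exists_isSimpleCycle Sum.inl_injective ?_ ?_ hc hw)
    all_goals
      rintro (e | e) u h
      · exact ⟨e, rfl⟩
      · cases h
  · refine .inr (isHom_disjUnion_inr.exists_isSimpleCycle Sum.inr_injective ?_ ?_ hc hw)
    all_goals
      rintro (e | e) u h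
      · cases h
      · exact ⟨e, rfl⟩

/-- The inclusion of the vertices of `g` into `g.wedge h`. -/
def inclLeft (g h : GraphMonomial L K) (x : g.V) : (g.wedge h).V :=
  (g.disjUnion h).proj (.inl g.vin) (.inr h.vout) (.inl x)

/-- The inclusion of the vertices of `h` into `g.wedge h`. -/
def inclRight (g h : GraphMonomial L K) (x : h.V) : (g.wedge h).V :=
  (g.disjUnion h).proj (.inl g.vin) (.inr h.vout) (.inr x)

lemma inclLeft_vin : inclLeft g h g.vin = inclRight g h h.vout := proj_left_eq_right

lemma inclLeft_injective : Function.Injective (inclLeft g h) := by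
  intro x y hxy
  obtain h | ⟨h1 | h1, h2 | h2⟩ := proj_eq_iff.1 hxy
  · exact Sum.inl_injective h
  · exact Sum.inl_injective (h1.trans h2.symm)
  all_goals cases h1 <;> cases h2

lemma inclRight_injective : Function.Injective (inclRight g h) := by
  intro x y hxy
  obtain h | ⟨h1 | h1, h2 | h2⟩ := proj_eq_iff.1 hxy
  · exact Sum.inr_injective h
  · cases h1
  · cases h1
  · cases h2
  · exact Sum.inr_injective (h1.trans h2.symm)

lemma isHom_inclLeft : IsHom g (g.wedge h) (inclLeft g h) Sum.inl :=
  ⟨fun _ => rfl, fun _ => rfl⟩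

lemma isHom_inclRight : IsHom h (g.wedge h) (inclRight g h) Sum.inr :=
  ⟨fun _ => rfl, fun _ => rfl⟩

lemma wedge_cases {p : (g.wedge h).V → Prop} (hl : ∀ x, p (inclLeft g h x))
    (hr : ∀ x, p (inclRight g h x)) (x : (g.wedge h).V) : p x := by
  obtain ⟨x | x, rfl⟩ := proj_surjective x
  exacts [hl x, hr x]

lemma isConnectedGraph_wedge (hg : IsConnectedGraph g.src g.tgt)
    (hh : IsConnectedGraph h.src h.tgt) :
    IsConnectedGraph (g.wedge h).src (g.wedge h).tgt := by
  have hl (x y) : reachOn (g.wedge h).src (g.wedge h).tgt ∅ (inclLeft g h x) (inclLeft g h y) :=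
    isHom_inclLeft.reachOn (fun _ _ => id) (hg x y)
  have hr (x y) :
      reachOn (g.wedge h).src (g.wedge h).tgt ∅ (inclRight g h x) (inclRight g h y) :=
    isHom_inclRight.reachOn (fun _ _ => id) (hh x y)
  intro x y
  induction x using wedge_cases with
  | hl x =>
    induction y using wedge_cases with
    | hl y => exact hl x y
    | hr y => exact (hl x g.vin).trans (inclLeft_vin (g := g) (h := h) ▸ hr h.vout y)
  | hr x =>
    induction y using wedge_cases with
    | hl y => exact (hr x h.vout).trans (inclLeft_vin (g := g) (h := h) ▸ hl g.vin y)
    | hr y => exact hr x y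

/-- Up to rotation, a simple cycle of `g.wedge h` is a simple cycle of `g` or of `h`. -/
lemma exists_perm_of_wedge {c : List ((g.E ⊕ h.E) × Bool)} (hc : (g.wedge h).IsSimpleCycle c) :
    (∃ c', (c'.map (Prod.map Sum.inl id)).Perm c ∧ g.IsSimpleCycle c') ∨
      ∃ c', (c'.map (Prod.map Sum.inr id)).Perm c ∧ h.IsSimpleCycle c' := by
  obtain ⟨c', hp, hc' | ⟨x, y, -, ⟨rfl, rfl⟩ | ⟨rfl, rfl⟩, hw, -⟩⟩ :=
    exists_perm_of_collapse (g := g.disjUnion h) hc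
  · obtain ⟨c₁, rfl, h1⟩ | ⟨c₁, rfl, h1⟩ := exists_isSimpleCycle_of_disjUnion hc'
    exacts [.inl ⟨c₁, hp, h1⟩, .inr ⟨c₁, hp, h1⟩]
  · obtain ⟨_, _, _, h, _⟩ := exists_isWalk_of_inl hw
    cases h
  · obtain ⟨_, _, _, h, _⟩ := exists_isWalk_of_inr hw
    cases h

lemma map_toFinset_of_perm {E E' : Type} {_ : DecidableEq E} {_ : DecidableEq E'} (i : E ↪ E')
    {c : List (E × Bool)} {c' : List (E' × Bool)} (hp : (c.map (Prod.map i id)).Perm c') :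
    (c.map Prod.fst).toFinset.map i = (c'.map Prod.fst).toFinset := by
  ext e
  rw [List.mem_toFinset, ← (hp.map Prod.fst).mem_iff]
  simp

lemma isCycleEdgeSet_wedge_iff (S : Finset (g.E ⊕ h.E)) :
    (g.wedge h).IsCycleEdgeSet S ↔
      (∃ T, g.IsCycleEdgeSet T ∧ T.map .inl = S) ∨ ∃ T, h.IsCycleEdgeSet T ∧ T.map .inr = S := by
  constructor
  · rintro ⟨c, hc, rfl⟩
    obtain ⟨c', hp, hc'⟩ | ⟨c', hp, hc'⟩ := exists_perm_of_wedge hc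
    · exact .inl ⟨_, ⟨c', hc', rfl⟩, map_toFinset_of_perm .inl hp⟩
    · exact .inr ⟨_, ⟨c', hc', rfl⟩, map_toFinset_of_perm .inr hp⟩
  · rintro (⟨_, ⟨c, hc, rfl⟩, rfl⟩ | ⟨_, ⟨c, hc, rfl⟩, rfl⟩)
    · exact ⟨_, isHom_inclLeft.isSimpleCycle Sum.inl_injective hc
        ((isSimpleCycle_iff.1 hc).2.2.2.map inclLeft_injective),
        (map_toFinset_of_perm .inl (.refl _)).symm⟩
    · exact ⟨_, isHom_inclRight.isSimpleCycle Sum.inr_injective hc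
        ((isSimpleCycle_iff.1 hc).2.2.2.map inclRight_injective),
        (map_toFinset_of_perm .inr (.refl _)).symm⟩

lemma IsCactusOff.wedge {F : Set g.E} {F' : Set h.E} (hg : g.IsCactusOff F)
    (hh : h.IsCactusOff F') : (g.wedge h).IsCactusOff (Sum.inl '' F ∪ Sum.inr '' F') := by
  refine ⟨fun c hc => ?_, ?_⟩
  · obtain ⟨c', hp, hc'⟩ | ⟨c', hp, hc'⟩ := exists_perm_of_wedge hc
    · obtain ⟨h1, h2⟩ := hg.1 c' hc'
      refine ⟨IsDirectedCycleList.of_perm hp ?_, fun s hs => ?_⟩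
      · exact h1.imp (fun H => List.forall_mem_map.2 H) (fun H => List.forall_mem_map.2 H)
      · obtain ⟨t, ht, rfl⟩ := List.mem_map.1 (hp.mem_iff.2 hs)
        rintro (⟨e, he, heq⟩ | ⟨e, he, heq⟩)
        · exact h2 t ht (Sum.inl_injective heq ▸ he)
        · cases heq
    · obtain ⟨h1, h2⟩ := hh.1 c' hc'
      refine ⟨IsDirectedCycleList.of_perm hp ?_, fun s hs => ?_⟩
      · exact h1.imp (fun H => List.forall_mem_map.2 H) (fun H => List.forall_mem_map.2 H)
      · obtain ⟨t, ht, rfl⟩ := List.mem_map.1 (hp.mem_iff.2 hs)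
        rintro (⟨e, he, heq⟩ | ⟨e, he, heq⟩)
        · cases heq
        · exact h2 t ht (Sum.inr_injective heq ▸ he)
  · rintro (e | e) he
    · obtain ⟨S, ⟨h1, h2⟩, h3⟩ := hg.2 e fun h => he (.inl ⟨e, h, rfl⟩)
      refine ⟨S.map .inl, ⟨(isCycleEdgeSet_wedge_iff _).2 (.inl ⟨S, h1, rfl⟩),
        Finset.mem_map_of_mem _ h2⟩, ?_⟩
      rintro T ⟨hT, heT⟩
      obtain ⟨T, hT', rfl⟩ | ⟨T, hT', rfl⟩ := (isCycleEdgeSet_wedge_iff _).1 hT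
      · exact congrArg _ (h3 T ⟨hT', (Finset.mem_map' .inl).1 heT⟩)
      · obtain ⟨_, _, h⟩ := Finset.mem_map.1 heT
        cases h
    · obtain ⟨S, ⟨h1, h2⟩, h3⟩ := hh.2 e fun h => he (.inr ⟨e, h, rfl⟩)
      refine ⟨S.map .inr, ⟨(isCycleEdgeSet_wedge_iff _).2 (.inr ⟨S, h1, rfl⟩),
        Finset.mem_map_of_mem _ h2⟩, ?_⟩
      rintro T ⟨hT, heT⟩
      obtain ⟨T, hT', rfl⟩ | ⟨T, hT', rfl⟩ := (isCycleEdgeSet_wedge_iff _).1 hT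
      · obtain ⟨_, _, h⟩ := Finset.mem_map.1 heT
        cases h
      · exact congrArg _ (h3 T ⟨hT', (Finset.mem_map' .inr).1 heT⟩)

lemma IsCactusType.wedge (hg : g.IsCactusType) (hh : h.IsCactusType) :
    (g.wedge h).IsCactusType := by
  obtain ⟨hgr, hg⟩ := hg
  obtain ⟨hhr, hh⟩ := hh
  rw [isOrientedCactus_iff] at hg hh
  refine ⟨?_, isOrientedCactus_iff.2 ⟨isConnectedGraph_wedge hg.1 hh.1, ?_⟩⟩
  · change inclRight g h h.vin = inclLeft g h g.vout
    rw [hhr, ← hgr, inclLeft_vin]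
  · have hempty : (Sum.inl '' (∅ : Set g.E) ∪ Sum.inr '' (∅ : Set h.E)) = ∅ := by simp
    exact hempty ▸ hg.2.wedge hh.2

lemma IsPathLabelling.wedge {d d' : ℕ} {v : ℕ → g.V} {v' : ℕ → h.V} {f : Fin d → g.E}
    {f' : Fin d' → h.E} {lam : g.V → ℕ} {lam' : h.V → ℕ} (P : g.IsPathLabelling d v f lam)
    (P' : h.IsPathLabelling d' v' f' lam') :
    ∃ (w : ℕ → (g.wedge h).V) (k : Fin (d + d') → (g.wedge h).E) (m : (g.wedge h).V → ℕ),
      (g.wedge h).IsPathLabelling (d + d') w k m ∧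
        Set.range k = Sum.inl '' Set.range f ∪ Sum.inr '' Set.range f' := by
  set w : ℕ → (g.wedge h).V := fun n =>
    if n ≤ d then inclLeft g h (v n) else inclRight g h (v' (n - d)) with hw
  have hwl (n : ℕ) (hn : n ≤ d) : w n = inclLeft g h (v n) := if_pos hn
  have hwr (n : ℕ) : w (d + n) = inclRight g h (v' n) := by
    rcases Nat.eq_zero_or_pos n with rfl | hn
    · rw [add_zero, hwl d le_rfl, ← P.vin_eq, inclLeft_vin, P'.vout_eq]
    · rw [hw]
      simp only
      rw [if_neg (by omega), Nat.add_sub_cancel_left]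
  set k : Fin (d + d') → (g.wedge h).E :=
    Fin.append (Sum.inl ∘ f : Fin d → g.E ⊕ h.E) (Sum.inr ∘ f') with hk
  have hkl (i : Fin d) : k (Fin.castAdd d' i) = Sum.inl (f i) := Fin.append_left _ _ i
  have hkr (i : Fin d') : k (Fin.natAdd d i) = Sum.inr (f' i) := Fin.append_right _ _ i
  have hrange : Set.range k = Sum.inl '' Set.range f ∪ Sum.inr '' Set.range f' := by
    ext e
    constructor
    · rintro ⟨i, rfl⟩
      induction i using Fin.addCases with
      | left i => exact .inl ⟨f i, ⟨i, rfl⟩, (hkl i).symm⟩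
      | right i => exact .inr ⟨f' i, ⟨i, rfl⟩, (hkr i).symm⟩
    · rintro (⟨_, ⟨i, rfl⟩, rfl⟩ | ⟨_, ⟨i, rfl⟩, rfl⟩)
      exacts [⟨_, hkl i⟩, ⟨_, hkr i⟩]
  have hnl (e : g.E) (he : e ∉ Set.range f) : Sum.inl e ∉ Set.range k := by
    rw [hrange]
    rintro (⟨e', he', heq⟩ | ⟨e', he', heq⟩)
    · exact he (Sum.inl_injective heq ▸ he')
    · cases heq
  have hnr (e : h.E) (he : e ∉ Set.range f') : Sum.inr e ∉ Set.range k := by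
    rw [hrange]
    rintro (⟨e', he', heq⟩ | ⟨e', he', heq⟩)
    · cases heq
    · exact he (Sum.inr_injective heq ▸ he')
  obtain ⟨m, hml, hmr⟩ : ∃ m : (g.wedge h).V → ℕ, (∀ x, m (inclLeft g h x) = lam x) ∧
      ∀ x, m (inclRight g h x) = d + lam' x := by
    refine ⟨Quot.lift (Sum.elim lam fun x => d + lam' x) ?_, fun _ => rfl, fun _ => rfl⟩
    rintro _ _ ⟨rfl, rfl⟩
    simp [P.vin_eq, P'.vout_eq, P.lam_v, P'.lam_v]
  refine ⟨w, k, m, ⟨?_, ?_, ?_, ?_, ?_, ?_, ?_, ?_⟩, hrange⟩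
  · intro j hj
    rcases le_total j d with hjd | hjd
    · rw [hwl j hjd, hml, P.lam_v j hjd]
    · obtain ⟨n, rfl⟩ := Nat.exists_eq_add_of_le hjd
      rw [hwr, hmr, P'.lam_v n (by omega)]
  · intro i
    induction i using Fin.addCases with
    | left i =>
      rw [hkl, isHom_inclLeft.src, P.src_f, Fin.val_castAdd, hwl _ (by omega)]
    | right i =>
      rw [hkr, isHom_inclRight.src, P'.src_f, Fin.val_natAdd, add_assoc, hwr]
  · intro i
    induction i using Fin.addCases with
    | left i =>
      rw [hkl, isHom_inclLeft.tgt, P.tgt_f, Fin.val_castAdd, hwl _ (by omega)]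
    | right i =>
      rw [hkr, isHom_inclRight.tgt, P'.tgt_f, Fin.val_natAdd, hwr]
  · rw [hwr, ← P'.vin_eq]
    rfl
  · rw [hwl 0 (Nat.zero_le _), ← P.vout_eq]
    rfl
  · rintro (e | e) he
    · have := P.lam_edge e fun ⟨i, hi⟩ => he ⟨Fin.castAdd d' i, by rw [hkl, hi]⟩
      exact (hml _).trans (this.trans (hml _).symm)
    · have := P'.lam_edge e fun ⟨i, hi⟩ => he ⟨Fin.natAdd d i, by rw [hkr, hi]⟩
      exact (hmr _).trans ((congrArg _ this).trans (hmr _).symm)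
  · intro x
    induction x using wedge_cases with
    | hl x =>
      have := P.lam_le x
      rw [hml]
      omega
    | hr x =>
      have := P'.lam_le x
      rw [hmr]
      omega
  · intro x
    induction x using wedge_cases with
    | hl x =>
      rw [hml, hwl _ (P.lam_le x)]
      exact isHom_inclLeft.reachOn hnl (P.reach x)
    | hr x =>
      rw [hmr, hwr]
      exact isHom_inclRight.reachOn hnr (P'.reach x)

lemma IsPathCactusType.wedge (hg : g.IsPathCactusType) (hh : h.IsPathCactusType) :
    (g.wedge h).IsPathCactusType := by
  obtain ⟨hgc, d, v, f, lam, P, hg⟩ := isPathCactusType_iff.1 hg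
  obtain ⟨hhc, d', v', f', lam', P', hh⟩ := isPathCactusType_iff.1 hh
  obtain ⟨w, k, m, Q, hk⟩ := P.wedge P'
  exact isPathCactusType_iff.2 ⟨isConnectedGraph_wedge hgc hhc, _, w, k, m, Q,
    hk ▸ hg.wedge hh⟩

lemma wedge_eval {N : ℕ} (A : Fin L → K → Matrix (Fin N) (Fin N) ℂ) :
    (g.wedge h).eval A = g.eval A * h.eval A := by
  ext i j
  refine (collapse_eval_apply (g := g.disjUnion h) A i j).trans ?_
  refine (Fintype.sum_equiv (ι := (g.disjUnion h).V → Fin N)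
    (Equiv.sumArrowEquivProdArrow g.V h.V (Fin N)) _
    (fun p => if p.1 g.vin = p.2 h.vout then
      (if p.2 h.vin = j ∧ p.1 g.vout = i then
        (∏ e : g.E, A (g.labL e) (g.labK e) (p.1 (g.tgt e)) (p.1 (g.src e))) *
          ∏ e : h.E, A (h.labL e) (h.labK e) (p.2 (h.tgt e)) (p.2 (h.src e)) else 0) else 0)
    fun φ => ?_).trans ?_
  · exact congrArg (fun z => if φ (.inl g.vin) = φ (.inr h.vout) then
      (if φ (.inr h.vin) = j ∧ φ (.inl g.vout) = i then z else 0) else 0)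
      (Fintype.prod_sum_type _)
  · simp only [Matrix.mul_apply, eval, Matrix.of_apply, Finset.sum_mul_sum]
    rw [Fintype.sum_prod_type, Finset.sum_comm]
    simp_rw [Finset.sum_comm (s := (Finset.univ : Finset (Fin N)))]
    rw [Finset.sum_comm]
    refine Finset.sum_congr rfl fun φ _ => Finset.sum_congr rfl fun ψ _ => ?_
    rw [Finset.sum_eq_single (φ g.vin)]
    · split_ifs <;> grind
    · intro k _ hk
      rw [if_neg fun hk' => hk hk'.1.symm, zero_mul]
    · exact fun hk => (hk (Finset.mem_univ _)).elim

end Wedge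

/-- The graph monomial with a single vertex and no edge. -/
def point (L : ℕ) (K : Type) : GraphMonomial L K where
  V := Unit
  E := Empty
  fintV := inferInstance
  fintE := inferInstance
  src := Empty.elim
  tgt := Empty.elim
  vin := ()
  vout := ()
  labL := Empty.elim
  labK := Empty.elim

lemma point_eval {N : ℕ} (A : Fin L → K → Matrix (Fin N) (Fin N) ℂ) : (point L K).eval A = 1 := by
  ext i j
  refine (Fintype.sum_equiv (ι := (point L K).V → Fin N) (Equiv.funUnique Unit (Fin N)) _
    (fun k => if k = j ∧ k = i then 1 else 0) fun φ => rfl).trans ?_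
  rw [Matrix.one_apply, Finset.sum_eq_single i]
  · simp
  · exact fun k _ hk => if_neg fun hk' => hk hk'.2
  · exact fun hk => (hk (Finset.mem_univ _)).elim

lemma isCactusType_point : (point L K).IsCactusType := by
  refine ⟨rfl, fun _ _ => .refl, fun c hc => ?_, fun e => e.elim⟩
  obtain ⟨s, -⟩ := List.exists_mem_of_ne_nil c hc.1
  exact s.1.elim

lemma IsCactusType.dproj_eval {g : GraphMonomial L K} (hg : g.IsCactusType) {N : ℕ}
    (A : Fin L → K → Matrix (Fin N) (Fin N) ℂ) : dproj (g.eval A) = g.eval A := by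
  ext i j
  simp only [dproj, eval, Matrix.of_apply]
  refine ite_eq_left_iff.2 fun hij => (Finset.sum_eq_zero fun φ _ => if_neg ?_).symm
  rintro ⟨rfl, rfl⟩
  exact hij (congrArg φ hg.1.symm)

end GraphMonomial

/-- The span of a set closed under products is closed under products. -/
lemma mul_mem_span {R M : Type*} [CommSemiring R] [Semiring M] [Algebra R M] {S : Set M}
    (hS : ∀ x ∈ S, ∀ y ∈ S, x * y ∈ S) {x y : M} (hx : x ∈ Submodule.span R S)
    (hy : y ∈ Submodule.span R S) : x * y ∈ Submodule.span R S :=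
  Submodule.span_mono (Set.mul_subset_iff.2 hS)
    (Submodule.span_mul_span R S S ▸ Submodule.mul_mem_mul hx hy)

/-- The diagonal projection of random matrices, as a linear map. -/
def dprojPi (Ω : Type) (N : ℕ) :
    (Ω → Matrix (Fin N) (Fin N) ℂ) →ₗ[ℂ] Ω → Matrix (Fin N) (Fin N) ℂ where
  toFun x ω := dproj (x ω)
  map_add' x y := by
    ext ω i j
    simp only [dproj, Matrix.of_apply, Pi.add_apply, Matrix.add_apply]
    split_ifs <;> simp
  map_smul' c x := by
    ext ω i j
    simp [dproj]

/-- Lemma 4.2.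
The linear spans `𝒞_N` (of evaluations of cactus-type monomials) and `ℱ_N`
(of evaluations of path-with-cacti monomials) are unital subalgebras of the
algebra of `N × N` random matrices, and `Δ(ℱ_N) = 𝒞_N`. -/
theorem cactus_spans_are_unital_algebras
    {Ω : Type} [MeasurableSpace Ω] (μ : Measure Ω) [IsProbabilityMeasure μ]
    {K : Type} [Nonempty K] [Finite K] {L : ℕ} (hL : 1 ≤ L) (N : ℕ)
    (A : Fin L → K → Ω → Matrix (Fin N) (Fin N) ℂ)
    (hmeas : ∀ ℓ k, EntriesMeasurable (A ℓ k))
    (hbdd : ∀ ℓ k, EntriesBounded μ (A ℓ k)) :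
    (1 : Ω → Matrix (Fin N) (Fin N) ℂ) ∈
        Submodule.span ℂ {x : Ω → Matrix (Fin N) (Fin N) ℂ |
          ∃ g : GraphMonomial L K, g.IsCactusType ∧
            x = fun ω => g.eval fun ℓ k => A ℓ k ω} ∧
    (∀ x y : Ω → Matrix (Fin N) (Fin N) ℂ,
      x ∈ Submodule.span ℂ {x : Ω → Matrix (Fin N) (Fin N) ℂ |
          ∃ g : GraphMonomial L K, g.IsCactusType ∧
            x = fun ω => g.eval fun ℓ k => A ℓ k ω} →
      y ∈ Submodule.span ℂ {x : Ω → Matrix (Fin N) (Fin N) ℂ |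
          ∃ g : GraphMonomial L K, g.IsCactusType ∧
            x = fun ω => g.eval fun ℓ k => A ℓ k ω} →
      x * y ∈ Submodule.span ℂ {x : Ω → Matrix (Fin N) (Fin N) ℂ |
          ∃ g : GraphMonomial L K, g.IsCactusType ∧
            x = fun ω => g.eval fun ℓ k => A ℓ k ω}) ∧
    (1 : Ω → Matrix (Fin N) (Fin N) ℂ) ∈
        Submodule.span ℂ {x : Ω → Matrix (Fin N) (Fin N) ℂ |
          ∃ g : GraphMonomial L K, g.IsPathCactusType ∧
            x = fun ω => g.eval fun ℓ k => A ℓ k ω} ∧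
    (∀ x y : Ω → Matrix (Fin N) (Fin N) ℂ,
      x ∈ Submodule.span ℂ {x : Ω → Matrix (Fin N) (Fin N) ℂ |
          ∃ g : GraphMonomial L K, g.IsPathCactusType ∧
            x = fun ω => g.eval fun ℓ k => A ℓ k ω} →
      y ∈ Submodule.span ℂ {x : Ω → Matrix (Fin N) (Fin N) ℂ |
          ∃ g : GraphMonomial L K, g.IsPathCactusType ∧
            x = fun ω => g.eval fun ℓ k => A ℓ k ω} →
      x * y ∈ Submodule.span ℂ {x : Ω → Matrix (Fin N) (Fin N) ℂ |
          ∃ g : GraphMonomial L K, g.IsPathCactusType ∧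
            x = fun ω => g.eval fun ℓ k => A ℓ k ω}) ∧
    ((fun x : Ω → Matrix (Fin N) (Fin N) ℂ => fun ω => dproj (x ω)) ''
        (Submodule.span ℂ {x : Ω → Matrix (Fin N) (Fin N) ℂ |
          ∃ g : GraphMonomial L K, g.IsPathCactusType ∧
            x = fun ω => g.eval fun ℓ k => A ℓ k ω} : Set (Ω → Matrix (Fin N) (Fin N) ℂ)) =
      (Submodule.span ℂ {x : Ω → Matrix (Fin N) (Fin N) ℂ |
          ∃ g : GraphMonomial L K, g.IsCactusType ∧
            x = fun ω => g.eval fun ℓ k => A ℓ k ω} : Set (Ω → Matrix (Fin N) (Fin N) ℂ))) := by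
  have hpoint : (1 : Ω → Matrix (Fin N) (Fin N) ℂ) =
      fun ω => (GraphMonomial.point L K).eval fun ℓ k => A ℓ k ω :=
    funext fun _ => (GraphMonomial.point_eval _).symm
  refine ⟨Submodule.subset_span ⟨_, GraphMonomial.isCactusType_point, hpoint⟩, ?_,
    Submodule.subset_span ⟨_, GraphMonomial.isCactusType_point.isPathCactusType, hpoint⟩, ?_, ?_⟩
  · refine fun x y hx hy => mul_mem_span ?_ hx hy
    rintro _ ⟨g, hg, rfl⟩ _ ⟨h, hh, rfl⟩
    exact ⟨_, hg.wedge hh, funext fun _ => (GraphMonomial.wedge_eval _).symm⟩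
  · refine fun x y hx hy => mul_mem_span ?_ hx hy
    rintro _ ⟨g, hg, rfl⟩ _ ⟨h, hh, rfl⟩
    exact ⟨_, hg.wedge hh, funext fun _ => (GraphMonomial.wedge_eval _).symm⟩
  · refine (congrArg SetLike.coe (Submodule.map_span (dprojPi Ω N) _)).trans
      (congrArg SetLike.coe (congrArg (Submodule.span ℂ) (Set.ext fun x => ⟨?_, ?_⟩)))
    · rintro ⟨_, ⟨g, hg, rfl⟩, rfl⟩
      exact ⟨_, hg.collapse, funext fun _ => (GraphMonomial.collapse_eval_vin_vout _).symm⟩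
    · rintro ⟨g, hg, rfl⟩
      exact ⟨_, ⟨g, hg.isPathCactusType, rfl⟩, funext fun _ => hg.dproj_eval _⟩
end
end
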